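/- Let (u,K) be a reduced global Mumford–Shah minimizer in ℝ³. Assume that K is contained in a closed half-plane H ⊆ ℝ³ and that K contains at least one point of the edge of H. Then K = H. -/

import Mathlib

open MeasureTheory Metric Set Filter
open scoped ENNReal NNReal Topology

noncomputable section

/-- `ℝ^N` as a Euclidean space. -/
abbrev Rn (N : ℕ) := EuclideanSpace ℝ (Fin N)

/-- `u` is locally Lipschitz on the set `s` (neighborhoods taken within `s`). -/
def LocLipOn (N : ℕ) (u : Rn N → ℝ) (s : Set (Rn N)) : Prop :=
  ∀ x ∈ s, ∃ t ∈ nhdsWithin x s, ∃ C : ℝ≥0, LipschitzOnWith C u t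

/-- An admissible pair `(u, K)`: `K ⊆ ℝ^N` closed, `u` locally Lipschitz on `ℝ^N ∖ K`
with `∫_{B_R ∖ K} (u² + |∇u|²) < ∞` for every `R > 0`. -/
structure MSPair (N : ℕ) where
  K : Set (Rn N)
  u : Rn N → ℝ
  closed : IsClosed K
  lip : LocLipOn N u Kᶜ
  integ : ∀ R : ℝ, 0 < R →
    IntegrableOn (fun x => (u x) ^ 2 + ‖gradient u x‖ ^ 2) (ball 0 R \ K) volume

/-- The Mumford–Shah energy `∫_{B ∖ K} |∇u|² + H^{N-1}(K ∩ B)` of a pair in a set `B`. -/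
def MSEnergy (N : ℕ) (P : MSPair N) (B : Set (Rn N)) : ℝ≥0∞ :=
  (∫⁻ x in B \ P.K, ENNReal.ofReal (‖gradient P.u x‖ ^ 2)) + μH[(N : ℝ) - 1] (P.K ∩ B)

/-- `Q = (v, L)` is a competitor for `P = (u, K)` in the open ball `B`:
`L ∖ B = K ∖ B`, `v = u` outside `B ∪ K ∪ L`, and the topological separation condition. -/
def Competitor (N : ℕ) (P Q : MSPair N) (B : Set (Rn N)) : Prop :=
  Q.K \ B = P.K \ B ∧
  (∀ x, x ∉ B ∪ P.K ∪ Q.K → Q.u x = P.u x) ∧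
  ∀ x, x ∉ B ∪ P.K → ∀ y, y ∉ B ∪ P.K →
    connectedComponentIn P.Kᶜ x ≠ connectedComponentIn P.Kᶜ y →
    connectedComponentIn Q.Kᶜ x ≠ connectedComponentIn Q.Kᶜ y

/-- Global Mumford–Shah minimizer in `ℝ^N`. -/
def IsGlobalMin (N : ℕ) (P : MSPair N) : Prop :=
  ∀ (c : Rn N) (R : ℝ), 0 < R → ∀ Q : MSPair N,
    Competitor N P Q (ball c R) → MSEnergy N P (ball c R) ≤ MSEnergy N Q (ball c R)

/-- Reduced global minimizer: no competitor with smaller singular set and the same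
function off `K` exists. -/
def MSIsReduced (N : ℕ) (P : MSPair N) : Prop :=
  ∀ (c : Rn N) (R : ℝ), 0 < R → ∀ Q : MSPair N,
    Competitor N P Q (ball c R) → Q.K ⊆ P.K →
    (∀ x, x ∉ P.K → Q.u x = P.u x) → Q.K = P.K

/-- The model closed half-plane `{(x, y, 0) : x ∈ ℝ, y ≥ 0}` in `ℝ³`. -/
def modelHalfPlane : Set (Rn 3) := {w | w 2 = 0 ∧ 0 ≤ w 1}

/-- The edge `{(x, 0, 0) : x ∈ ℝ}` of the model half-plane. -/
def modelEdge : Set (Rn 3) := {w | w 2 = 0 ∧ w 1 = 0}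

/-!
Let `b` be a point of the hyperplane carrying `K` and `c` a real number. With `D` the Dirichlet
energy of `u` and `A` the area of `K` in the ball of radius `r` around `b`, both smoothly
weighted, and `H` the mean of `(u - c)²` over that ball, the Weiss energy
`W = (D + A) / r ^ m - H / (2 r)` is nondecreasing in `r`: this combines the inner variation
along a radial flow, which preserves the hyperplane, with the weak Euler–Lagrange equation. If `W`
is constant then `u - c` is homogeneous of degree `1/2` about `b`, and `K`, being reduced, is a cone
about `b`.

Moreover `H / r` has derivative `(2 / r) (W - A / r ^ m)`. At points `b` in the closure of the
complement of `K` in the hyperplane there is a `c` for which `H / r` is bounded, and since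
`∫ dr / r` diverges at `0` and at `∞`, `W` then lies between the density of `K` at `b`
and its density at infinity. The latter is at most `1/2` because `K` lies in a half-hyperplane.
If `K` is null, then `W = 0`, so `K` is a cone about points outside `K`, which is absurd for a
nonempty closed set.
Otherwise the density at infinity excludes density-one points in the closure of the complement, so
`K` has interior in the hyperplane; where a ball inside `K` touches the complement, the density is
at least `1/2`. Hence `W = 1/2` there, `K` is a cone with a tangent ball and so contains a
half-hyperplane, and the point on the edge leaves only the given one.
-/

/-! ### Locally Lipschitz and locally square-integrable functions -/

theorem locLipOn_iff {N : ℕ} {u : Rn N → ℝ} {s : Set (Rn N)} :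
    LocLipOn N u s ↔ LocallyLipschitzOn s u :=
  ⟨fun h _ hx => let ⟨t, ht, C, hC⟩ := h _ hx; ⟨C, t, ht, hC⟩,
    fun h _ hx => let ⟨C, t, ht, hC⟩ := h hx; ⟨t, ht, C, hC⟩⟩

theorem locallyLipschitzOn_comp_prodMk {X Y Z W : Type*} [PseudoEMetricSpace X]
    [PseudoEMetricSpace Y] [PseudoEMetricSpace Z] [PseudoEMetricSpace W] {s : Set X}
    {f : X → Y} {h : X → Z} {g : Y × Z → W} (hg : LocallyLipschitz g)
    (hf : LocallyLipschitzOn s f) (hh : LocallyLipschitzOn s h) :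
    LocallyLipschitzOn s fun x => g (f x, h x) := by
  rw [locallyLipschitzOn_iff_restrict] at hf hh ⊢
  exact hg.comp (hf.prodMk hh)

theorem ae_differentiableAt_of_locallyLipschitzOn {E : Type*} [NormedAddCommGroup E]
    [NormedSpace ℝ E] [FiniteDimensional ℝ E] [MeasurableSpace E] [BorelSpace E]
    {μ : Measure E} [μ.IsAddHaarMeasure] {u : E → ℝ} {s : Set E} (hs : IsOpen s)
    (hu : LocallyLipschitzOn s u) : ∀ᵐ x ∂μ, x ∈ s → DifferentiableAt ℝ u x := by
  have hnull : μ (s ∩ {x | ¬ DifferentiableAt ℝ u x}) = 0 := by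
    refine measure_null_of_locally_null _ fun x hx => ?_
    obtain ⟨C, t, ht, hC⟩ := hu hx.1
    rw [hs.nhdsWithin_eq hx.1] at ht
    refine ⟨interior t ∩ (s ∩ {x | ¬ DifferentiableAt ℝ u x}),
      inter_mem (mem_nhdsWithin_of_mem_nhds (interior_mem_nhds.2 ht)) self_mem_nhdsWithin, ?_⟩
    refine measure_mono_null ?_
      (ae_iff.1 ((hC.mono interior_subset).ae_differentiableWithinAt_of_mem (μ := μ)))
    exact fun z hz hdiff =>
      hz.2.2 ((hdiff hz.1).differentiableAt (isOpen_interior.mem_nhds hz.1))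
  filter_upwards [measure_eq_zero_iff_ae_notMem.1 hnull] with x hx hxs
  by_contra hnot
  exact hx ⟨hxs, hnot⟩

theorem measurable_gradient {E : Type*} [NormedAddCommGroup E] [InnerProductSpace ℝ E]
    [CompleteSpace E] [MeasurableSpace E] [BorelSpace E] (u : E → ℝ) :
    Measurable (gradient u) :=
  (InnerProductSpace.toDual ℝ E).symm.continuous.measurable.comp (measurable_fderiv ℝ u)

section MemLpTwo
variable {X E : Type*} [MeasurableSpace X] [NormedAddCommGroup E] [InnerProductSpace ℝ E]
  {μ : Measure X} {f g : X → E}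

theorem integrable_inner_of_memLp_two (hf : MemLp f 2 μ) (hg : MemLp g 2 μ) :
    Integrable (fun x => inner ℝ (f x) (g x)) μ := by
  refine ((hf.integrable_norm_pow two_ne_zero).add (hg.integrable_norm_pow two_ne_zero)).mono'
    (hf.aestronglyMeasurable.inner hg.aestronglyMeasurable) (ae_of_all _ fun z => ?_)
  calc ‖inner ℝ (f z) (g z)‖ ≤ ‖f z‖ * ‖g z‖ := norm_inner_le_norm _ _
    _ ≤ ‖f z‖ ^ 2 + ‖g z‖ ^ 2 := by nlinarith [sq_nonneg (‖f z‖ - ‖g z‖), sq_nonneg ‖f z‖]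

theorem integral_norm_add_smul_sq (hf : MemLp f 2 μ) (hg : MemLp g 2 μ) (t : ℝ) :
    ∫ x, ‖f x + t • g x‖ ^ 2 ∂μ =
      ∫ x, ‖f x‖ ^ 2 ∂μ + (t * (2 * ∫ x, inner ℝ (f x) (g x) ∂μ) + t ^ 2 * ∫ x, ‖g x‖ ^ 2 ∂μ) := by
  have hf2 : Integrable (fun x => ‖f x‖ ^ 2) μ := hf.integrable_norm_pow two_ne_zero
  have hg2 : Integrable (fun x => ‖g x‖ ^ 2) μ := hg.integrable_norm_pow two_ne_zero
  have hfg := integrable_inner_of_memLp_two hf hg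
  have hlin : Integrable (fun x => t * (2 * inner ℝ (f x) (g x)) + t ^ 2 * ‖g x‖ ^ 2) μ :=
    ((hfg.const_mul 2).const_mul t).add (hg2.const_mul _)
  rw [← integral_const_mul, ← integral_const_mul, ← integral_const_mul,
    ← integral_add ((hfg.const_mul 2).const_mul t) (hg2.const_mul _), ← integral_add hf2 hlin]
  refine integral_congr_ae (ae_of_all _ fun x => ?_)
  simp only [norm_add_sq_real, norm_smul, mul_pow, Real.norm_eq_abs, sq_abs, inner_smul_right]
  ring

end MemLpTwo

/-- `f` is square-integrable on every ball. This is the integrability class of `u` and `∇u` for an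
admissible pair whose singular set is Lebesgue null. -/
def LocallyL2 {X E : Type*} [PseudoMetricSpace X] [MeasurableSpace X] [NormedAddCommGroup E]
    (f : X → E) (μ : Measure X) : Prop :=
  ∀ x R, MemLp f 2 (μ.restrict (ball x R))

namespace LocallyL2

section Basic
variable {X E : Type*} [PseudoMetricSpace X] [MeasurableSpace X] [NormedAddCommGroup E]
  {μ : Measure X} {f g : X → E}

protected theorem add (hf : LocallyL2 f μ) (hg : LocallyL2 g μ) :
    LocallyL2 (fun x => f x + g x) μ :=
  fun x R => (hf x R).add (hg x R)

theorem const [ProperSpace X] [IsFiniteMeasureOnCompacts μ] (c : E) :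
    LocallyL2 (fun _ : X => c) μ := fun x R => by
  have : IsFiniteMeasure (μ.restrict (ball x R)) := ⟨by simpa using measure_ball_lt_top⟩
  exact memLp_const c

protected theorem congr_ae (hf : LocallyL2 f μ) (hfg : f =ᵐ[μ] g) : LocallyL2 g μ :=
  fun x R => (hf x R).ae_eq (ae_restrict_of_ae hfg)

theorem integrableOn_norm_sq (hf : LocallyL2 f μ) (x : X) (R : ℝ) :
    IntegrableOn (fun z => ‖f z‖ ^ 2) (ball x R) μ :=
  (hf x R).integrable_norm_pow two_ne_zero

protected theorem const_smul [NormedSpace ℝ E] (hf : LocallyL2 f μ) (t : ℝ) :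
    LocallyL2 (fun x => t • f x) μ :=
  fun x R => (hf x R).const_smul t

end Basic

section Inner
variable {X E : Type*} [PseudoMetricSpace X] [MeasurableSpace X]
  [NormedAddCommGroup E] [InnerProductSpace ℝ E] {μ : Measure X} {f g : X → E}

theorem locallyIntegrable_inner (hf : LocallyL2 f μ) (hg : LocallyL2 g μ) :
    LocallyIntegrable (fun x => inner ℝ (f x) (g x)) μ :=
  fun x => ⟨ball x 1, ball_mem_nhds x one_pos, integrable_inner_of_memLp_two (hf x 1) (hg x 1)⟩

theorem locallyIntegrable_norm_sq (hf : LocallyL2 f μ) :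
    LocallyIntegrable (fun x => ‖f x‖ ^ 2) μ := by
  simpa only [real_inner_self_eq_norm_sq] using hf.locallyIntegrable_inner hf

end Inner

section Continuous
variable {X E : Type*} [PseudoMetricSpace X] [ProperSpace X] [MeasurableSpace X]
  [OpensMeasurableSpace X] [NormedAddCommGroup E] [NormedSpace ℝ E] {μ : Measure X}

theorem continuous_smul {φ : X → ℝ} {f : X → E} (hφ : Continuous φ) (hf : LocallyL2 f μ) :
    LocallyL2 (fun x => φ x • f x) μ := fun x R => by
  obtain ⟨C, hC⟩ := (isCompact_closedBall x R).exists_bound_of_continuousOn hφ.continuousOn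
  refine (hf x R).of_le_mul (c := C) (hφ.aestronglyMeasurable.smul (hf x R).1) ?_
  filter_upwards [ae_restrict_mem measurableSet_ball] with z hz
  rw [norm_smul]
  gcongr
  exact hC z (ball_subset_closedBall hz)

theorem smul_continuous [SecondCountableTopology E] {φ : X → ℝ} {f : X → E} (hφ : LocallyL2 φ μ)
    (hf : Continuous f) : LocallyL2 (fun x => φ x • f x) μ := fun x R => by
  obtain ⟨C, hC⟩ := (isCompact_closedBall x R).exists_bound_of_continuousOn hf.continuousOn
  refine (hφ x R).of_le_mul (c := C) ((hφ x R).1.smul hf.aestronglyMeasurable) ?_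
  filter_upwards [ae_restrict_mem measurableSet_ball] with z hz
  rw [norm_smul, mul_comm]
  gcongr
  exact hC z (ball_subset_closedBall hz)

theorem inner_continuous {F : Type*} [NormedAddCommGroup F] [InnerProductSpace ℝ F]
    [SecondCountableTopology F] {f g : X → F} (hf : Continuous f) (hg : LocallyL2 g μ) :
    LocallyL2 (fun x => inner ℝ (f x) (g x)) μ := fun x R => by
  obtain ⟨C, hC⟩ := (isCompact_closedBall x R).exists_bound_of_continuousOn hf.continuousOn
  refine (hg x R).of_le_mul (c := C) (hf.aestronglyMeasurable.inner (hg x R).1) ?_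
  filter_upwards [ae_restrict_mem measurableSet_ball] with z hz
  refine (norm_inner_le_norm _ _).trans ?_
  gcongr
  exact hC z (ball_subset_closedBall hz)

end Continuous

end LocallyL2

/-! ### Admissible pairs with Lebesgue-null singular set -/

namespace MSPair
variable {N : ℕ} {P : MSPair N}

theorem locallyLipschitzOn_u (P : MSPair N) : LocallyLipschitzOn P.Kᶜ P.u :=
  locLipOn_iff.1 P.lip

theorem aestronglyMeasurable_u (hK : volume P.K = 0) : AEStronglyMeasurable P.u volume := by
  rw [← Measure.restrict_eq_self_of_ae_mem (measure_eq_zero_iff_ae_notMem.1 hK)]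
  exact P.locallyLipschitzOn_u.continuousOn.aestronglyMeasurable
    P.closed.isOpen_compl.measurableSet

theorem ae_differentiableAt (hK : volume P.K = 0) : ∀ᵐ x, DifferentiableAt ℝ P.u x := by
  filter_upwards [measure_eq_zero_iff_ae_notMem.1 hK, ae_differentiableAt_of_locallyLipschitzOn
    P.closed.isOpen_compl P.locallyLipschitzOn_u] with x hxK hx using hx hxK

theorem integrableOn_ball (hK : volume P.K = 0) (y : Rn N) (R : ℝ) :
    IntegrableOn (fun x => P.u x ^ 2 + ‖gradient P.u x‖ ^ 2) (ball y R) volume := by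
  refine ((P.integ (‖y‖ + |R| + 1) (by positivity)).congr_set_ae
    (sdiff_null_ae_eq_self hK).symm).mono_set (ball_subset_ball' ?_)
  rw [dist_zero_right]
  linarith [le_abs_self R]

theorem locallyL2_u (hK : volume P.K = 0) : LocallyL2 P.u volume := fun y R => by
  have hmeas := (aestronglyMeasurable_u hK).restrict (s := ball y R)
  refine (memLp_two_iff_integrable_sq hmeas).2 ?_
  refine (integrableOn_ball hK y R).mono' (hmeas.pow 2) (ae_of_all _ fun x => ?_)
  rw [Real.norm_of_nonneg (sq_nonneg _)]
  linarith [sq_nonneg ‖gradient P.u x‖]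

theorem locallyL2_gradient (hK : volume P.K = 0) : LocallyL2 (gradient P.u) volume :=
    fun y R => by
  have hmeas := measurable_gradient P.u
  refine (memLp_two_iff_integrable_sq_norm hmeas.aestronglyMeasurable).2 ?_
  refine (integrableOn_ball hK y R).mono' (hmeas.norm.pow_const 2).aestronglyMeasurable
    (ae_of_all _ fun x => ?_)
  rw [Real.norm_of_nonneg (sq_nonneg _)]
  linarith [sq_nonneg (P.u x)]

/-- The admissible pair `(v, L)` with closed `L`, `v` locally Lipschitz off `L`, and `v` and `∇v`
locally square-integrable. -/
def ofLocallyL2 {L : Set (Rn N)} {v : Rn N → ℝ} (hL : IsClosed L) (hv : LocallyLipschitzOn Lᶜ v)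
    (hvL2 : LocallyL2 v volume) (hgL2 : LocallyL2 (gradient v) volume) : MSPair N where
  K := L
  u := v
  closed := hL
  lip := locLipOn_iff.2 hv
  integ R _ := IntegrableOn.mono_set ((hvL2 0 R).integrable_sq.add
    (hgL2.integrableOn_norm_sq 0 R)) sdiff_subset

theorem energy_eq {m : ℕ} {P : MSPair (m + 1)} (hK : volume P.K = 0) (y : Rn (m + 1)) (R : ℝ) :
    MSEnergy (m + 1) P (ball y R) = ENNReal.ofReal (∫ x in ball y R, ‖gradient P.u x‖ ^ 2) +
      μH[m] (P.K ∩ ball y R) := by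
  rw [MSEnergy, Nat.cast_add_one, add_sub_cancel_right,
    setLIntegral_congr (sdiff_null_ae_eq_self hK), ofReal_integral_eq_lintegral_ofReal
    ((locallyL2_gradient hK).integrableOn_norm_sq y R) (ae_of_all _ fun x => sq_nonneg _)]

end MSPair

theorem competitor_of_isPreconnected_compl {N : ℕ} {P Q : MSPair N} {B : Set (Rn N)}
    (hP : IsPreconnected P.Kᶜ) (hK : Q.K \ B = P.K \ B)
    (hu : ∀ x, x ∉ B ∪ P.K ∪ Q.K → Q.u x = P.u x) : Competitor N P Q B := by
  refine ⟨hK, hu, fun x hx y hy hne => absurd ?_ hne⟩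
  rw [hP.connectedComponentIn fun h => hx (Or.inr h),
    hP.connectedComponentIn fun h => hy (Or.inr h)]

/-! ### Flat minimizers -/

/-- `(u, K)` is a global minimizer whose singular set lies in the hyperplane `range ι` and does not
disconnect space, so that the separation condition on competitors is void. -/
structure FlatMinimizer {m : ℕ} (P : MSPair (m + 1)) (ι : Rn m →ᵃⁱ[ℝ] Rn (m + 1)) : Prop where
  isGlobalMin : IsGlobalMin (m + 1) P
  subset_range : P.K ⊆ range ι
  isPreconnected_compl : IsPreconnected P.Kᶜ

theorem volume_range_affineIsometry {m : ℕ} (ι : Rn m →ᵃⁱ[ℝ] Rn (m + 1)) :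
    volume (range ι) = 0 := by
  have hne : (⊤ : AffineSubspace ℝ (Rn m)).map ι.toAffineMap ≠ ⊤ := fun htop => by
    have hrank := LinearMap.finrank_range_le ι.linear
    have hdir := congrArg AffineSubspace.direction htop
    rw [AffineSubspace.map_direction, AffineSubspace.direction_top, AffineSubspace.direction_top,
      Submodule.map_top] at hdir
    rw [hdir, finrank_top] at hrank
    simp at hrank
  simpa using Measure.addHaar_affineSubspace volume _ hne

theorem hausdorffMeasure_affineIsometry_image {m : ℕ} (ι : Rn m →ᵃⁱ[ℝ] Rn (m + 1))
    (s : Set (Rn m)) : μH[m] (ι '' s) = μH[m] s :=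
  ι.isometry.hausdorffMeasure_image (Or.inl m.cast_nonneg) s

instance isAddHaarMeasure_hausdorffMeasure_Rn (m : ℕ) :
    (μH[m] : Measure (Rn m)).IsAddHaarMeasure := by
  simpa using isAddHaarMeasure_hausdorffMeasure (E := Rn m)

theorem hausdorffMeasure_range_inter_ball_lt_top {m : ℕ} (ι : Rn m →ᵃⁱ[ℝ] Rn (m + 1))
    (y : Rn (m + 1)) (R : ℝ) : μH[m] (range ι ∩ ball y R) < ∞ := by
  have hsub : range ι ∩ ball y R ⊆ ι '' ball 0 (dist y (ι 0) + R) := by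
    rintro _ ⟨⟨a, rfl⟩, ha⟩
    refine ⟨a, ?_, rfl⟩
    rw [mem_ball, ← ι.dist_map]
    linarith [dist_triangle (ι a) y (ι 0), mem_ball.1 ha]
  refine (measure_mono hsub).trans_lt ?_
  rw [hausdorffMeasure_affineIsometry_image]
  exact measure_ball_lt_top

namespace FlatMinimizer
variable {m : ℕ} {P : MSPair (m + 1)} {ι : Rn m →ᵃⁱ[ℝ] Rn (m + 1)}

theorem volume_K (h : FlatMinimizer P ι) : volume P.K = 0 :=
  measure_mono_null h.subset_range (volume_range_affineIsometry ι)

theorem hausdorffMeasure_lt_top (h : FlatMinimizer P ι) (y : Rn (m + 1)) (R : ℝ) :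
    μH[m] (P.K ∩ ball y R) < ∞ :=
  (measure_mono (inter_subset_inter_left _ h.subset_range)).trans_lt
    (hausdorffMeasure_range_inter_ball_lt_top ι y R)

theorem energy_le (h : FlatMinimizer P ι) {L : Set (Rn (m + 1))} {v : Rn (m + 1) → ℝ}
    (hL : IsClosed L) (hv : LocallyLipschitzOn Lᶜ v) (hvL2 : LocallyL2 v volume)
    (hgL2 : LocallyL2 (gradient v) volume) {y : Rn (m + 1)} {R : ℝ} (hR : 0 < R)
    (hLK : L \ ball y R = P.K \ ball y R) (hvu : ∀ x, x ∉ ball y R → x ∉ P.K → v x = P.u x)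
    (hL0 : volume L = 0) (hLfin : μH[m] (L ∩ ball y R) ≠ ∞) :
    (∫ x in ball y R, ‖gradient P.u x‖ ^ 2) + (μH[m] (P.K ∩ ball y R)).toReal ≤
      (∫ x in ball y R, ‖gradient v x‖ ^ 2) + (μH[m] (L ∩ ball y R)).toReal := by
  let Q := MSPair.ofLocallyL2 hL hv hvL2 hgL2
  have hle : MSEnergy (m + 1) P (ball y R) ≤ MSEnergy (m + 1) Q (ball y R) :=
    h.isGlobalMin y R hR Q (competitor_of_isPreconnected_compl h.isPreconnected_compl hLK
      fun x hx => hvu x (fun hb => hx (Or.inl (Or.inl hb))) fun hk => hx (Or.inl (Or.inr hk)))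
  rw [MSPair.energy_eq h.volume_K, MSPair.energy_eq (P := Q) hL0] at hle
  have hle' := ENNReal.toReal_mono (ENNReal.add_ne_top.2 ⟨ENNReal.ofReal_ne_top, hLfin⟩) hle
  rwa [ENNReal.toReal_add ENNReal.ofReal_ne_top (h.hausdorffMeasure_lt_top y R).ne,
    ENNReal.toReal_add ENNReal.ofReal_ne_top hLfin, ENNReal.toReal_ofReal (by positivity),
    ENNReal.toReal_ofReal (by positivity)] at hle'

end FlatMinimizer

/-! ### Radial cutoffs -/

theorem hasDerivAt_max_zero_sq (s : ℝ) :
    HasDerivAt (fun s : ℝ => max 0 s ^ 2) (2 * max 0 s) s := by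
  rw [hasDerivAt_iff_isLittleO]
  refine Asymptotics.IsBigO.trans_isLittleO (g := fun x => (x - s) ^ 2) ?_ ?_
  · refine Asymptotics.isBigO_of_le _ fun x => ?_
    simp only [smul_eq_mul, Real.norm_eq_abs, abs_sq]
    rw [abs_le]
    rcases le_total 0 x with hx | hx <;> rcases le_total 0 s with hs | hs <;>
      simp only [max_eq_right, max_eq_left, hx, hs] <;> constructor <;> nlinarith
  · have hlim : Tendsto (fun x : ℝ => x - s) (𝓝 s) (𝓝 0) := by
      simpa using (continuous_sub_right s).tendsto s
    exact (Asymptotics.isLittleO_pow_id (𝕜 := ℝ) one_lt_two).comp_tendsto hlim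

theorem contDiff_max_zero_sq : ContDiff ℝ 1 fun s : ℝ => max 0 s ^ 2 := by
  rw [contDiff_one_iff_deriv]
  refine ⟨fun s => (hasDerivAt_max_zero_sq s).differentiableAt, ?_⟩
  rw [funext fun s => (hasDerivAt_max_zero_sq s).deriv]
  fun_prop

section Cutoff
variable {V : Type*} [NormedAddCommGroup V]

/-- The tent `(1 - ‖ξ‖²)₊`, the profile from which all radial weights are built. -/
def tent (ξ : V) : ℝ := max 0 (1 - ‖ξ‖ ^ 2)

theorem tent_nonneg (ξ : V) : 0 ≤ tent ξ := le_max_left _ _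

theorem tent_le_one (ξ : V) : tent ξ ≤ 1 := max_le zero_le_one (sub_le_self _ (sq_nonneg _))

theorem tent_eq_zero {ξ : V} (hξ : 1 ≤ ‖ξ‖) : tent ξ = 0 :=
  max_eq_left (by nlinarith)

theorem tent_pos {ξ : V} (hξ : ‖ξ‖ < 1) : 0 < tent ξ :=
  lt_max_of_lt_right (by nlinarith [norm_nonneg ξ])

@[fun_prop]
theorem continuous_tent : Continuous (tent : V → ℝ) := by
  unfold tent
  fun_prop

variable [NormedSpace ℝ V]

/-- The `C¹` cutoff `(1 - ‖x‖²/r²)₊²` of the ball of radius `r`. -/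
def cutoff (r : ℝ) (x : V) : ℝ := tent (r⁻¹ • x) ^ 2

/-- The slope `ω` of the cutoff in the variable `‖x‖²`, so that `∇ cutoff = -2 ω x`. -/
def cutoffSlope (r : ℝ) (x : V) : ℝ := 2 / r ^ 2 * tent (r⁻¹ • x)

theorem cutoff_nonneg (r : ℝ) (x : V) : 0 ≤ cutoff r x := sq_nonneg _

theorem cutoff_le_one (r : ℝ) (x : V) : cutoff r x ≤ 1 :=
  pow_le_one₀ (tent_nonneg _) (tent_le_one _)

theorem cutoffSlope_nonneg (r : ℝ) (x : V) : 0 ≤ cutoffSlope r x :=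
  mul_nonneg (by positivity) (tent_nonneg _)

@[fun_prop]
theorem continuous_cutoff (r : ℝ) : Continuous (cutoff r : V → ℝ) := by
  unfold cutoff
  fun_prop

@[fun_prop]
theorem continuous_cutoffSlope (r : ℝ) : Continuous (cutoffSlope r : V → ℝ) := by
  unfold cutoffSlope
  fun_prop

theorem norm_inv_smul {r : ℝ} (hr : 0 < r) (x : V) : ‖r⁻¹ • x‖ = ‖x‖ / r := by
  rw [norm_smul, norm_inv, Real.norm_of_nonneg hr.le, inv_mul_eq_div]

theorem tent_inv_smul_sub_eq_zero {r : ℝ} (hr : 0 < r) {x y : V} (hx : x ∉ ball y r) :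
    tent (r⁻¹ • (x - y)) = 0 := by
  rw [mem_ball, dist_eq_norm, not_lt] at hx
  exact tent_eq_zero (by rwa [norm_inv_smul hr, one_le_div hr])

theorem cutoff_sub_eq_zero {r : ℝ} (hr : 0 < r) {x y : V} (hx : x ∉ ball y r) :
    cutoff r (x - y) = 0 := by
  rw [cutoff, tent_inv_smul_sub_eq_zero hr hx, zero_pow two_ne_zero]

theorem cutoffSlope_sub_eq_zero {r : ℝ} (hr : 0 < r) {x y : V} (hx : x ∉ ball y r) :
    cutoffSlope r (x - y) = 0 := by
  rw [cutoffSlope, tent_inv_smul_sub_eq_zero hr hx, mul_zero]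

theorem cutoffSlope_sub_pos {r : ℝ} (hr : 0 < r) {x y : V} (hx : x ∈ ball y r) :
    0 < cutoffSlope r (x - y) := by
  rw [mem_ball, dist_eq_norm] at hx
  exact mul_pos (by positivity) (tent_pos (by rwa [norm_inv_smul hr, div_lt_one hr]))

theorem cutoffSlope_mul_norm_sq_le (r : ℝ) (x : V) : cutoffSlope r x * ‖x‖ ^ 2 ≤ 2 := by
  have hx : ‖r⁻¹ • x‖ ^ 2 = ‖x‖ ^ 2 / r ^ 2 := by
    rw [norm_smul, mul_pow, norm_inv, Real.norm_eq_abs, inv_pow, sq_abs, inv_mul_eq_div]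
  have hle : tent (r⁻¹ • x) * ‖r⁻¹ • x‖ ^ 2 ≤ 1 := by
    rw [tent]
    rcases max_cases 0 (1 - ‖r⁻¹ • x‖ ^ 2) with ⟨h, -⟩ | ⟨h, -⟩ <;> rw [h] <;>
      nlinarith [sq_nonneg (‖r⁻¹ • x‖ ^ 2 - 1)]
  calc cutoffSlope r x * ‖x‖ ^ 2 = 2 * (tent (r⁻¹ • x) * ‖r⁻¹ • x‖ ^ 2) := by
        rw [cutoffSlope, hx]; ring
    _ ≤ 2 := by linarith

theorem hasDerivAt_cutoff_radius {r : ℝ} (hr : 0 < r) (x : V) :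
    HasDerivAt (fun r => cutoff r x) (2 * cutoffSlope r x * ‖x‖ ^ 2 / r) r := by
  have hinner : HasDerivAt (fun r : ℝ => 1 - ‖r⁻¹ • x‖ ^ 2) (2 * ‖x‖ ^ 2 / r ^ 3) r := by
    have hpow := ((((hasDerivAt_inv hr.ne').pow 2).mul_const (‖x‖ ^ 2)).const_sub 1)
    refine (hpow.congr_deriv (by simp; field_simp)).congr_of_eventuallyEq
      (Eventually.of_forall fun s => ?_)
    simp [norm_smul, mul_pow]
  refine ((hasDerivAt_max_zero_sq _).comp r hinner).congr_deriv ?_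
  rw [cutoffSlope, tent]
  field_simp

end Cutoff

section CutoffGradient
variable {V : Type*} [NormedAddCommGroup V] [InnerProductSpace ℝ V]

theorem contDiff_cutoff (r : ℝ) : ContDiff ℝ 1 (cutoff r : V → ℝ) :=
  contDiff_max_zero_sq.comp (contDiff_const.sub ((contDiff_id.const_smul r⁻¹).norm_sq ℝ))

theorem hasFDerivAt_cutoff (r : ℝ) (x : V) :
    HasFDerivAt (cutoff r) (-(2 * cutoffSlope r x) • innerSL ℝ x) x := by
  have hinner := ((hasFDerivAt_id x).const_smul r⁻¹).norm_sq.const_sub 1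
  refine ((hasDerivAt_max_zero_sq _).comp_hasFDerivAt x hinner).congr_fderiv ?_
  ext v
  simp [cutoffSlope, tent]
  ring

theorem hasFDerivAt_cutoff_sub (r : ℝ) (x y : V) :
    HasFDerivAt (fun x => cutoff r (x - y)) (-(2 * cutoffSlope r (x - y)) • innerSL ℝ (x - y)) x :=
  (hasFDerivAt_comp_sub y).2 (hasFDerivAt_cutoff r (x - y))

end CutoffGradient

theorem integrable_mul_of_eq_zero_off_ball {X : Type*} [MetricSpace X] [ProperSpace X]
    [MeasurableSpace X] [OpensMeasurableSpace X] {μ : Measure X} {w f : X → ℝ} {y : X} {r : ℝ}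
    (hw : Continuous w) (hw0 : ∀ x, x ∉ ball y r → w x = 0) (hf : LocallyIntegrable f μ) :
    Integrable (fun x => w x * f x) μ :=
  hf.integrable_smul_left_of_hasCompactSupport hw
    (HasCompactSupport.intro (isCompact_closedBall y r)
      fun x hx => hw0 x fun h => hx (ball_subset_closedBall h))

section Integrable
variable {V : Type*} [NormedAddCommGroup V] [NormedSpace ℝ V] [ProperSpace V] [MeasurableSpace V]
  [OpensMeasurableSpace V] {μ : Measure V} {f : V → ℝ} {r : ℝ}

theorem integrable_cutoff_mul (hf : LocallyIntegrable f μ) (hr : 0 < r) (y : V) :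
    Integrable (fun x => cutoff r (x - y) * f x) μ :=
  integrable_mul_of_eq_zero_off_ball (by fun_prop) (fun _ => cutoff_sub_eq_zero hr) hf

theorem integrable_cutoffSlope_mul (hf : LocallyIntegrable f μ) (hr : 0 < r) (y : V) :
    Integrable (fun x => cutoffSlope r (x - y) * f x) μ :=
  integrable_mul_of_eq_zero_off_ball (by fun_prop) (fun _ => cutoffSlope_sub_eq_zero hr) hf

end Integrable

/-! ### The weak Euler–Lagrange equation -/

theorem eq_zero_of_eventually_nonneg {a b : ℝ} (h : ∀ᶠ t in 𝓝 (0 : ℝ), 0 ≤ t * a + t ^ 2 * b) :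
    a = 0 := by
  have hmin : IsLocalMin (fun t : ℝ => t * a + t ^ 2 * b) 0 := by
    filter_upwards [h] with t ht
    simpa using ht
  have hderiv := ((hasDerivAt_id (0 : ℝ)).mul_const a).add
    (((hasDerivAt_id (0 : ℝ)).pow 2).mul_const b)
  simpa using hmin.hasDerivAt_eq_zero hderiv

theorem hasFDerivAt_innerSL_gradient {V : Type*} [NormedAddCommGroup V] [InnerProductSpace ℝ V]
    [CompleteSpace V] {u : V → ℝ} {x : V} (hu : DifferentiableAt ℝ u x) :
    HasFDerivAt u (innerSL ℝ (gradient u x)) x :=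
  hu.hasGradientAt.hasFDerivAt

theorem gradient_eq_of_hasFDerivAt_innerSL {V : Type*} [NormedAddCommGroup V]
    [InnerProductSpace ℝ V] [CompleteSpace V] {u : V → ℝ} {x g : V}
    (hu : HasFDerivAt u (innerSL ℝ g) x) : gradient u x = g :=
  HasGradientAt.gradient (hasGradientAt_iff_hasFDerivAt.2 hu)

/-- The Dirichlet energy of `u` weighted by the cutoff of the ball `B(y, r)`. -/
def weightedDirichlet {N : ℕ} (P : MSPair N) (y : Rn N) (r : ℝ) : ℝ :=
  ∫ x, cutoff r (x - y) * ‖gradient P.u x‖ ^ 2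

namespace MSPair
variable {N : ℕ} {P : MSPair N}

theorem locallyL2_sub_const (hK : volume P.K = 0) (c : ℝ) :
    LocallyL2 (fun x => P.u x - c) volume := by
  simpa only [sub_eq_add_neg] using (locallyL2_u hK).add (LocallyL2.const (-c))

theorem locallyIntegrable_sub_mul_inner (hK : volume P.K = 0) (y : Rn N) (c : ℝ) :
    LocallyIntegrable fun x => (P.u x - c) * inner ℝ (x - y) (gradient P.u x) := by
  simpa only [real_inner_smul_left] using ((locallyL2_sub_const hK c).smul_continuous
    (f := fun x => x - y) (by fun_prop)).locallyIntegrable_inner (locallyL2_gradient hK)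

theorem gradient_add_mul_ae (hK : volume P.K = 0) {φ : Rn N → ℝ}
    (hφ : LocallyLipschitzOn P.Kᶜ φ) (t : ℝ) : gradient (fun x => P.u x + t * φ x) =ᵐ[volume]
      fun x => gradient P.u x + t • gradient φ x := by
  filter_upwards [measure_eq_zero_iff_ae_notMem.1 hK, ae_differentiableAt hK,
    ae_differentiableAt_of_locallyLipschitzOn P.closed.isOpen_compl hφ] with x hxK hux hφx
  refine gradient_eq_of_hasFDerivAt_innerSL (((hasFDerivAt_innerSL_gradient hux).add
    ((hasFDerivAt_innerSL_gradient (hφx hxK)).const_mul t)).congr_fderiv ?_)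
  rw [map_add, map_smul]

theorem gradient_sub_const_mul_cutoff {x : Rn N} (hx : DifferentiableAt ℝ P.u x)
    (y : Rn N) (c r : ℝ) :
    gradient (fun x => (P.u x - c) * cutoff r (x - y)) x = cutoff r (x - y) • gradient P.u x +
      (P.u x - c) • (-(2 * cutoffSlope r (x - y)) • (x - y)) := by
  refine gradient_eq_of_hasFDerivAt_innerSL ((((hasFDerivAt_innerSL_gradient hx).sub_const c).mul
    (hasFDerivAt_cutoff_sub r x y)).congr_fderiv ?_)
  rw [map_add, map_smul, map_smul, map_smul, add_comm]

end MSPair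

namespace FlatMinimizer
variable {m : ℕ} {P : MSPair (m + 1)} {ι : Rn m →ᵃⁱ[ℝ] Rn (m + 1)}

theorem integral_inner_gradient_eq_zero (h : FlatMinimizer P ι) {φ : Rn (m + 1) → ℝ}
    (hφ : LocallyLipschitzOn P.Kᶜ φ) (hφL2 : LocallyL2 φ volume)
    (hgL2 : LocallyL2 (gradient φ) volume) {y : Rn (m + 1)} {R : ℝ} (hR : 0 < R)
    (hsupp : ∀ x, x ∉ ball y R → φ x = 0) :
    ∫ x in ball y R, inner ℝ (gradient P.u x) (gradient φ x) = 0 := by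
  have huL2 := MSPair.locallyL2_u h.volume_K
  have hguL2 := MSPair.locallyL2_gradient h.volume_K
  have hgrad := MSPair.gradient_add_mul_ae h.volume_K hφ
  have hnonneg (t : ℝ) : 0 ≤ t * (2 * ∫ x in ball y R, inner ℝ (gradient P.u x) (gradient φ x)) +
      t ^ 2 * ∫ x in ball y R, ‖gradient φ x‖ ^ 2 := by
    have hlip : LocallyLipschitzOn P.Kᶜ fun x => P.u x + t * φ x :=
      locallyLipschitzOn_comp_prodMk (g := fun p : ℝ × ℝ => p.1 + t * p.2)
        (ContDiff.locallyLipschitz (𝕂 := ℝ) (by fun_prop)) P.locallyLipschitzOn_u hφ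
    have hle := h.energy_le P.closed hlip (huL2.add (hφL2.const_smul t))
      ((hguL2.add (hgL2.const_smul t)).congr_ae (hgrad t).symm) hR rfl
      (fun x hx _ => by rw [hsupp x hx, mul_zero, add_zero]) h.volume_K
      (h.hausdorffMeasure_lt_top y R).ne
    have hexpand : ∫ x in ball y R, ‖gradient (fun x => P.u x + t * φ x) x‖ ^ 2 = _ :=
      (integral_congr_ae (ae_restrict_of_ae ((hgrad t).fun_comp fun g => ‖g‖ ^ 2))).trans
        (integral_norm_add_smul_sq (hguL2 y R) (hgL2 y R) t)
    linarith
  have := eq_zero_of_eventually_nonneg (Eventually.of_forall hnonneg)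
  linarith

theorem weightedDirichlet_eq_integral (h : FlatMinimizer P ι) (y : Rn (m + 1)) (c : ℝ) {r : ℝ}
    (hr : 0 < r) : weightedDirichlet P y r =
      2 * ∫ x, cutoffSlope r (x - y) * ((P.u x - c) * inner ℝ (x - y) (gradient P.u x)) := by
  have hucL2 := MSPair.locallyL2_sub_const h.volume_K c
  have hguL2 := MSPair.locallyL2_gradient h.volume_K
  have hlip : LocallyLipschitzOn P.Kᶜ fun x => (P.u x - c) * cutoff r (x - y) :=
    locallyLipschitzOn_comp_prodMk (g := fun p : ℝ × ℝ => (p.1 - c) * p.2)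
      (ContDiff.locallyLipschitz (𝕂 := ℝ) (by fun_prop)) P.locallyLipschitzOn_u
      (ContDiff.locallyLipschitz (𝕂 := ℝ)
        ((contDiff_cutoff r).comp (contDiff_id.sub contDiff_const))).locallyLipschitzOn
  have hgrad : gradient (fun x => (P.u x - c) * cutoff r (x - y)) =ᵐ[volume] fun x =>
      cutoff r (x - y) • gradient P.u x +
        (P.u x - c) • (-(2 * cutoffSlope r (x - y)) • (x - y)) := by
    filter_upwards [MSPair.ae_differentiableAt h.volume_K] with x hx using
      MSPair.gradient_sub_const_mul_cutoff hx y c r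
  have hzero := h.integral_inner_gradient_eq_zero hlip
    (hucL2.smul_continuous (f := fun x => cutoff r (x - y)) (by fun_prop))
    (((LocallyL2.continuous_smul (by fun_prop) hguL2).add
      (hucL2.smul_continuous (by fun_prop))).congr_ae hgrad.symm) hr
    (fun x hx => by rw [cutoff_sub_eq_zero hr hx, mul_zero])
  have hD := integrable_cutoff_mul hguL2.locallyIntegrable_norm_sq hr y
  have hC := integrable_cutoffSlope_mul
    (MSPair.locallyIntegrable_sub_mul_inner h.volume_K y c) hr y
  have hexpand : (fun x => inner ℝ (gradient P.u x)
        (gradient (fun x => (P.u x - c) * cutoff r (x - y)) x)) =ᵐ[volume] fun x =>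
      cutoff r (x - y) * ‖gradient P.u x‖ ^ 2 -
        2 * (cutoffSlope r (x - y) * ((P.u x - c) * inner ℝ (x - y) (gradient P.u x))) := by
    filter_upwards [hgrad] with x hx
    rw [hx, inner_add_right, inner_smul_right, inner_smul_right, inner_smul_right,
      real_inner_self_eq_norm_sq, real_inner_comm (x - y)]
    ring
  rw [integral_congr_ae (ae_restrict_of_ae hexpand),
    setIntegral_eq_integral_of_forall_compl_eq_zero fun x hx => by
      rw [cutoff_sub_eq_zero hr hx, cutoffSlope_sub_eq_zero hr hx]; ring,
    integral_sub hD (hC.const_mul 2), integral_const_mul] at hzero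
  exact sub_eq_zero.1 hzero

end FlatMinimizer

/-! ### The radial flow -/

section RankOne
variable {V : Type*} [NormedAddCommGroup V] [InnerProductSpace ℝ V] {α β : ℝ} {ξ : V}

/-- The operator `α + β ξ ⊗ ξ`; the derivative of a radial map has this form. -/
def rankOne (α β : ℝ) (ξ : V) : V →L[ℝ] V :=
  α • ContinuousLinearMap.id ℝ V + β • (innerSL ℝ ξ).smulRight ξ

theorem rankOne_apply (α β : ℝ) (ξ v : V) :
    rankOne α β ξ v = α • v + (β * inner ℝ ξ v) • ξ := by
  simp [rankOne, smul_smul]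

theorem inner_rankOne_left (α β : ℝ) (ξ v w : V) :
    inner ℝ (rankOne α β ξ v) w = inner ℝ v (rankOne α β ξ w) := by
  simp only [rankOne_apply, inner_add_left, inner_add_right, real_inner_smul_left,
    inner_smul_right, real_inner_comm ξ]
  ring

theorem norm_rankOne_apply_sq (α β : ℝ) (ξ v : V) :
    ‖rankOne α β ξ v‖ ^ 2 =
      α ^ 2 * ‖v‖ ^ 2 + (2 * α * β + β ^ 2 * ‖ξ‖ ^ 2) * inner ℝ ξ v ^ 2 := by
  rw [rankOne_apply, norm_add_sq_real, norm_smul, norm_smul, mul_pow, mul_pow, Real.norm_eq_abs,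
    Real.norm_eq_abs, sq_abs, sq_abs, real_inner_smul_left, inner_smul_right, real_inner_comm ξ v]
  ring

theorem det_rankOne [FiniteDimensional ℝ V] (hα : α ≠ 0) (β : ℝ) (ξ : V) :
    (rankOne α β ξ).det = α ^ Module.finrank ℝ V * (1 + β / α * ‖ξ‖ ^ 2) := by
  have htransvection : (rankOne α β ξ : V →ₗ[ℝ] V) =
      α • LinearMap.transvection (innerSL ℝ ξ : V →ₗ[ℝ] ℝ) ((β / α) • ξ) := by
    ext v
    simp only [ContinuousLinearMap.coe_coe, rankOne_apply, LinearMap.smul_apply,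
      LinearMap.transvection.apply, innerSL_apply_apply, smul_add, smul_smul]
    congr 2
    field_simp
  rw [ContinuousLinearMap.det, htransvection, LinearMap.det_smul, LinearMap.transvection.det]
  simp

theorem rankOne_inverse_apply (hα : α ≠ 0) (hγ : α + β * ‖ξ‖ ^ 2 ≠ 0) (v : V) :
    rankOne α⁻¹ (-(β / (α * (α + β * ‖ξ‖ ^ 2)))) ξ (rankOne α β ξ v) = v := by
  simp only [rankOne_apply, inner_add_right, inner_smul_right, real_inner_self_eq_norm_sq,
    smul_add, smul_smul]
  rw [add_assoc, ← add_smul, inv_mul_cancel₀ hα, one_smul, add_eq_left, smul_eq_zero]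
  left
  field_simp
  ring

theorem rankOne_apply_inverse (hα : α ≠ 0) (hγ : α + β * ‖ξ‖ ^ 2 ≠ 0) (v : V) :
    rankOne α β ξ (rankOne α⁻¹ (-(β / (α * (α + β * ‖ξ‖ ^ 2)))) ξ v) = v := by
  simp only [rankOne_apply, inner_add_right, inner_smul_right, real_inner_self_eq_norm_sq,
    smul_add, smul_smul]
  rw [add_assoc, ← add_smul, mul_inv_cancel₀ hα, one_smul, add_eq_left, smul_eq_zero]
  left
  field_simp
  ring

theorem hasFDerivAt_symm_of_rankOne {h : V ≃ₜ V} {x : V} (hα : α ≠ 0)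
    (hγ : α + β * ‖ξ‖ ^ 2 ≠ 0) (hh : HasFDerivAt h (rankOne α β ξ) x) :
    HasFDerivAt h.symm (rankOne α⁻¹ (-(β / (α * (α + β * ‖ξ‖ ^ 2)))) ξ) (h x) := by
  let e : V ≃L[ℝ] V := ContinuousLinearEquiv.equivOfInverse _ _ (rankOne_inverse_apply hα hγ)
    (rankOne_apply_inverse hα hγ)
  refine HasFDerivAt.of_local_left_inverse (f := h) (f' := e) h.symm.continuous.continuousAt ?_
    (Eventually.of_forall h.apply_symm_apply)
  rwa [h.symm_apply_apply]

theorem gradient_comp_rankOne [CompleteSpace V] {u : V → ℝ} {g : V → V} {z : V}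
    (hu : DifferentiableAt ℝ u (g z)) (hg : HasFDerivAt g (rankOne α β ξ) z) :
    gradient (u ∘ g) z = rankOne α β ξ (gradient u (g z)) := by
  refine gradient_eq_of_hasFDerivAt_innerSL
    (((hasFDerivAt_innerSL_gradient hu).comp z hg).congr_fderiv ?_)
  ext v
  simp [inner_rankOne_left]

end RankOne

section RadialFlow
variable {V : Type*} [NormedAddCommGroup V] [InnerProductSpace ℝ V] {t r : ℝ} {x y : V}

/-- The radial vector field `φ(x - y) (x - y)`, cut off at radius `r` around `y`. -/
def radialField (r : ℝ) (y x : V) : V := cutoff r (x - y) • (x - y)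

/-- The perturbation `id + t X` of the identity by the radial vector field `X`. -/
def radialFlow (t r : ℝ) (y x : V) : V := x + t • radialField r y x

theorem radialFlow_of_notMem_ball (t : ℝ) (hr : 0 < r) (hx : x ∉ ball y r) :
    radialFlow t r y x = x := by
  simp [radialFlow, radialField, cutoff_sub_eq_zero hr hx]

theorem hasFDerivAt_radialField (r : ℝ) (y x : V) :
    HasFDerivAt (radialField r y)
      (rankOne (cutoff r (x - y)) (-(2 * cutoffSlope r (x - y))) (x - y)) x := by
  refine ((hasFDerivAt_cutoff_sub r x y).smul ((hasFDerivAt_id x).sub_const y)).congr_fderiv ?_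
  ext v
  simp [rankOne_apply, inner_sub_left]

theorem hasFDerivAt_radialFlow (t r : ℝ) (y x : V) :
    HasFDerivAt (radialFlow t r y)
      (rankOne (1 + t * cutoff r (x - y)) (-(2 * t * cutoffSlope r (x - y))) (x - y)) x := by
  refine ((hasFDerivAt_id x).add ((hasFDerivAt_radialField r y x).const_smul t)).congr_fderiv ?_
  ext v
  simp only [_root_.add_apply, _root_.smul_apply, rankOne_apply, ContinuousLinearMap.id_apply]
  module

theorem lipschitzWith_radialField (r : ℝ) (y : V) : LipschitzWith 5 (radialField r y) := by
  refine lipschitzWith_of_nnnorm_fderiv_le (𝕜 := ℝ)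
    (fun x => (hasFDerivAt_radialField r y x).differentiableAt) fun x => ?_
  rw [(hasFDerivAt_radialField r y x).fderiv, ← NNReal.coe_le_coe, coe_nnnorm]
  refine ContinuousLinearMap.opNorm_le_bound _ (by positivity) fun v => ?_
  have hslope := cutoffSlope_nonneg r (x - y)
  calc ‖rankOne (cutoff r (x - y)) (-(2 * cutoffSlope r (x - y))) (x - y) v‖
      ≤ cutoff r (x - y) * ‖v‖
          + 2 * cutoffSlope r (x - y) * |inner ℝ (x - y) v| * ‖x - y‖ := by
        rw [rankOne_apply]
        refine (norm_add_le _ _).trans_eq ?_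
        rw [norm_smul, norm_smul, Real.norm_of_nonneg (cutoff_nonneg _ _), Real.norm_eq_abs,
          abs_mul, abs_neg, abs_of_nonneg (by positivity : 0 ≤ 2 * cutoffSlope r (x - y))]
    _ ≤ 1 * ‖v‖ + 2 * cutoffSlope r (x - y) * (‖x - y‖ * ‖v‖) * ‖x - y‖ := by
        gcongr
        exacts [cutoff_le_one _ _, abs_real_inner_le_norm _ _]
    _ = ‖v‖ + 2 * (cutoffSlope r (x - y) * ‖x - y‖ ^ 2) * ‖v‖ := by ring
    _ ≤ ‖v‖ + 2 * 2 * ‖v‖ := by gcongr; exact cutoffSlope_mul_norm_sq_le _ _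
    _ = (5 : ℝ≥0) * ‖v‖ := by norm_num; ring

theorem lipschitzWith_smul_radialField (ht : |t| ≤ 1 / 10) (r : ℝ) (y : V) :
    LipschitzWith (1 / 2) fun x => t • radialField r y x := by
  refine LipschitzWith.of_dist_le_mul fun a b => ?_
  have hdist := (lipschitzWith_radialField r y).dist_le_mul a b
  rw [dist_smul₀, Real.norm_eq_abs]
  calc |t| * dist (radialField r y a) (radialField r y b)
      ≤ 1 / 10 * ((5 : ℝ≥0) * dist a b) := by gcongr
    _ = (1 / 2 : ℝ≥0) * dist a b := by push_cast; ring

theorem lipschitzWith_radialFlow (ht : |t| ≤ 1 / 10) (r : ℝ) (y : V) :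
    LipschitzWith (1 + 1 / 2) (radialFlow t r y) :=
  LipschitzWith.id.add (lipschitzWith_smul_radialField ht r y)

theorem antilipschitzWith_radialFlow (ht : |t| ≤ 1 / 10) (r : ℝ) (y : V) :
    AntilipschitzWith 2 (radialFlow t r y) := by
  refine AntilipschitzWith.of_le_mul_dist fun a b => ?_
  have hfield := (lipschitzWith_smul_radialField ht r y).dist_le_mul a b
  have htriangle := norm_sub_le (radialFlow t r y a - radialFlow t r y b)
    (t • radialField r y a - t • radialField r y b)
  rw [show radialFlow t r y a - radialFlow t r y b
    - (t • radialField r y a - t • radialField r y b) = a - b by unfold radialFlow; abel]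
    at htriangle
  simp only [dist_eq_norm] at hfield ⊢
  push_cast at hfield ⊢
  linarith

theorem surjective_radialFlow [CompleteSpace V] (ht : |t| ≤ 1 / 10) (r : ℝ) (y : V) :
    Function.Surjective (radialFlow t r y) := by
  intro z
  have hcontr : ContractingWith (1 / 2) fun x => z - t • radialField r y x := by
    refine ⟨by norm_num, LipschitzWith.of_dist_le_mul fun a b => ?_⟩
    rw [dist_sub_left]
    exact (lipschitzWith_smul_radialField ht r y).dist_le_mul a b
  exact ⟨hcontr.fixedPoint, (sub_eq_iff_eq_add.1 hcontr.fixedPoint_isFixedPt).symm⟩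

/-- The radial flow as a homeomorphism, for small times. -/
def radialHomeo [CompleteSpace V] (ht : |t| ≤ 1 / 10) (r : ℝ) (y : V) : V ≃ₜ V where
  toEquiv := Equiv.ofBijective (radialFlow t r y)
    ⟨(antilipschitzWith_radialFlow ht r y).injective, surjective_radialFlow ht r y⟩
  continuous_toFun := (lipschitzWith_radialFlow ht r y).continuous
  continuous_invFun := ((antilipschitzWith_radialFlow ht r y).to_rightInverse
    (Equiv.right_inv _)).continuous

@[simp]
theorem radialHomeo_apply [CompleteSpace V] (ht : |t| ≤ 1 / 10) (r : ℝ) (y x : V) :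
    radialHomeo ht r y x = radialFlow t r y x := rfl

theorem lipschitzWith_radialHomeo_symm [CompleteSpace V] (ht : |t| ≤ 1 / 10) (r : ℝ) (y : V) :
    LipschitzWith 2 (radialHomeo ht r y).symm :=
  (antilipschitzWith_radialFlow ht r y).to_rightInverse (Equiv.right_inv _)

theorem image_eq_of_eq_self_off {X : Type*} {f : X → X} (hf : Function.Bijective f) {s : Set X}
    (hs : ∀ x ∉ s, f x = x) : f '' s = s := by
  have hcompl : f '' sᶜ = sᶜ := (image_congr hs).trans (image_id' _)
  exact compl_injective (by rw [← image_compl_eq hf, hcompl])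

theorem radialHomeo_image_ball [CompleteSpace V] (ht : |t| ≤ 1 / 10) (hr : 0 < r) (y : V) :
    radialHomeo ht r y '' ball y r = ball y r :=
  image_eq_of_eq_self_off (radialHomeo ht r y).bijective
    fun _ hx => radialFlow_of_notMem_ball t hr hx

theorem radialHomeo_image_inter_ball [CompleteSpace V] (ht : |t| ≤ 1 / 10) (hr : 0 < r) (y : V)
    (s : Set V) : radialHomeo ht r y '' s ∩ ball y r = radialHomeo ht r y '' (s ∩ ball y r) := by
  rw [image_inter (radialHomeo ht r y).injective, radialHomeo_image_ball ht hr]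

theorem radialHomeo_image_diff_ball [CompleteSpace V] (ht : |t| ≤ 1 / 10) (hr : 0 < r) (y : V)
    (s : Set V) : radialHomeo ht r y '' s \ ball y r = s \ ball y r := by
  conv_lhs => rw [← radialHomeo_image_ball ht hr y]
  rw [← image_sdiff (radialHomeo ht r y).injective]
  exact (image_congr fun x hx => radialFlow_of_notMem_ball t hr hx.2).trans (image_id' _)

theorem radialHomeo_symm_of_notMem_ball [CompleteSpace V] (ht : |t| ≤ 1 / 10) (hr : 0 < r)
    (hx : x ∉ ball y r) : (radialHomeo ht r y).symm x = x := by
  rw [Homeomorph.symm_apply_eq, radialHomeo_apply, radialFlow_of_notMem_ball t hr hx]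

theorem radialFlow_affineIsometry {W : Type*} [NormedAddCommGroup W] [InnerProductSpace ℝ W]
    (ι : V →ᵃⁱ[ℝ] W) (t r : ℝ) (b a : V) :
    radialFlow t r (ι b) (ι a) = ι (radialFlow t r b a) := by
  have hlin : ι a - ι b = ι.linearIsometry (a - b) := by
    simpa using (ι.map_vsub a b).symm
  have hcut : cutoff r (ι a - ι b) = cutoff r (a - b) := by
    simp only [hlin, cutoff, tent, norm_smul, LinearIsometry.norm_map]
  have hvadd := ι.map_vadd a (t • radialField r b a)
  rw [vadd_eq_add, vadd_eq_add, add_comm, add_comm (ι.linearIsometry _)] at hvadd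
  rw [radialFlow, radialFlow, hvadd, radialField, radialField, hcut, hlin, map_smul, map_smul]

end RadialFlow

/-! ### The inner variation -/

section BiLipschitz
variable {n : ℕ} {C C' : ℝ≥0} {h : Rn n ≃ₜ Rn n}

theorem volume_image_le_of_lipschitzWith {f : Rn n → Rn n} (hf : LipschitzWith C f)
    (s : Set (Rn n)) : volume (f '' s) ≤ (C : ℝ≥0∞) ^ n * volume s := by
  rw [Measure.isAddLeftInvariant_eq_smul (volume : Measure (Rn n)) μH[n], Measure.smul_apply,
    Measure.smul_apply, ENNReal.smul_def, ENNReal.smul_def, smul_eq_mul, smul_eq_mul,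
    mul_left_comm, ← ENNReal.rpow_natCast]
  gcongr
  exact hf.hausdorffMeasure_image_le n.cast_nonneg s

theorem map_symm_volume_le (hC : LipschitzWith C h) :
    (volume : Measure (Rn n)).map h.symm ≤ ((C : ℝ≥0∞) ^ n) • volume := by
  refine Measure.le_iff.2 fun s hs => ?_
  rw [Measure.map_apply h.symm.measurable hs, Homeomorph.preimage_symm]
  exact volume_image_le_of_lipschitzWith hC s

theorem ae_comp_symm (hC : LipschitzWith C h) {q : Rn n → Prop} (hq : ∀ᵐ x, q x) :
    ∀ᵐ z, q (h.symm z) :=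
  ae_of_ae_map h.symm.measurable.aemeasurable
    ((Measure.absolutelyContinuous_of_le_smul (map_symm_volume_le hC)).ae_le hq)

theorem LocallyL2.comp_symm {E : Type*} [NormedAddCommGroup E] {f : Rn n → E}
    (hf : LocallyL2 f volume) (hC : LipschitzWith C h) (hC' : LipschitzWith C' h.symm)
    (hC0 : C' ≠ 0) : LocallyL2 (f ∘ h.symm) volume := fun x R => by
  have hmaps : ball x R ⊆ h.symm ⁻¹' ball (h.symm x) (C' * R) := hC'.mapsTo_ball hC0 x R
  have hle : (volume.restrict (ball x R)).map h.symm ≤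
      ((C : ℝ≥0∞) ^ n) • volume.restrict (ball (h.symm x) (C' * R)) := by
    rw [← Measure.restrict_smul]
    refine (Measure.map_mono (Measure.restrict_mono_set _ hmaps) h.symm.measurable).trans ?_
    rw [← Measure.restrict_map h.symm.measurable measurableSet_ball]
    exact Measure.restrict_mono_measure (map_symm_volume_le hC) _
  have hmem := ((hf (h.symm x) (C' * R)).smul_measure (ENNReal.pow_ne_top ENNReal.coe_ne_top)
    (c := (C : ℝ≥0∞) ^ n)).mono_measure hle
  exact (memLp_map_measure_iff hmem.1 h.symm.measurable.aemeasurable).1 hmem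

end BiLipschitz

section ParametricIntegral
variable {X E : Type*} [MeasurableSpace X] {μ : Measure X} [NormedAddCommGroup E]
  [MeasurableSpace E] [BorelSpace E] {Q : Set E} {p : X → E} {g : X → ℝ}

theorem measurable_comp_of_continuousOn {f : E → ℝ} (hf : ContinuousOn f Q) (hp : Measurable p)
    (hpQ : ∀ x, p x ∈ Q) : Measurable (f ∘ p) :=
  (continuousOn_iff_continuous_domRestrict.1 hf).measurable.comp (hp.subtype_mk (h := hpQ))

theorem integrable_comp_mul_of_continuousOn (hQ : IsCompact Q) {f : E → ℝ}
    (hf : ContinuousOn f Q) (hp : Measurable p) (hpQ : ∀ x, p x ∈ Q) (hg : Integrable g μ) :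
    Integrable (fun x => f (p x) * g x) μ := by
  obtain ⟨C, hC⟩ := hQ.exists_bound_of_continuousOn hf
  exact hg.bdd_mul (measurable_comp_of_continuousOn hf hp hpQ).aestronglyMeasurable
    (ae_of_all _ fun x => hC _ (hpQ x))

variable [NormedSpace ℝ E] {φ : ℝ × E → ℝ} {δ : ℝ}

theorem hasDerivAt_integral_comp_mul (hQ : IsCompact Q) (hδ : 0 < δ)
    (hφ : ∀ t ∈ Icc (-δ) δ, ∀ e ∈ Q, ContDiffAt ℝ 1 φ (t, e)) (hp : Measurable p)
    (hpQ : ∀ x, p x ∈ Q) (hg : Integrable g μ) :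
    HasDerivAt (fun t => ∫ x, φ (t, p x) * g x ∂μ)
      (∫ x, deriv (fun t => φ (t, p x)) 0 * g x ∂μ) 0 := by
  have hslice (t : ℝ) (ht : t ∈ Icc (-δ) δ) (e : E) (he : e ∈ Q) :
      HasDerivAt (fun t => φ (t, e)) (fderiv ℝ φ (t, e) (1, 0)) t :=
    ((hφ t ht e he).differentiableAt one_ne_zero).hasFDerivAt.comp_hasDerivAt t
      ((hasDerivAt_id t).prodMk (hasDerivAt_const t e))
  have hcont (t : ℝ) (ht : t ∈ Icc (-δ) δ) : ContinuousOn (fun e => φ (t, e)) Q := fun e he =>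
    ((hφ t ht e he).continuousAt.comp (by fun_prop)).continuousWithinAt
  have hderiv : ContinuousOn (fun z => fderiv ℝ φ z (1, 0)) (Icc (-δ) δ ×ˢ Q) := fun z hz =>
    ((((hφ z.1 hz.1 z.2 hz.2).fderiv_right (m := 0) le_rfl).continuousAt).clm_apply
      continuousAt_const).continuousWithinAt
  have hderiv0 : ContinuousOn (fun e => fderiv ℝ φ (0, e) (1, 0)) Q :=
    hderiv.comp (by fun_prop) fun e he => ⟨⟨by linarith, hδ.le⟩, he⟩
  have h0 : (0 : ℝ) ∈ Icc (-δ) δ := ⟨by linarith, hδ.le⟩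
  obtain ⟨C, hC⟩ := (isCompact_Icc.prod hQ).exists_bound_of_continuousOn hderiv
  have hnhds : Icc (-δ) δ ∈ 𝓝 (0 : ℝ) := Icc_mem_nhds (by linarith) hδ
  simp only [fun x => (hslice 0 h0 (p x) (hpQ x)).deriv]
  refine (hasDerivAt_integral_of_dominated_loc_of_deriv_le (bound := fun x => C * ‖g x‖)
    (F' := fun t x => fderiv ℝ φ (t, p x) (1, 0) * g x) hnhds ?_
    (integrable_comp_mul_of_continuousOn hQ (hcont 0 h0) hp hpQ hg)
    (integrable_comp_mul_of_continuousOn hQ hderiv0 hp hpQ hg).aestronglyMeasurable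
    (ae_of_all _ fun x t ht => ?_) (hg.norm.const_mul C)
    (ae_of_all _ fun x t ht => (hslice t ht (p x) (hpQ x)).mul_const (g x))).2
  · filter_upwards [hnhds] with t ht
    exact (integrable_comp_mul_of_continuousOn hQ (hcont t ht) hp hpQ hg).aestronglyMeasurable
  · rw [norm_mul]
    gcongr
    exact hC _ ⟨ht, hpQ x⟩

end ParametricIntegral

section RadialParameters

/-- The tangential stretch `1 + t η` of the radial flow at `z = (t, η, ω ‖ξ‖²)`. -/
def tangentialStretch (z : ℝ × ℝ × ℝ) : ℝ := 1 + z.1 * z.2.1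

/-- The radial stretch `1 + t η - 2 t ω ‖ξ‖²` of the radial flow at `z = (t, η, ω ‖ξ‖²)`. -/
def radialStretch (z : ℝ × ℝ × ℝ) : ℝ := 1 + z.1 * z.2.1 - 2 * z.1 * z.2.2

theorem tangentialStretch_pos {t : ℝ} {e : ℝ × ℝ} (ht : t ∈ Icc (-(1 / 10) : ℝ) (1 / 10))
    (he : e ∈ Icc (0 : ℝ) 1 ×ˢ Icc (0 : ℝ) 2) : 0 < tangentialStretch (t, e) := by
  obtain ⟨⟨h1, h2⟩, -⟩ := he
  simp only [tangentialStretch]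
  nlinarith [ht.1, ht.2]

theorem radialStretch_pos {t : ℝ} {e : ℝ × ℝ} (ht : t ∈ Icc (-(1 / 10) : ℝ) (1 / 10))
    (he : e ∈ Icc (0 : ℝ) 1 ×ˢ Icc (0 : ℝ) 2) : 0 < radialStretch (t, e) := by
  obtain ⟨⟨h1, h2⟩, h3, h4⟩ := he
  simp only [radialStretch]
  nlinarith [ht.1, ht.2]

variable {V : Type*} [NormedAddCommGroup V]

/-- The pair `(η, ω ‖ξ‖²)` at `ξ = x - y`, through which the radial flow stretches lengths. -/
def radialParameters [NormedSpace ℝ V] (r : ℝ) (y x : V) : ℝ × ℝ :=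
  (cutoff r (x - y), cutoffSlope r (x - y) * ‖x - y‖ ^ 2)

theorem radialParameters_mem [NormedSpace ℝ V] (r : ℝ) (y x : V) :
    radialParameters r y x ∈ Icc (0 : ℝ) 1 ×ˢ Icc (0 : ℝ) 2 :=
  ⟨⟨cutoff_nonneg _ _, cutoff_le_one _ _⟩,
    mul_nonneg (cutoffSlope_nonneg _ _) (sq_nonneg _), cutoffSlope_mul_norm_sq_le _ _⟩

theorem continuous_radialParameters [NormedSpace ℝ V] (r : ℝ) (y : V) :
    Continuous (radialParameters r y) := by
  unfold radialParameters
  fun_prop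

variable [InnerProductSpace ℝ V] {t r : ℝ}

theorem det_fderiv_radialFlow [FiniteDimensional ℝ V] (ht : t ∈ Icc (-(1 / 10) : ℝ) (1 / 10))
    (r : ℝ) (y x : V) :
    |(rankOne (1 + t * cutoff r (x - y)) (-(2 * t * cutoffSlope r (x - y))) (x - y)).det| =
      tangentialStretch (t, radialParameters r y x) ^ Module.finrank ℝ V /
        tangentialStretch (t, radialParameters r y x) *
        radialStretch (t, radialParameters r y x) := by
  have hα := tangentialStretch_pos ht (radialParameters_mem r y x)
  have hγ := radialStretch_pos ht (radialParameters_mem r y x)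
  rw [← abs_of_pos (mul_pos (div_pos (pow_pos hα (Module.finrank ℝ V)) hα) hγ)]
  simp only [tangentialStretch, radialStretch, radialParameters] at hα ⊢
  rw [det_rankOne hα.ne']
  congr 1
  field_simp
  ring

theorem gradient_comp_radialHomeo_symm [CompleteSpace V] (ht : |t| ≤ 1 / 10) (r : ℝ) (y : V)
    {u : V → ℝ} {x : V} (hu : DifferentiableAt ℝ u x) :
    tangentialStretch (t, radialParameters r y x) ^ 2 *
        ‖gradient (u ∘ (radialHomeo ht r y).symm) (radialHomeo ht r y x)‖ ^ 2 =
      ‖gradient u x‖ ^ 2 + (4 * t + 4 * t ^ 2 * (radialParameters r y x).2 /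
          radialStretch (t, radialParameters r y x)) / radialStretch (t, radialParameters r y x) *
        (cutoffSlope r (x - y) * inner ℝ (x - y) (gradient u x) ^ 2) := by
  have hα := (tangentialStretch_pos (abs_le.1 ht) (radialParameters_mem r y x)).ne'
  have hγ := (radialStretch_pos (abs_le.1 ht) (radialParameters_mem r y x)).ne'
  have hγ_eq : radialStretch (t, radialParameters r y x) =
      tangentialStretch (t, radialParameters r y x) +
        -(2 * t * cutoffSlope r (x - y)) * ‖x - y‖ ^ 2 := by
    simp only [radialStretch, tangentialStretch, radialParameters]
    ring
  have hsymm := hasFDerivAt_symm_of_rankOne (h := radialHomeo ht r y) hα (hγ_eq ▸ hγ)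
    (hasFDerivAt_radialFlow t r y x)
  rw [gradient_comp_rankOne (by rwa [Homeomorph.symm_apply_apply]) hsymm,
    Homeomorph.symm_apply_apply, norm_rankOne_apply_sq, ← hγ_eq]
  simp only [radialParameters] at hα hγ ⊢
  field_simp
  ring

/-- The volume distortion `α ^ n α⁻ʲ γ` built from the tangential and radial stretches. -/
def volumeDistortion (n j : ℕ) (z : ℝ × ℝ × ℝ) : ℝ :=
  tangentialStretch z ^ n / tangentialStretch z ^ j * radialStretch z

/-- The coefficient of `ω ⟨ξ, ∇u⟩²` in the energy density transported by the radial flow. -/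
def radialDistortion (n : ℕ) (z : ℝ × ℝ × ℝ) : ℝ :=
  tangentialStretch z ^ n / tangentialStretch z ^ 3 *
    (4 * z.1 + 4 * z.1 ^ 2 * z.2.2 / radialStretch z)

theorem contDiffAt_volumeDistortion (n j : ℕ) {z : ℝ × ℝ × ℝ} (hα : tangentialStretch z ≠ 0) :
    ContDiffAt ℝ 1 (volumeDistortion n j) z := by
  have hne := pow_ne_zero j hα
  unfold volumeDistortion tangentialStretch radialStretch at *
  fun_prop (disch := assumption)

theorem contDiffAt_radialDistortion (n : ℕ) {z : ℝ × ℝ × ℝ} (hα : tangentialStretch z ≠ 0)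
    (hγ : radialStretch z ≠ 0) : ContDiffAt ℝ 1 (radialDistortion n) z := by
  have hne := pow_ne_zero 3 hα
  unfold radialDistortion tangentialStretch radialStretch at *
  fun_prop (disch := assumption)

theorem deriv_volumeDistortion (n j : ℕ) (e : ℝ × ℝ) :
    deriv (fun t => volumeDistortion n j (t, e)) 0 = (n - j + 1) * e.1 - 2 * e.2 := by
  have hα : HasDerivAt (fun t => tangentialStretch (t, e)) e.1 0 := by
    simpa [tangentialStretch] using ((hasDerivAt_id (0 : ℝ)).mul_const e.1).const_add 1
  have hγ : HasDerivAt (fun t => radialStretch (t, e)) (e.1 - 2 * e.2) 0 := by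
    simpa [radialStretch, tangentialStretch] using hα.fun_sub
      (((hasDerivAt_id (0 : ℝ)).const_mul 2).mul_const e.2)
  refine (((hα.pow n).div (hα.pow j) (by simp [tangentialStretch])).mul hγ).deriv.trans ?_
  simp [tangentialStretch, radialStretch]
  ring

theorem deriv_radialDistortion (n : ℕ) (e : ℝ × ℝ) :
    deriv (fun t => radialDistortion n (t, e)) 0 = 4 := by
  have hα : DifferentiableAt ℝ (fun t => tangentialStretch (t, e) ^ n /
      tangentialStretch (t, e) ^ 3) 0 := by
    unfold tangentialStretch
    fun_prop (disch := simp)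
  have hquot : DifferentiableAt ℝ (fun t => e.2 / radialStretch (t, e)) 0 := by
    unfold radialStretch
    fun_prop (disch := simp)
  have hlin := (hasDerivAt_id (0 : ℝ)).const_mul 4
  have hsq := (((hasDerivAt_id (0 : ℝ)).pow 2).const_mul 4).mul hquot.hasDerivAt
  have hprod := hα.hasDerivAt.mul (hlin.add hsq)
  refine (hprod.congr_of_eventuallyEq (Eventually.of_forall fun t => ?_)).deriv.trans ?_
  · simp [radialDistortion, mul_div_assoc]
  · simp [tangentialStretch]

end RadialParameters

section Transport
variable {m : ℕ} {t r : ℝ}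

theorem locallyLipschitzOn_comp_homeomorph_symm {X : Type*} [MetricSpace X] {h : X ≃ₜ X} {C : ℝ≥0}
    (hC : LipschitzWith C h.symm) {s : Set X} {u : X → ℝ} (hu : LocallyLipschitzOn sᶜ u) :
    LocallyLipschitzOn (h '' s)ᶜ (u ∘ h.symm) := by
  intro z hz
  rw [← image_compl_eq h.bijective, ← Homeomorph.preimage_symm] at hz ⊢
  obtain ⟨K, w, hw, hK⟩ := hu hz
  exact ⟨K * C, h.symm ⁻¹' w, h.symm.continuous.continuousWithinAt.tendsto_nhdsWithin
    (mapsTo_preimage _ _) hw, hK.comp (hC.lipschitzOnWith) (mapsTo_preimage _ _)⟩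

theorem norm_gradient_comp_le {V : Type*} [NormedAddCommGroup V] [InnerProductSpace ℝ V]
    [CompleteSpace V] {u : V → ℝ} {g : V → V} {z : V} {C : ℝ≥0} (hC : LipschitzWith C g)
    (hg : DifferentiableAt ℝ g z) (hu : DifferentiableAt ℝ u (g z)) :
    ‖gradient (u ∘ g) z‖ ≤ C * ‖gradient u (g z)‖ := by
  rw [gradient, gradient, LinearIsometryEquiv.norm_map, LinearIsometryEquiv.norm_map,
    fderiv_comp z hu hg, mul_comm]
  exact (ContinuousLinearMap.opNorm_comp_le _ _).trans
    (mul_le_mul_of_nonneg_left (hg.hasFDerivAt.le_of_lipschitz hC) (norm_nonneg _))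

theorem differentiableAt_radialHomeo_symm {V : Type*} [NormedAddCommGroup V]
    [InnerProductSpace ℝ V] [CompleteSpace V] (ht : |t| ≤ 1 / 10) (r : ℝ) (y z : V) :
    DifferentiableAt ℝ (radialHomeo ht r y).symm z := by
  obtain ⟨x, rfl⟩ := (radialHomeo ht r y).surjective z
  have hγ : 1 + t * cutoff r (x - y) + -(2 * t * cutoffSlope r (x - y)) * ‖x - y‖ ^ 2 ≠ 0 := by
    convert (radialStretch_pos (abs_le.1 ht) (radialParameters_mem r y x)).ne' using 1
    simp only [radialStretch, radialParameters]
    ring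
  exact (hasFDerivAt_symm_of_rankOne
    (tangentialStretch_pos (abs_le.1 ht) (radialParameters_mem r y x)).ne' hγ
    (hasFDerivAt_radialFlow t r y x)).differentiableAt

theorem MSPair.locallyL2_gradient_comp_radialHomeo_symm {n : ℕ} {P : MSPair n}
    (hK : volume P.K = 0) (ht : |t| ≤ 1 / 10) (r : ℝ) (y : Rn n) :
    LocallyL2 (gradient (P.u ∘ (radialHomeo ht r y).symm)) volume := fun x R => by
  have hflow : LipschitzWith _ (radialHomeo ht r y) := lipschitzWith_radialFlow ht r y
  refine (((MSPair.locallyL2_gradient hK).comp_symm hflow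
    (lipschitzWith_radialHomeo_symm ht r y) two_ne_zero) x R).of_le_mul (c := 2)
    (measurable_gradient _).aestronglyMeasurable (ae_restrict_of_ae ?_)
  filter_upwards [ae_comp_symm hflow (MSPair.ae_differentiableAt hK)] with z hz
  exact norm_gradient_comp_le (lipschitzWith_radialHomeo_symm ht r y)
    (differentiableAt_radialHomeo_symm ht r y z) hz

theorem MSPair.integrable_cutoffSlope_mul_inner_sq {n : ℕ} {P : MSPair n} (hK : volume P.K = 0)
    (hr : 0 < r) (y : Rn n) :
    Integrable fun x => cutoffSlope r (x - y) * inner ℝ (x - y) (gradient P.u x) ^ 2 := by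
  have hL2 : LocallyL2 (fun x => inner ℝ (x - y) (gradient P.u x)) volume :=
    LocallyL2.inner_continuous (by fun_prop) (MSPair.locallyL2_gradient hK)
  simpa only [Real.norm_eq_abs, sq_abs] using
    integrable_cutoffSlope_mul hL2.locallyIntegrable_norm_sq hr y

theorem integrable_comp_radialParameters_mul {V : Type*} [NormedAddCommGroup V] [NormedSpace ℝ V]
    [MeasurableSpace V] [BorelSpace V] {μ : Measure V} {φ : ℝ × ℝ × ℝ → ℝ} {g : V → ℝ}
    (hφ : ∀ e ∈ Icc (0 : ℝ) 1 ×ˢ Icc (0 : ℝ) 2, ContDiffAt ℝ 1 φ (t, e)) (r : ℝ) (y : V)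
    (hg : Integrable g μ) : Integrable (fun x => φ (t, radialParameters r y x) * g x) μ :=
  integrable_comp_mul_of_continuousOn (f := fun e => φ (t, e)) (isCompact_Icc.prod isCompact_Icc)
    (fun e he => ((hφ e he).continuousAt.comp (by fun_prop)).continuousWithinAt)
    (continuous_radialParameters r y).measurable (radialParameters_mem r y) hg

theorem hasDerivAt_integral_comp_radialParameters_mul {V : Type*} [NormedAddCommGroup V]
    [NormedSpace ℝ V] [MeasurableSpace V] [BorelSpace V] {μ : Measure V} {φ : ℝ × ℝ × ℝ → ℝ}
    {g : V → ℝ} (hφ : ∀ t ∈ Icc (-(1 / 10) : ℝ) (1 / 10), ∀ e ∈ Icc (0 : ℝ) 1 ×ˢ Icc (0 : ℝ) 2,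
      ContDiffAt ℝ 1 φ (t, e)) (r : ℝ) (y : V) (hg : Integrable g μ) :
    HasDerivAt (fun t => ∫ x, φ (t, radialParameters r y x) * g x ∂μ)
      (∫ x, deriv (fun t => φ (t, radialParameters r y x)) 0 * g x ∂μ) 0 :=
  hasDerivAt_integral_comp_mul (isCompact_Icc.prod isCompact_Icc) (by norm_num) hφ
    (continuous_radialParameters r y).measurable (radialParameters_mem r y) hg

theorem MSPair.integral_norm_gradient_comp_radialHomeo_symm_sq {n : ℕ} {P : MSPair n}
    (hK : volume P.K = 0) (ht : |t| ≤ 1 / 10) (hr : 0 < r) (y : Rn n) :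
    ∫ x in ball y r, ‖gradient (P.u ∘ (radialHomeo ht r y).symm) x‖ ^ 2 =
      (∫ x in ball y r, volumeDistortion n 3 (t, radialParameters r y x) * ‖gradient P.u x‖ ^ 2) +
      ∫ x in ball y r, radialDistortion n (t, radialParameters r y x) *
        (cutoffSlope r (x - y) * inner ℝ (x - y) (gradient P.u x) ^ 2) := by
  have htI := abs_le.1 ht
  have hint1 := integrable_comp_radialParameters_mul (φ := volumeDistortion n 3)
    (fun e he => contDiffAt_volumeDistortion n 3 (tangentialStretch_pos htI he).ne') r y
    ((MSPair.locallyL2_gradient hK).integrableOn_norm_sq y r)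
  have hint2 := integrable_comp_radialParameters_mul (φ := radialDistortion n)
    (fun e he => contDiffAt_radialDistortion n (tangentialStretch_pos htI he).ne'
      (radialStretch_pos htI he).ne') r y
    (MSPair.integrable_cutoffSlope_mul_inner_sq hK hr y).integrableOn
      (μ := volume.restrict (ball y r))
  have hcov := integral_image_eq_integral_abs_det_fderiv_smul volume
    (measurableSet_ball (x := y) (ε := r))
    (fun x _ => (hasFDerivAt_radialFlow t r y x).hasFDerivWithinAt)
    (radialHomeo ht r y).injective.injOn
    fun x => ‖gradient (P.u ∘ (radialHomeo ht r y).symm) x‖ ^ 2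
  rw [← integral_add hint1 hint2]
  conv_lhs => rw [← radialHomeo_image_ball ht hr y]
  refine hcov.trans (integral_congr_ae (ae_restrict_of_ae ?_))
  filter_upwards [MSPair.ae_differentiableAt hK] with x hx
  have hα := (tangentialStretch_pos htI (radialParameters_mem r y x)).ne'
  have hγ := (radialStretch_pos htI (radialParameters_mem r y x)).ne'
  have hgrad := gradient_comp_radialHomeo_symm ht r y hx
  rw [radialHomeo_apply] at hgrad
  rw [smul_eq_mul, det_fderiv_radialFlow htI, finrank_euclideanSpace_fin,
    eq_div_of_mul_eq (pow_ne_zero 2 hα) ((mul_comm _ _).trans hgrad), volumeDistortion,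
    radialDistortion]
  field_simp

theorem hausdorffMeasure_radialHomeo_image_toReal (ht : |t| ≤ 1 / 10) (r : ℝ) (b : Rn m)
    {s : Set (Rn m)} (hs : MeasurableSet s) :
    (μH[m] (radialHomeo ht r b '' s)).toReal =
      ∫ a in s, volumeDistortion m 1 (t, radialParameters r b a) ∂μH[m] := by
  have hcov := integral_image_eq_integral_abs_det_fderiv_smul μH[m] hs
    (fun a _ => (hasFDerivAt_radialFlow t r b a).hasFDerivWithinAt)
    (radialHomeo ht r b).injective.injOn fun _ => (1 : ℝ)
  simp only [setIntegral_const, smul_eq_mul, mul_one] at hcov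
  refine hcov.trans (integral_congr_ae (ae_of_all _ fun a => ?_))
  simp [det_fderiv_radialFlow (abs_le.1 ht), volumeDistortion]

end Transport

namespace FlatMinimizer
variable {m : ℕ} {P : MSPair (m + 1)} {ι : Rn m →ᵃⁱ[ℝ] Rn (m + 1)} {r : ℝ}

theorem image_preimage_K_inter_ball (h : FlatMinimizer P ι) (b : Rn m) (r : ℝ) :
    ι '' (ι ⁻¹' P.K ∩ ball b r) = P.K ∩ ball (ι b) r := by
  rw [← ι.isometry.preimage_ball, ← preimage_inter, image_preimage_eq_inter_range,
    inter_eq_left.2 (inter_subset_left.trans h.subset_range)]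

theorem radialHomeo_image_eq (h : FlatMinimizer P ι) {t : ℝ} (ht : |t| ≤ 1 / 10) (r : ℝ)
    (b : Rn m) :
    radialHomeo ht r (ι b) '' P.K = ι '' (radialHomeo ht r b '' (ι ⁻¹' P.K)) := by
  conv_lhs => rw [← inter_eq_left.2 h.subset_range, ← image_preimage_eq_inter_range]
  simp only [image_image, radialHomeo_apply, radialFlow_affineIsometry]

theorem hausdorffMeasure_radialHomeo_image (h : FlatMinimizer P ι) {t : ℝ} (ht : |t| ≤ 1 / 10)
    (hr : 0 < r) (b : Rn m) :
    μH[m] (radialHomeo ht r (ι b) '' P.K ∩ ball (ι b) r) =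
      μH[m] (radialHomeo ht r b '' (ι ⁻¹' P.K ∩ ball b r)) := by
  rw [h.radialHomeo_image_eq ht r b, ← radialHomeo_image_inter_ball ht hr,
    ← hausdorffMeasure_affineIsometry_image ι,
    ← ι.isometry.preimage_ball, image_inter_preimage]

end FlatMinimizer

/-- The energy in `B(ι b, r)` of the image of the pair under the radial flow at time `t`, as an
integral over the original pair. -/
def transportedEnergy {m : ℕ} (P : MSPair (m + 1)) (ι : Rn m →ᵃⁱ[ℝ] Rn (m + 1)) (b : Rn m)
    (r t : ℝ) : ℝ :=
  (∫ x in ball (ι b) r,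
      volumeDistortion (m + 1) 3 (t, radialParameters r (ι b) x) * ‖gradient P.u x‖ ^ 2) +
    (∫ x in ball (ι b) r, radialDistortion (m + 1) (t, radialParameters r (ι b) x) *
      (cutoffSlope r (x - ι b) * inner ℝ (x - ι b) (gradient P.u x) ^ 2)) +
    ∫ a in ι ⁻¹' P.K ∩ ball b r, volumeDistortion m 1 (t, radialParameters r b a) ∂μH[m]

/-- The `m`-dimensional measure of `k` weighted by the cutoff of the ball `B(b, r)`. -/
def weightedArea {m : ℕ} (k : Set (Rn m)) (b : Rn m) (r : ℝ) : ℝ :=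
  ∫ a in k, cutoff r (a - b) ∂μH[m]

theorem MSPair.integrable_cutoffSlope_mul_norm_sq {n : ℕ} {P : MSPair n} (hK : volume P.K = 0)
    {r : ℝ} (hr : 0 < r) (y : Rn n) :
    Integrable fun x => cutoffSlope r (x - y) * (‖x - y‖ ^ 2 * ‖gradient P.u x‖ ^ 2) := by
  have hL2 : LocallyL2 (fun x => ‖x - y‖ • gradient P.u x) volume :=
    LocallyL2.continuous_smul (by fun_prop) (MSPair.locallyL2_gradient hK)
  simpa only [norm_smul, norm_norm, mul_pow] using
    integrable_cutoffSlope_mul hL2.locallyIntegrable_norm_sq hr y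

namespace FlatMinimizer
variable {m : ℕ} {P : MSPair (m + 1)} {ι : Rn m →ᵃⁱ[ℝ] Rn (m + 1)} {r : ℝ}

theorem transportedEnergy_zero (h : FlatMinimizer P ι) (b : Rn m) (r : ℝ) :
    transportedEnergy P ι b r 0 =
      (∫ x in ball (ι b) r, ‖gradient P.u x‖ ^ 2) + (μH[m] (P.K ∩ ball (ι b) r)).toReal := by
  rw [← h.image_preimage_K_inter_ball, hausdorffMeasure_affineIsometry_image]
  simp [transportedEnergy, volumeDistortion, radialDistortion, tangentialStretch, radialStretch,
    Measure.real]

theorem energy_le_transportedEnergy (h : FlatMinimizer P ι) (b : Rn m) (hr : 0 < r) {t : ℝ}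
    (ht : |t| ≤ 1 / 10) :
    (∫ x in ball (ι b) r, ‖gradient P.u x‖ ^ 2) + (μH[m] (P.K ∩ ball (ι b) r)).toReal ≤
      transportedEnergy P ι b r t := by
  have hflow : LipschitzWith _ (radialHomeo ht r (ι b)) := lipschitzWith_radialFlow ht r (ι b)
  have hsymm := lipschitzWith_radialHomeo_symm ht r (ι b)
  have hnull : volume (radialHomeo ht r (ι b) '' P.K) = 0 :=
    le_antisymm ((volume_image_le_of_lipschitzWith hflow _).trans (by simp [h.volume_K])) bot_le
  have hfin : μH[m] (radialHomeo ht r (ι b) '' P.K ∩ ball (ι b) r) ≠ ∞ :=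
    ((measure_mono (inter_subset_inter_left _
      (h.radialHomeo_image_eq ht r b ▸ image_subset_range _ _))).trans_lt
      (hausdorffMeasure_range_inter_ball_lt_top ι _ _)).ne
  have hle := h.energy_le ((radialHomeo ht r (ι b)).isClosed_image.2 P.closed)
    (locallyLipschitzOn_comp_homeomorph_symm hsymm P.locallyLipschitzOn_u)
    ((MSPair.locallyL2_u h.volume_K).comp_symm hflow hsymm two_ne_zero)
    (MSPair.locallyL2_gradient_comp_radialHomeo_symm h.volume_K ht r (ι b)) hr
    (radialHomeo_image_diff_ball ht hr _ _)
    (fun x hx _ => congrArg P.u (radialHomeo_symm_of_notMem_ball ht hr hx)) hnull hfin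
  have hmeas := ((P.closed.preimage ι.continuous).measurableSet.inter
    (measurableSet_ball (x := b) (ε := r)))
  rwa [MSPair.integral_norm_gradient_comp_radialHomeo_symm_sq h.volume_K ht hr,
    h.hausdorffMeasure_radialHomeo_image ht hr,
    hausdorffMeasure_radialHomeo_image_toReal ht r b hmeas] at hle

theorem hasDerivAt_transportedEnergy (h : FlatMinimizer P ι) (b : Rn m) (hr : 0 < r) :
    HasDerivAt (transportedEnergy P ι b r)
      ((∫ x in ball (ι b) r, ((m - 1) * cutoff r (x - ι b) -
          2 * (cutoffSlope r (x - ι b) * ‖x - ι b‖ ^ 2)) * ‖gradient P.u x‖ ^ 2) +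
        (∫ x in ball (ι b) r,
          4 * (cutoffSlope r (x - ι b) * inner ℝ (x - ι b) (gradient P.u x) ^ 2)) +
        ∫ a in ι ⁻¹' P.K ∩ ball b r, (m * cutoff r (a - b) -
          2 * (cutoffSlope r (a - b) * ‖a - b‖ ^ 2)) ∂μH[m]) 0 := by
  have hdirichlet := hasDerivAt_integral_comp_radialParameters_mul
    (φ := volumeDistortion (m + 1) 3) (fun t ht e he => contDiffAt_volumeDistortion _ 3
      (tangentialStretch_pos ht he).ne') r (ι b)
    ((MSPair.locallyL2_gradient h.volume_K).integrableOn_norm_sq (ι b) r)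
  have hradial := hasDerivAt_integral_comp_radialParameters_mul
    (φ := radialDistortion (m + 1)) (fun t ht e he => contDiffAt_radialDistortion _
      (tangentialStretch_pos ht he).ne' (radialStretch_pos ht he).ne') r (ι b)
    ((MSPair.integrable_cutoffSlope_mul_inner_sq h.volume_K hr (ι b)).integrableOn
      (s := ball (ι b) r))
  have harea := hasDerivAt_integral_comp_radialParameters_mul
    (φ := volumeDistortion m 1) (fun t ht e he => contDiffAt_volumeDistortion _ 1
      (tangentialStretch_pos ht he).ne') r b (μ := μH[m].restrict (ι ⁻¹' P.K ∩ ball b r))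
    (integrableOn_const (C := (1 : ℝ)) (measure_ne_top_of_subset inter_subset_right
      measure_ball_lt_top.ne))
  simp only [deriv_volumeDistortion, deriv_radialDistortion, mul_one] at hdirichlet hradial harea
  convert! (hdirichlet.add hradial).add harea using 4
  · simp [radialParameters]; ring_nf
  · simp [radialParameters]

theorem deriv_transportedEnergy_eq_zero (h : FlatMinimizer P ι) (b : Rn m) (hr : 0 < r) :
    (∫ x, ((m - 1) * cutoff r (x - ι b) -
          2 * (cutoffSlope r (x - ι b) * ‖x - ι b‖ ^ 2)) * ‖gradient P.u x‖ ^ 2) +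
        (∫ x, 4 * (cutoffSlope r (x - ι b) * inner ℝ (x - ι b) (gradient P.u x) ^ 2)) +
        ∫ a in ι ⁻¹' P.K, (m * cutoff r (a - b) -
          2 * (cutoffSlope r (a - b) * ‖a - b‖ ^ 2)) ∂μH[m] = 0 := by
  have hmin : IsLocalMin (transportedEnergy P ι b r) 0 := by
    filter_upwards [Metric.closedBall_mem_nhds (0 : ℝ) (by norm_num : (0 : ℝ) < 1 / 10)] with t ht
    rw [h.transportedEnergy_zero]
    exact h.energy_le_transportedEnergy b hr (by simpa using ht)
  have hzero := hmin.hasDerivAt_eq_zero (h.hasDerivAt_transportedEnergy b hr)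
  have hk : MeasurableSet (ι ⁻¹' P.K) := (P.closed.preimage ι.continuous).measurableSet
  have hball (f : Rn (m + 1) → ℝ) (hf : ∀ x ∉ ball (ι b) r, f x = 0) :
      ∫ x in ball (ι b) r, f x = ∫ x, f x :=
    setIntegral_eq_integral_of_forall_compl_eq_zero hf
  rw [hball _ fun x hx => by simp [cutoff_sub_eq_zero hr hx, cutoffSlope_sub_eq_zero hr hx],
    hball _ fun x hx => by simp [cutoffSlope_sub_eq_zero hr hx],
    ← setIntegral_eq_of_subset_of_forall_sdiff_eq_zero hk inter_subset_left fun a ha => by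
      have ha' : a ∉ ball b r := fun hb => ha.2 ⟨ha.1, hb⟩
      simp [cutoff_sub_eq_zero hr ha', cutoffSlope_sub_eq_zero hr ha']] at hzero
  exact hzero

theorem inner_variation (h : FlatMinimizer P ι) (b : Rn m) (hr : 0 < r) :
    (m - 1) * weightedDirichlet P (ι b) r + m * weightedArea (ι ⁻¹' P.K) b r +
        4 * ∫ x, cutoffSlope r (x - ι b) * inner ℝ (x - ι b) (gradient P.u x) ^ 2 =
      2 * (∫ x, cutoffSlope r (x - ι b) * (‖x - ι b‖ ^ 2 * ‖gradient P.u x‖ ^ 2)) +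
        2 * ∫ a in ι ⁻¹' P.K, cutoffSlope r (a - b) * ‖a - b‖ ^ 2 ∂μH[m] := by
  have hzero := h.deriv_transportedEnergy_eq_zero b hr
  have hdirichlet : Integrable fun x => cutoff r (x - ι b) * ‖gradient P.u x‖ ^ 2 :=
    integrable_cutoff_mul (MSPair.locallyL2_gradient h.volume_K).locallyIntegrable_norm_sq hr (ι b)
  have harea : Integrable (fun a : Rn m => cutoff r (a - b)) μH[m] := by
    simpa using integrable_cutoff_mul (μ := μH[m]) (locallyIntegrable_const (1 : ℝ)) hr b
  have hslope : Integrable (fun a : Rn m => cutoffSlope r (a - b) * ‖a - b‖ ^ 2) μH[m] :=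
    integrable_cutoffSlope_mul (Continuous.locallyIntegrable (by fun_prop)) hr b
  have hdensity (x : Rn (m + 1)) : ((m - 1) * cutoff r (x - ι b) -
      2 * (cutoffSlope r (x - ι b) * ‖x - ι b‖ ^ 2)) * ‖gradient P.u x‖ ^ 2 =
      (m - 1) * (cutoff r (x - ι b) * ‖gradient P.u x‖ ^ 2) -
        2 * (cutoffSlope r (x - ι b) * (‖x - ι b‖ ^ 2 * ‖gradient P.u x‖ ^ 2)) := by
    ring
  simp only [hdensity] at hzero
  rw [integral_sub (hdirichlet.const_mul _)
      ((MSPair.integrable_cutoffSlope_mul_norm_sq h.volume_K hr (ι b)).const_mul _),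
    integral_sub (harea.integrableOn.const_mul _) (hslope.integrableOn.const_mul _)] at hzero
  simp only [integral_const_mul] at hzero
  rw [weightedDirichlet, weightedArea]
  linarith

end FlatMinimizer

/-! ### The height function along rays -/

theorem hasDerivAt_integral_cutoff_mul {V : Type*} [NormedAddCommGroup V] [NormedSpace ℝ V]
    [MeasurableSpace V] [BorelSpace V] [ProperSpace V] {μ : Measure V} {f : V → ℝ}
    (hf : LocallyIntegrable f μ) (y : V) {r : ℝ} (hr : 0 < r) :
    HasDerivAt (fun r => ∫ x, cutoff r (x - y) * f x ∂μ)
      (∫ x, 2 * cutoffSlope r (x - y) * ‖x - y‖ ^ 2 / r * f x ∂μ) r := by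
  have hpos : ∀ s ∈ ball r (r / 2), r / 2 < s ∧ s < 2 * r := fun s hs => by
    rw [mem_ball, Real.dist_eq, abs_lt] at hs
    constructor <;> linarith
  have hbound : Integrable ((ball y (2 * r)).indicator fun x => 8 / r * ‖f x‖) μ :=
    (integrable_indicator_iff measurableSet_ball).2
      ((((hf.integrableOn_isCompact (isCompact_closedBall y (2 * r))).mono_set
        ball_subset_closedBall).norm).const_mul _)
  refine (hasDerivAt_integral_of_dominated_loc_of_deriv_le
    (F := fun r x => cutoff r (x - y) * f x)
    (F' := fun r x => 2 * cutoffSlope r (x - y) * ‖x - y‖ ^ 2 / r * f x)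
    (ball_mem_nhds r (half_pos hr)) (Eventually.of_forall fun s => ?_)
    (integrable_cutoff_mul hf hr y) ?_ (ae_of_all _ fun x s hs => ?_) hbound
    (ae_of_all _ fun x s hs => ?_)).2
  · exact Continuous.aestronglyMeasurable (by fun_prop) |>.mul hf.aestronglyMeasurable
  · exact Continuous.aestronglyMeasurable (by fun_prop) |>.mul hf.aestronglyMeasurable
  · obtain ⟨hlow, hhigh⟩ := hpos s hs
    have hs0 : 0 < s := (half_pos hr).trans hlow
    by_cases hx : x ∈ ball y (2 * r)
    · rw [indicator_of_mem hx, norm_mul]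
      refine mul_le_mul_of_nonneg_right ?_ (norm_nonneg _)
      have hslope := cutoffSlope_nonneg s (x - y)
      have hle := cutoffSlope_mul_norm_sq_le s (x - y)
      rw [Real.norm_of_nonneg (by positivity), div_le_div_iff₀ hs0 hr]
      nlinarith
    · have hxs : x ∉ ball y s := fun h => hx (ball_subset_ball hhigh.le h)
      simp [cutoffSlope_sub_eq_zero hs0 hxs, indicator_of_notMem hx]
  · exact (hasDerivAt_cutoff_radius ((half_pos hr).trans (hpos s hs).1) _).mul_const _

theorem tent_eq_cutoffSlope {V : Type*} [NormedAddCommGroup V] [NormedSpace ℝ V] (y ξ : V)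
    {s : ℝ} (hs : 0 < s) : tent ξ = s ^ 2 / 2 * cutoffSlope s (y + s • ξ - y) := by
  rw [cutoffSlope, add_sub_cancel_left, inv_smul_smul₀ hs.ne']
  field_simp

section Homothety
variable {V : Type*} [NormedAddCommGroup V] [NormedSpace ℝ V] [FiniteDimensional ℝ V]
  [MeasurableSpace V] [BorelSpace V] {μ : Measure V} [μ.IsAddHaarMeasure]

theorem integral_comp_add_smul {E : Type*} [NormedAddCommGroup E] [NormedSpace ℝ E] (g : V → E)
    (y : V) {s : ℝ} (hs : 0 < s) :
    ∫ ξ, g (y + s • ξ) ∂μ = (s ^ Module.finrank ℝ V)⁻¹ • ∫ x, g x ∂μ := by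
  rw [Measure.integral_comp_smul μ (fun x => g (y + x)) s, integral_add_left_eq_self,
    abs_of_pos (by positivity)]

theorem integrable_comp_add_smul {E : Type*} [NormedAddCommGroup E] {g : V → E}
    (hg : Integrable g μ) (y : V) {s : ℝ} (hs : s ≠ 0) : Integrable (fun ξ => g (y + s • ξ)) μ :=
  (integrable_comp_smul_iff μ (fun x => g (y + x)) hs).2 (hg.comp_add_left y)

theorem quasiMeasurePreserving_add_smul (y : V) {s : ℝ} (hs : s ≠ 0) :
    Measure.QuasiMeasurePreserving (fun ξ : V => y + s • ξ) μ μ :=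
  (measurePreserving_add_left μ y).quasiMeasurePreserving.comp
    (Measure.quasiMeasurePreserving_smul μ hs)

theorem quasiMeasurePreserving_add_smul_prod {I : Set ℝ} (hI : MeasurableSet I)
    (hI0 : ∀ s ∈ I, s ≠ 0) (y : V) :
    Measure.QuasiMeasurePreserving (fun z : ℝ × V => y + z.1 • z.2)
      ((volume.restrict I).prod μ) μ :=
  QuasiMeasurePreserving.prod_of_right (by fun_prop) ((ae_restrict_iff' hI).2
    (ae_of_all _ fun s hs => quasiMeasurePreserving_add_smul y (hI0 s hs)))

theorem ae_ray_of_ae {q : V → Prop} (hq : ∀ᵐ x ∂μ, q x) {I : Set ℝ} (hI : MeasurableSet I)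
    (hI0 : ∀ s ∈ I, s ≠ 0) (y : V) : ∀ᵐ ξ ∂μ, ∀ᵐ s, s ∈ I → q (y + s • ξ) := by
  have hprod := (quasiMeasurePreserving_add_smul_prod hI hI0 y).ae hq
  have hswap := Measure.measurePreserving_swap (μ := μ) (ν := volume.restrict I)
  filter_upwards [Measure.ae_ae_of_ae_prod (hswap.quasiMeasurePreserving.ae hprod)] with ξ hξ
  exact (ae_restrict_iff' hI).1 hξ

theorem integrable_comp_add_smul_prod {g : V → ℝ} (hg : Integrable g μ) (y : V) {r₁ r₂ : ℝ}
    (hr₁ : 0 < r₁) :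
    Integrable (fun z : ℝ × V => g (y + z.1 • z.2)) ((volume.restrict (Ioc r₁ r₂)).prod μ) := by
  have hpos : ∀ s ∈ Ioc r₁ r₂, 0 < s := fun s hs => hr₁.trans hs.1
  have hmeas := hg.aestronglyMeasurable.comp_quasiMeasurePreserving
    (quasiMeasurePreserving_add_smul_prod measurableSet_Ioc (fun s hs => (hpos s hs).ne') y)
  refine (integrable_prod_iff hmeas).2 ⟨(ae_restrict_iff' measurableSet_Ioc).2
    (ae_of_all _ fun s hs => integrable_comp_add_smul hg y (hpos s hs).ne'), ?_⟩
  refine Integrable.mono' (integrable_const ((r₁ ^ Module.finrank ℝ V)⁻¹ * ∫ x, ‖g x‖ ∂μ))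
    hmeas.norm.integral_prod_right' ((ae_restrict_iff' measurableSet_Ioc).2
      (ae_of_all _ fun s hs => ?_))
  rw [Real.norm_of_nonneg (integral_nonneg fun _ => norm_nonneg _)]
  refine (integral_comp_add_smul (fun x => ‖g x‖) y (hpos s hs)).trans_le ?_
  refine mul_le_mul_of_nonneg_right ?_ (integral_nonneg fun _ => norm_nonneg _)
  exact inv_anti₀ (by positivity) (pow_le_pow_left₀ hr₁.le hs.1.le _)

theorem integrable_tent_mul_comp {f : V → ℝ} (hf : LocallyIntegrable f μ) (y : V) {s : ℝ}
    (hs : 0 < s) : Integrable (fun ξ => tent ξ * f (y + s • ξ)) μ := by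
  simp only [tent_eq_cutoffSlope y _ hs, mul_assoc]
  exact (integrable_comp_add_smul (integrable_cutoffSlope_mul hf hs y) y hs.ne').const_mul _

theorem integral_tent_mul_comp (f : V → ℝ) (y : V) {s : ℝ} (hs : 0 < s) :
    ∫ ξ, tent ξ * f (y + s • ξ) ∂μ =
      s ^ 2 / (2 * s ^ Module.finrank ℝ V) * ∫ x, cutoffSlope s (x - y) * f x ∂μ := by
  simp only [tent_eq_cutoffSlope y _ hs, mul_assoc]
  rw [integral_const_mul, integral_comp_add_smul (fun x => cutoffSlope s (x - y) * f x) y hs,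
    smul_eq_mul]
  field_simp

theorem integrable_tent_mul_ray_prod {g : V → ℝ} (hg : LocallyIntegrable g μ) (y : V) {r₁ r₂ : ℝ}
    (hr₁ : 0 < r₁) :
    Integrable (fun z : ℝ × V => z.1⁻¹ * (tent z.2 * g (y + z.1 • z.2)))
      ((volume.restrict (Ioc r₁ r₂)).prod μ) := by
  have hball : Integrable ((ball y r₂).indicator g) μ :=
    (integrable_indicator_iff measurableSet_ball).2
      ((hg.integrableOn_isCompact (isCompact_closedBall y r₂)).mono_set ball_subset_closedBall)
  have hmem : ∀ᵐ z ∂(volume.restrict (Ioc r₁ r₂)).prod μ, z.1 ∈ Ioc r₁ r₂ :=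
    Measure.quasiMeasurePreserving_fst.ae (ae_restrict_mem measurableSet_Ioc)
  have hweight : ∀ᵐ z ∂(volume.restrict (Ioc r₁ r₂)).prod μ, ‖z.1⁻¹ * tent z.2‖ ≤ r₁⁻¹ := by
    filter_upwards [hmem] with z hz
    have hinv : 0 < z.1⁻¹ := inv_pos.2 (hr₁.trans hz.1)
    rw [Real.norm_of_nonneg (mul_nonneg hinv.le (tent_nonneg _))]
    exact (mul_le_of_le_one_right hinv.le (tent_le_one _)).trans (inv_anti₀ hr₁ hz.1.le)
  have hmeas : Measurable fun z : ℝ × V => z.1⁻¹ * tent z.2 :=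
    measurable_fst.inv.mul (continuous_tent.measurable.comp measurable_snd)
  refine ((integrable_comp_add_smul_prod hball y hr₁).bdd_mul hmeas.aestronglyMeasurable
    hweight).congr ?_
  filter_upwards [hmem] with z hz
  by_cases hball : y + z.1 • z.2 ∈ ball y r₂
  · rw [indicator_of_mem hball, mul_assoc]
  · have hz0 : 0 < z.1 := hr₁.trans hz.1
    have hnorm : r₂ ≤ z.1 * ‖z.2‖ := by
      simpa [norm_smul, abs_of_pos hz0] using hball
    have htent : tent z.2 = 0 :=
      tent_eq_zero (le_of_mul_le_mul_left (by linarith [hz.2]) hz0)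
    simp [htent]

theorem integral_tent_mul_comp_sub {f g : V → ℝ} (hf : LocallyIntegrable f μ)
    (hg : LocallyIntegrable g μ) (y : V) {r₁ r₂ : ℝ} (hr₁ : 0 < r₁) (hr : r₁ ≤ r₂)
    (hfg : ∀ᵐ ξ ∂μ, f (y + r₂ • ξ) - f (y + r₁ • ξ) = ∫ s in r₁..r₂, s⁻¹ * g (y + s • ξ)) :
    (∫ ξ, tent ξ * f (y + r₂ • ξ) ∂μ) - ∫ ξ, tent ξ * f (y + r₁ • ξ) ∂μ =
      ∫ s in r₁..r₂, s⁻¹ * ∫ ξ, tent ξ * g (y + s • ξ) ∂μ := by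
  calc (∫ ξ, tent ξ * f (y + r₂ • ξ) ∂μ) - ∫ ξ, tent ξ * f (y + r₁ • ξ) ∂μ
      = ∫ ξ, (∫ s in Ioc r₁ r₂, s⁻¹ * (tent ξ * g (y + s • ξ))) ∂μ := by
        rw [← integral_sub (integrable_tent_mul_comp hf y (hr₁.trans_le hr))
          (integrable_tent_mul_comp hf y hr₁)]
        refine integral_congr_ae ?_
        filter_upwards [hfg] with ξ hξ
        simp only [← mul_sub, hξ, intervalIntegral.integral_of_le hr, ← integral_const_mul,
          mul_left_comm]
    _ = ∫ s in Ioc r₁ r₂, ∫ ξ, s⁻¹ * (tent ξ * g (y + s • ξ)) ∂μ :=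
        integral_integral_swap (f := fun ξ s => s⁻¹ * (tent ξ * g (y + s • ξ)))
          (integrable_tent_mul_ray_prod hg y hr₁).swap
    _ = ∫ s in r₁..r₂, s⁻¹ * ∫ ξ, tent ξ * g (y + s • ξ) ∂μ := by
        simp only [integral_const_mul, intervalIntegral.integral_of_le hr]

end Homothety

section Ray
variable {V : Type*} [NormedAddCommGroup V] [InnerProductSpace ℝ V] {u : V → ℝ} {y ξ : V}

theorem hasDerivAt_comp_ray [CompleteSpace V] {s : ℝ} (hu : DifferentiableAt ℝ u (y + s • ξ)) :
    HasDerivAt (fun s : ℝ => u (y + s • ξ)) (inner ℝ ξ (gradient u (y + s • ξ))) s := by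
  have hray : HasDerivAt (fun s : ℝ => y + s • ξ) ξ s := by
    simpa using ((hasDerivAt_id s).smul_const ξ).const_add y
  have hcomp := hu.hasGradientAt.hasFDerivAt.comp_hasDerivAt s hray
  rwa [InnerProductSpace.toDual_apply_apply, real_inner_comm] at hcomp

theorem absolutelyContinuousOnInterval_comp_ray {U : Set V} (hu : LocallyLipschitzOn U u)
    {r₁ r₂ : ℝ} (hU : ∀ s ∈ uIcc r₁ r₂, y + s • ξ ∈ U) :
    AbsolutelyContinuousOnInterval (fun s : ℝ => u (y + s • ξ)) r₁ r₂ := by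
  have hlip : LipschitzWith ‖ξ‖₊ (fun s : ℝ => y + s • ξ) :=
    LipschitzWith.of_dist_le_mul fun s t => by
      rw [dist_add_left, dist_eq_norm, ← sub_smul, norm_smul, Real.dist_eq, mul_comm]
      rfl
  obtain ⟨C, hC⟩ := LocallyLipschitzOn.exists_lipschitzOnWith_of_compact
    (isCompact_uIcc.image hlip.continuous) (hu.mono (image_subset_iff.2 hU))
  exact (hC.comp hlip.lipschitzOnWith (mapsTo_image _ _)).absolutelyContinuousOnInterval

theorem sq_sub_comp_ray_sub [CompleteSpace V] {U : Set V} (hu : LocallyLipschitzOn U u)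
    {r₁ r₂ : ℝ} (hU : ∀ s ∈ uIcc r₁ r₂, y + s • ξ ∈ U)
    (hdiff : ∀ᵐ s, s ∈ uIoc r₁ r₂ → DifferentiableAt ℝ u (y + s • ξ)) (c : ℝ) :
    (u (y + r₂ • ξ) - c) ^ 2 - (u (y + r₁ • ξ) - c) ^ 2 =
      ∫ s in r₁..r₂, 2 * (u (y + s • ξ) - c) * inner ℝ ξ (gradient u (y + s • ξ)) := by
  have hac := (absolutelyContinuousOnInterval_comp_ray hu hU).sub
    (LipschitzWith.const c).lipschitzOnWith.absolutelyContinuousOnInterval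
  have hftc := (hac.mul hac).integral_deriv_eq_sub
  simp only [Pi.mul_apply, Pi.sub_apply] at hftc
  rw [sq, sq, ← hftc]
  refine intervalIntegral.integral_congr_ae ?_
  filter_upwards [hdiff] with s hs hsI
  have hderiv := (hasDerivAt_comp_ray (hs hsI)).sub_const c
  refine (hderiv.mul hderiv).deriv.trans ?_
  ring

end Ray

/-! ### Monotonicity of the Weiss energy -/

/-- The mean of `(u - c) ^ 2` over the ball of radius `r` around `y`, weighted by the tent
function; the normalization makes its derivative `2 * weightedDirichlet P y r / r ^ m` for
minimizers in `ℝ ^ (m + 1)`. -/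
def height {N : ℕ} (P : MSPair N) (y : Rn N) (c r : ℝ) : ℝ :=
  4 * ∫ ξ, tent ξ * (P.u (y + r • ξ) - c) ^ 2

/-- The Weiss-type energy of `(u, K)` at the point `ι b` of the carrying hyperplane: the rescaled
Mumford–Shah energy minus the boundary term that makes it monotone in `r`. -/
def weissEnergy {m : ℕ} (P : MSPair (m + 1)) (ι : Rn m →ᵃⁱ[ℝ] Rn (m + 1)) (b : Rn m) (c r : ℝ) :
    ℝ :=
  (weightedDirichlet P (ι b) r + weightedArea (ι ⁻¹' P.K) b r) / r ^ m -
    height P (ι b) c r / (2 * r)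

theorem height_eq_integral_cutoffSlope {N : ℕ} (P : MSPair N) (y : Rn N) (c : ℝ) {r : ℝ}
    (hr : 0 < r) :
    height P y c r = 2 * r ^ 2 / r ^ N * ∫ x, cutoffSlope r (x - y) * (P.u x - c) ^ 2 := by
  rw [height, integral_tent_mul_comp (fun x => (P.u x - c) ^ 2) y hr, finrank_euclideanSpace_fin]
  ring

namespace MSPair
variable {N : ℕ} {P : MSPair N}

theorem locallyIntegrable_sub_sq (hK : volume P.K = 0) (c : ℝ) :
    LocallyIntegrable fun x => (P.u x - c) ^ 2 := by
  simpa using (locallyL2_sub_const hK c).locallyIntegrable_norm_sq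

end MSPair

theorem hasDerivAt_weightedArea {m : ℕ} (k : Set (Rn m)) (b : Rn m) {r : ℝ} (hr : 0 < r) :
    HasDerivAt (weightedArea k b)
      (2 / r * ∫ a in k, cutoffSlope r (a - b) * ‖a - b‖ ^ 2 ∂μH[m]) r := by
  convert! hasDerivAt_integral_cutoff_mul (μ := μH[m].restrict k)
    (locallyIntegrable_const (1 : ℝ)) b hr using 1
  · simp [weightedArea, funext_iff]
  · rw [← integral_const_mul]
    congr with a
    ring

namespace FlatMinimizer
variable {m : ℕ} {P : MSPair (m + 1)} {ι : Rn m →ᵃⁱ[ℝ] Rn (m + 1)}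

theorem ae_ray_notMem (h : FlatMinimizer P ι) (b : Rn m) :
    ∀ᵐ ξ, ∀ s : ℝ, s ≠ 0 → ι b + s • ξ ∉ P.K := by
  have hnull := volume_range_affineIsometry ι.linearIsometry.toAffineIsometry
  filter_upwards [measure_eq_zero_iff_ae_notMem.1 hnull] with ξ hξ s hs hmem
  obtain ⟨a, ha⟩ := h.subset_range hmem
  refine hξ ⟨s⁻¹ • (a - b), ?_⟩
  rw [LinearIsometry.coe_toAffineIsometry, map_smul, ← vsub_eq_sub a b, ι.map_vsub, ha,
    vsub_eq_sub, add_sub_cancel_left, inv_smul_smul₀ hs]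

theorem ae_sq_sub_comp_ray_sub (h : FlatMinimizer P ι) (b : Rn m) (c : ℝ) {r₁ r₂ : ℝ}
    (hr₁ : 0 < r₁) (hr : r₁ ≤ r₂) :
    ∀ᵐ ξ, (P.u (ι b + r₂ • ξ) - c) ^ 2 - (P.u (ι b + r₁ • ξ) - c) ^ 2 =
      ∫ s in r₁..r₂, s⁻¹ * (2 * ((P.u (ι b + s • ξ) - c) *
        inner ℝ (ι b + s • ξ - ι b) (gradient P.u (ι b + s • ξ)))) := by
  have hpos : ∀ s ∈ uIcc r₁ r₂, 0 < s := fun s hs => hr₁.trans_le (uIcc_of_le hr ▸ hs).1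
  filter_upwards [h.ae_ray_notMem b, ae_ray_of_ae (P.ae_differentiableAt h.volume_K)
    measurableSet_uIoc (fun s hs => (hpos s (uIoc_subset_uIcc hs)).ne') (ι b)] with ξ hK hdiff
  rw [sq_sub_comp_ray_sub P.locallyLipschitzOn_u (fun s hs => hK s (hpos s hs).ne') hdiff]
  refine intervalIntegral.integral_congr fun s hs => ?_
  have hs0 := hpos s hs
  simp only [add_sub_cancel_left, real_inner_smul_left]
  field_simp

theorem height_sub (h : FlatMinimizer P ι) (b : Rn m) (c : ℝ) {r₁ r₂ : ℝ} (hr₁ : 0 < r₁)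
    (hr : r₁ ≤ r₂) :
    height P (ι b) c r₂ - height P (ι b) c r₁ =
      ∫ s in r₁..r₂, 2 * weightedDirichlet P (ι b) s / s ^ m := by
  rw [height, height, ← mul_sub, integral_tent_mul_comp_sub
    (MSPair.locallyIntegrable_sub_sq h.volume_K c)
    ((MSPair.locallyIntegrable_sub_mul_inner h.volume_K (ι b) c).smul (2 : ℝ)) (ι b) hr₁ hr
    (h.ae_sq_sub_comp_ray_sub b c hr₁ hr), ← intervalIntegral.integral_const_mul]
  refine intervalIntegral.integral_congr fun s hs => ?_
  have hs0 : 0 < s := hr₁.trans_le (uIcc_of_le hr ▸ hs).1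
  rw [integral_tent_mul_comp _ _ hs0, finrank_euclideanSpace_fin,
    h.weightedDirichlet_eq_integral (ι b) c hs0, ← integral_const_mul 2]
  simp only [Pi.smul_apply, smul_eq_mul, mul_left_comm _ (2 : ℝ), integral_const_mul]
  field_simp
  ring

theorem hasDerivAt_weightedDirichlet (h : FlatMinimizer P ι) (y : Rn (m + 1)) {r : ℝ}
    (hr : 0 < r) :
    HasDerivAt (weightedDirichlet P y)
      (2 / r * ∫ x, cutoffSlope r (x - y) * (‖x - y‖ ^ 2 * ‖gradient P.u x‖ ^ 2)) r := by
  convert! hasDerivAt_integral_cutoff_mul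
    (MSPair.locallyL2_gradient h.volume_K).locallyIntegrable_norm_sq y hr using 1
  rw [← integral_const_mul]
  congr with x
  ring

theorem hasDerivAt_height (h : FlatMinimizer P ι) (b : Rn m) (c : ℝ) {r : ℝ} (hr : 0 < r) :
    HasDerivAt (height P (ι b) c) (2 * weightedDirichlet P (ι b) r / r ^ m) r := by
  have hcont : ContinuousOn (fun s => 2 * weightedDirichlet P (ι b) s / s ^ m) (Ioi 0) :=
    fun s hs => (((h.hasDerivAt_weightedDirichlet (ι b) hs).continuousAt.const_mul 2).div
      (continuousAt_id.pow m) (pow_ne_zero m (ne_of_gt hs))).continuousWithinAt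
  have hr2 := half_pos hr
  have hinteg := intervalIntegral.integral_hasDerivAt_right
    (hcont.mono fun s hs => hr2.trans_le
      (uIcc_of_le (half_le_self hr.le) ▸ hs).1).intervalIntegrable
    (hcont.stronglyMeasurableAtFilter isOpen_Ioi r hr) (hcont.continuousAt (Ioi_mem_nhds hr))
  refine (hinteg.add_const (height P (ι b) c (r / 2))).congr_of_eventuallyEq ?_
  filter_upwards [Ici_mem_nhds (half_lt_self hr)] with s hs
  exact sub_eq_iff_eq_add.1 (h.height_sub b c hr2 hs)

theorem integral_cutoffSlope_mul_sq_expand (h : FlatMinimizer P ι) (y : Rn (m + 1)) (c : ℝ)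
    {r : ℝ} (hr : 0 < r) :
    ∫ x, cutoffSlope r (x - y) * (2 * inner ℝ (x - y) (gradient P.u x) - (P.u x - c)) ^ 2 =
      (∫ x, cutoffSlope r (x - y) * (P.u x - c) ^ 2) - 2 * weightedDirichlet P y r +
        4 * ∫ x, cutoffSlope r (x - y) * inner ℝ (x - y) (gradient P.u x) ^ 2 := by
  have hsq := integrable_cutoffSlope_mul (MSPair.locallyIntegrable_sub_sq h.volume_K c) hr y
  have hmixed := integrable_cutoffSlope_mul
    (MSPair.locallyIntegrable_sub_mul_inner h.volume_K y c) hr y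
  have hradial := MSPair.integrable_cutoffSlope_mul_inner_sq h.volume_K hr y
  have hsum := integral_add' (hsq.sub (hmixed.const_mul 4)) (hradial.const_mul 4)
  rw [integral_sub' hsq (hmixed.const_mul 4), integral_const_mul, integral_const_mul] at hsum
  rw [h.weightedDirichlet_eq_integral y c hr, ← mul_assoc, show (2 * 2 : ℝ) = 4 by norm_num, ← hsum]
  congr with x
  simp only [Pi.add_apply, Pi.sub_apply]
  ring

theorem hasDerivAt_weissEnergy (h : FlatMinimizer P ι) (b : Rn m) (c : ℝ) {r : ℝ} (hr : 0 < r) :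
    HasDerivAt (weissEnergy P ι b c) ((r ^ (m + 1))⁻¹ * ∫ x, cutoffSlope r (x - ι b) *
      (2 * inner ℝ (x - ι b) (gradient P.u x) - (P.u x - c)) ^ 2) r := by
  have hderiv := (((h.hasDerivAt_weightedDirichlet (ι b) hr).add
    (hasDerivAt_weightedArea (ι ⁻¹' P.K) b hr)).div (hasDerivAt_pow m r) (by positivity)).sub
    ((h.hasDerivAt_height b c hr).div ((hasDerivAt_id r).const_mul 2) (by simpa using hr.ne'))
  refine hderiv.congr_deriv ?_
  have hvar := h.inner_variation b hr
  rw [h.integral_cutoffSlope_mul_sq_expand (ι b) c hr,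
    height_eq_integral_cutoffSlope P (ι b) c hr]
  simp only [id_eq, Pi.add_apply]
  generalize weightedDirichlet P (ι b) r = D, weightedArea (ι ⁻¹' P.K) b r = A,
    (∫ x, cutoffSlope r (x - ι b) * (P.u x - c) ^ 2) = F,
    (∫ x, cutoffSlope r (x - ι b) * inner ℝ (x - ι b) (gradient P.u x) ^ 2) = Z,
    (∫ x, cutoffSlope r (x - ι b) * (‖x - ι b‖ ^ 2 * ‖gradient P.u x‖ ^ 2)) = X,
    (∫ a in ι ⁻¹' P.K, cutoffSlope r (a - b) * ‖a - b‖ ^ 2 ∂μH[m]) = Y at hvar ⊢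
  have hZ : 4 * Z = 2 * X + 2 * Y - (m - 1) * D - m * A := by linarith
  have hpow : (m : ℝ) * r ^ (m - 1) = m * r ^ m / r := by
    obtain _ | k := m
    · simp
    · rw [Nat.add_sub_cancel, pow_succ]
      field_simp
  rw [hZ, hpow]
  field_simp
  ring

theorem hasDerivAt_height_div (h : FlatMinimizer P ι) (b : Rn m) (c : ℝ) {r : ℝ} (hr : 0 < r) :
    HasDerivAt (fun r => height P (ι b) c r / r)
      (2 / r * (weissEnergy P ι b c r - weightedArea (ι ⁻¹' P.K) b r / r ^ m)) r := by
  refine ((h.hasDerivAt_height b c hr).div (hasDerivAt_id r) hr.ne').congr_deriv ?_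
  simp only [weissEnergy, id_eq]
  field_simp
  ring

theorem monotoneOn_weissEnergy (h : FlatMinimizer P ι) (b : Rn m) (c : ℝ) :
    MonotoneOn (weissEnergy P ι b c) (Ioi 0) := by
  refine monotoneOn_of_hasDerivWithinAt_nonneg (convex_Ioi 0)
    (fun r hr => (h.hasDerivAt_weissEnergy b c hr).continuousAt.continuousWithinAt)
    (fun r hr => (h.hasDerivAt_weissEnergy b c (interior_subset hr)).hasDerivWithinAt)
    fun r hr => ?_
  have hr0 : 0 < r := interior_subset hr
  exact mul_nonneg (by positivity)
    (integral_nonneg fun x => mul_nonneg (cutoffSlope_nonneg _ _) (sq_nonneg _))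

end FlatMinimizer

theorem tendsto_atTop_of_div_le_deriv {H H' : ℝ → ℝ} {ε : ℝ} (hε : 0 < ε)
    (hH : ∀ᶠ r in atTop, HasDerivAt H (H' r) r ∧ ε / r ≤ H' r) : Tendsto H atTop atTop := by
  obtain ⟨R, hR0, hR⟩ :=
    ((eventually_gt_atTop 0).and (eventually_forall_ge_atTop.2 hH)).exists
  have hderiv : ∀ r ∈ Ici R, HasDerivAt (fun r => H r - ε * Real.log r) (H' r - ε * r⁻¹) r :=
    fun r hr => (hR r hr).1.sub ((Real.hasDerivAt_log (hR0.trans_le hr).ne').const_mul ε)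
  have hmono : MonotoneOn (fun r => H r - ε * Real.log r) (Ici R) :=
    monotoneOn_of_hasDerivWithinAt_nonneg (convex_Ici R)
      (fun r hr => (hderiv r hr).continuousAt.continuousWithinAt)
      (fun r hr => (hderiv r (interior_subset hr)).hasDerivWithinAt)
      fun r hr => sub_nonneg.2 (div_eq_mul_inv ε r ▸ (hR r (interior_subset hr)).2)
  refine tendsto_atTop_mono' atTop ?_ (tendsto_atTop_add_const_left atTop
    (H R - ε * Real.log R) (Real.tendsto_log_atTop.const_mul_atTop hε))
  filter_upwards [eventually_ge_atTop R] with r hr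
  linarith [hmono self_mem_Ici hr hr]

theorem tendsto_atTop_of_deriv_le_neg_div {H H' : ℝ → ℝ} {ε : ℝ} (hε : 0 < ε)
    (hH : ∀ᶠ r in 𝓝[>] 0, HasDerivAt H (H' r) r ∧ H' r ≤ -ε / r) :
    Tendsto H (𝓝[>] 0) atTop := by
  have hinv : Tendsto (fun s => H s⁻¹) atTop atTop := by
    refine tendsto_atTop_of_div_le_deriv (H' := fun s => H' s⁻¹ * -(s ^ 2)⁻¹) hε ?_
    filter_upwards [tendsto_inv_atTop_nhdsGT_zero.eventually hH, eventually_gt_atTop 0]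
      with s hs hs0
    refine ⟨hs.1.comp s (hasDerivAt_inv hs0.ne'), ?_⟩
    calc ε / s = -ε / s⁻¹ * -(s ^ 2)⁻¹ := by field_simp
      _ ≤ H' s⁻¹ * -(s ^ 2)⁻¹ :=
        mul_le_mul_of_nonpos_right hs.2 (neg_nonpos.2 (by positivity))
  simpa [Function.comp_def] using hinv.comp tendsto_inv_nhdsGT_zero

section LogarithmicDivergence
variable {H W A : ℝ → ℝ} {C a r : ℝ}

/-- If `W` exceeded `a` somewhere, then by monotonicity `H' ≥ ε / r` at infinity, so that `H` would
grow like `log r`. -/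
theorem le_of_forall_eventually_atTop_lt
    (hH : ∀ r, 0 < r → HasDerivAt H (2 / r * (W r - A r)) r) (hW : MonotoneOn W (Ioi 0))
    (hHC : ∀ r, 0 < r → H r ≤ C) (hA : ∀ a' > a, ∀ᶠ r in atTop, A r < a') (hr : 0 < r) :
    W r ≤ a := by
  by_contra! hlt
  obtain ⟨a', haa', ha'W⟩ := exists_between hlt
  have hdiv : Tendsto H atTop atTop := by
    refine tendsto_atTop_of_div_le_deriv (H' := fun s => 2 / s * (W s - A s))
      (ε := 2 * (W r - a')) (by linarith) ?_
    filter_upwards [hA a' haa', eventually_ge_atTop r] with s hAs hrs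
    have hs : 0 < s := hr.trans_le hrs
    refine ⟨hH s hs, ?_⟩
    rw [mul_div_right_comm]
    exact mul_le_mul_of_nonneg_left (by linarith [hW hr hs hrs]) (by positivity)
  obtain ⟨s, hCs, hs⟩ := ((hdiv.eventually_gt_atTop C).and (eventually_gt_atTop 0)).exists
  exact (hHC s hs).not_gt hCs

theorem le_of_forall_eventually_nhdsGT_lt
    (hH : ∀ r, 0 < r → HasDerivAt H (2 / r * (W r - A r)) r) (hW : MonotoneOn W (Ioi 0))
    (hHC : ∀ r, 0 < r → H r ≤ C) (hA : ∀ a' < a, ∀ᶠ r in 𝓝[>] 0, a' < A r) (hr : 0 < r) :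
    a ≤ W r := by
  by_contra! hlt
  obtain ⟨a', hWa', ha'a⟩ := exists_between hlt
  have hdiv : Tendsto H (𝓝[>] 0) atTop := by
    refine tendsto_atTop_of_deriv_le_neg_div (H' := fun s => 2 / s * (W s - A s))
      (ε := 2 * (a' - W r)) (by linarith) ?_
    filter_upwards [hA a' ha'a, Ioc_mem_nhdsGT hr] with s hAs ⟨hs, hsr⟩
    refine ⟨hH s hs, ?_⟩
    rw [← mul_neg, mul_div_right_comm]
    exact mul_le_mul_of_nonneg_left (by linarith [hW hs hr hsr]) (by positivity)
  obtain ⟨s, hCs, hs⟩ := ((hdiv.eventually_gt_atTop C).and self_mem_nhdsWithin).exists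
  exact (hHC s hs).not_gt hCs

end LogarithmicDivergence

/-! ### The energy bound -/

theorem hausdorffMeasure_sphere_pi_lt_top (m : ℕ) :
    μH[m] (sphere (0 : Fin (m + 1) → ℝ) 1) < ∞ := by
  have hface : ∀ (i : Fin (m + 1)) (c : ℝ),
      μH[m] (i.insertNth (α := fun _ => ℝ) c '' closedBall 0 1) < ∞ := fun i c => by
    have hiso : Isometry (i.insertNth (α := fun _ => ℝ) c) := Isometry.of_dist_eq fun a b => by
      rw [Fin.dist_insertNth_insertNth, dist_self, max_eq_right dist_nonneg]
    have hvol := hausdorffMeasure_pi_real (ι := Fin m)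
    rw [Fintype.card_fin] at hvol
    rw [hiso.hausdorffMeasure_image (Or.inl m.cast_nonneg), hvol]
    exact (isCompact_closedBall _ _).measure_lt_top
  have hcover : sphere (0 : Fin (m + 1) → ℝ) 1 ⊆
      ⋃ q ∈ (univ ×ˢ {1, -1} : Set (Fin (m + 1) × ℝ)),
        q.1.insertNth (α := fun _ => ℝ) q.2 '' closedBall 0 1 := fun x hx => by
    have hnorm : ‖x‖ = 1 := mem_sphere_zero_iff_norm.1 hx
    obtain ⟨i, hi⟩ : ∃ i, 1 ≤ ‖x i‖ := by
      by_contra! hlt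
      exact ((pi_norm_lt_iff one_pos).2 hlt).ne hnorm
    refine mem_biUnion (x := (i, x i)) ⟨mem_univ _, eq_or_eq_neg_of_abs_eq
      (((norm_le_pi_norm x i).trans hnorm.le).antisymm hi)⟩
      ⟨i.removeNth x, ?_, i.insertNth_self_removeNth x⟩
    exact mem_closedBall_zero_iff.2 ((pi_norm_le_iff_of_nonneg zero_le_one).2 fun j =>
      (norm_le_pi_norm x _).trans hnorm.le)
  exact (measure_mono hcover).trans_lt
    (measure_biUnion_lt_top (toFinite _) fun q _ => hface q.1 q.2)

theorem exists_isOpen_hausdorffMeasure_frontier_lt_top (m : ℕ) :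
    ∃ U : Set (Rn (m + 1)), IsOpen U ∧ ball 0 1 ⊆ U ∧ Bornology.IsBounded U ∧
      μH[m] (frontier U) < ∞ := by
  have hlip := PiLp.lipschitzWith_toLp 2 fun _ : Fin (m + 1) => ℝ
  let e := (PiLp.homeomorph 2 fun _ : Fin (m + 1) => ℝ).symm
  refine ⟨e '' ball 0 1, e.isOpenMap _ isOpen_ball, fun x hx => ⟨x.ofLp, ?_, rfl⟩,
    hlip.isBounded_image isBounded_ball, ?_⟩
  · rw [mem_ball_zero_iff] at hx ⊢
    exact (pi_norm_lt_iff one_pos).2 fun i => (PiLp.norm_apply_le x i).trans_lt hx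
  · rw [← e.image_frontier, frontier_ball _ one_ne_zero]
    exact (hlip.hausdorffMeasure_image_le m.cast_nonneg _).trans_lt (ENNReal.mul_lt_top
      (ENNReal.rpow_lt_top_of_nonneg m.cast_nonneg ENNReal.coe_ne_top)
      (hausdorffMeasure_sphere_pi_lt_top m))

theorem exists_forall_ball_subset_hausdorffMeasure_frontier_eq (m : ℕ) :
    ∃ C : ℝ≥0, ∀ (y : Rn (m + 1)) (r : ℝ), 0 < r → ∃ U, IsOpen U ∧ ball y r ⊆ U ∧
      Bornology.IsBounded U ∧ μH[m] (frontier U) = ENNReal.ofReal (C * r ^ m) := by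
  obtain ⟨U, hUo, hball, hbdd, hfin⟩ := exists_isOpen_hausdorffMeasure_frontier_lt_top m
  lift μH[m] (frontier U) to ℝ≥0 using hfin.ne with C hC
  refine ⟨C, fun y r hr => ?_⟩
  let e := (Homeomorph.smulOfNeZero r hr.ne').trans (Homeomorph.addLeft y)
  refine ⟨e '' U, e.isOpenMap U hUo, fun x hx => ⟨r⁻¹ • (x - y), hball ?_, ?_⟩, ?_, ?_⟩
  · rw [mem_ball_zero_iff, norm_inv_smul hr, div_lt_one hr]
    exact mem_ball_iff_norm.1 hx
  · simp [e, smul_inv_smul₀ hr.ne']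
  · have hbdd' := (hbdd.smul₀ r).vadd y
    rwa [← image_smul, ← image_vadd, image_image] at hbdd'
  · have himage : e '' frontier U = IsometryEquiv.addLeft y '' ((r • ·) '' frontier U) := by
      rw [image_image]
      rfl
    rw [← e.image_frontier, himage, IsometryEquiv.hausdorffMeasure_image, image_smul,
      Measure.hausdorffMeasure_smul₀ m.cast_nonneg hr.ne', ← hC]
    rw [NNReal.rpow_natCast, ENNReal.smul_def, smul_eq_mul, mul_comm,
      ENNReal.ofReal_mul C.coe_nonneg, ENNReal.ofReal_coe_nnreal, ← Real.norm_of_nonneg hr.le,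
      ← coe_nnnorm, ← NNReal.coe_pow, ENNReal.ofReal_coe_nnreal, coe_nnnorm, nnnorm_norm]

theorem volume_eq_zero_of_hausdorffMeasure_ne_top {m : ℕ} {s : Set (Rn (m + 1))}
    (hs : μH[m] s ≠ ∞) : volume s = 0 := by
  have hlt : (m : ℝ) < (m + 1 : ℕ) := by exact_mod_cast m.lt_succ_self
  refine Measure.absolutelyContinuous_isAddHaarMeasure volume μH[(m + 1 : ℕ)] ?_
  exact (Measure.hausdorffMeasure_zero_or_top hlt s).resolve_right hs

section Indicator
variable {X E : Type*}

theorem LocallyL2.indicator [PseudoMetricSpace X] [MeasurableSpace X] [NormedAddCommGroup E]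
    {μ : Measure X} {f : X → E} {s : Set X} (hf : LocallyL2 f μ) (hs : MeasurableSet s) :
    LocallyL2 (s.indicator f) μ :=
  fun x R => (hf x R).indicator hs

theorem indicator_compl_eventuallyEq_or [TopologicalSpace X] [Zero E] {U : Set X} (hU : IsOpen U)
    (f : X → E) {x : X} (hx : x ∉ frontier U) :
    x ∈ U ∧ Uᶜ.indicator f =ᶠ[𝓝 x] 0 ∨ x ∉ closure U ∧ Uᶜ.indicator f =ᶠ[𝓝 x] f := by
  by_cases hxU : x ∈ U
  · refine Or.inl ⟨hxU, ?_⟩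
    filter_upwards [hU.mem_nhds hxU] with z hz
    exact indicator_of_notMem (notMem_compl_iff.2 hz) f
  · have hcl : x ∉ closure U := fun hcl => hx ⟨hcl, fun hinteg => hxU (interior_subset hinteg)⟩
    refine Or.inr ⟨hcl, ?_⟩
    filter_upwards [isClosed_closure.isOpen_compl.mem_nhds hcl] with z hz
    exact indicator_of_mem (mem_compl fun hzU => hz (subset_closure hzU)) f

theorem gradient_indicator_compl {N : ℕ} {U : Set (Rn N)} (hU : IsOpen U) (f : Rn N → ℝ)
    {x : Rn N} (hx : x ∉ frontier U) :
    gradient (Uᶜ.indicator f) x = Uᶜ.indicator (gradient f) x := by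
  rcases indicator_compl_eventuallyEq_or hU f hx with ⟨hxU, heq⟩ | ⟨hxU, heq⟩
  · rw [heq.gradient_eq, indicator_of_notMem (notMem_compl_iff.2 hxU)]
    exact gradient_const x 0
  · rw [heq.gradient_eq, indicator_of_mem (mem_compl fun h => hxU (subset_closure h))]

theorem ae_gradient_indicator_compl {N : ℕ} {U : Set (Rn N)} (hU : IsOpen U)
    (hvol : volume (frontier U) = 0) (f : Rn N → ℝ) :
    gradient (Uᶜ.indicator f) =ᵐ[volume] Uᶜ.indicator (gradient f) :=
  (measure_eq_zero_iff_ae_notMem.1 hvol).mono fun _ hx => gradient_indicator_compl hU f hx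

theorem setIntegral_norm_gradient_indicator_compl_sq {N : ℕ} {U V : Set (Rn N)} (hU : IsOpen U)
    (hvol : volume (frontier U) = 0) (hUV : U ⊆ V) {f : Rn N → ℝ}
    (hf : IntegrableOn (fun x => ‖gradient f x‖ ^ 2) V) :
    ∫ x in V, ‖gradient (Uᶜ.indicator f) x‖ ^ 2 =
      (∫ x in V, ‖gradient f x‖ ^ 2) - ∫ x in U, ‖gradient f x‖ ^ 2 := by
  have hsplit := integral_inter_add_sdiff hU.measurableSet hf
  rw [inter_eq_right.2 hUV, Set.sdiff_eq, ← setIntegral_indicator hU.measurableSet.compl] at hsplit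
  rw [eq_sub_iff_add_eq', ← hsplit]
  congr 1
  refine integral_congr_ae (ae_restrict_of_ae
    ((ae_gradient_indicator_compl hU hvol f).mono fun x hx => ?_))
  by_cases hxU : x ∈ U <;> simp [hx, hxU]

theorem locallyLipschitzOn_indicator_compl {N : ℕ} {U K : Set (Rn N)} (hU : IsOpen U)
    (hK : IsClosed K) {f : Rn N → ℝ} (hf : LocallyLipschitzOn Kᶜ f) :
    LocallyLipschitzOn (K \ U ∪ frontier U)ᶜ (Uᶜ.indicator f) := fun x hx => by
  rcases indicator_compl_eventuallyEq_or hU f (fun h => hx (Or.inr h)) with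
    ⟨-, heq⟩ | ⟨hxU, heq⟩
  · obtain ⟨t, ht, hzero⟩ := eventually_iff_exists_mem.1 heq
    exact ⟨0, t, mem_nhdsWithin_of_mem_nhds ht,
      fun a ha b hb => by simp [hzero a ha, hzero b hb]⟩
  · have hxK : x ∈ Kᶜ := fun h => hx (Or.inl ⟨h, fun h' => hxU (subset_closure h')⟩)
    obtain ⟨D, s, hs, hD⟩ := hf hxK
    rw [hK.isOpen_compl.nhdsWithin_eq hxK] at hs
    obtain ⟨t, ht, hft⟩ := eventually_iff_exists_mem.1 heq
    exact ⟨D, s ∩ t, mem_nhdsWithin_of_mem_nhds (inter_mem hs ht),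
      fun a ha b hb => by simpa only [hft a ha.2, hft b hb.2] using hD ha.1 hb.1⟩

end Indicator

namespace FlatMinimizer
variable {m : ℕ} {P : MSPair (m + 1)} {ι : Rn m →ᵃⁱ[ℝ] Rn (m + 1)}

/-- The competitor removes `K` inside `U`, sets `u = 0` there and pays for `frontier U`. -/
theorem setIntegral_norm_gradient_sq_le (h : FlatMinimizer P ι) {U : Set (Rn (m + 1))}
    (hU : IsOpen U) (hbdd : Bornology.IsBounded U) (hfin : μH[m] (frontier U) ≠ ∞) :
    ∫ x in U, ‖gradient P.u x‖ ^ 2 ≤ (μH[m] (frontier U)).toReal := by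
  obtain ⟨R, hR, hUR⟩ : ∃ R > 0, closure U ⊆ ball 0 R := by
    obtain ⟨R, hR⟩ := hbdd.closure.subset_ball 0
    exact ⟨max R 1, by positivity, hR.trans (ball_subset_ball (le_max_left _ _))⟩
  have hLK : (P.K \ U ∪ frontier U) \ ball 0 R = P.K \ ball 0 R := by
    have hfr : frontier U ⊆ ball 0 R := frontier_subset_closure.trans hUR
    rw [union_sdiff_distrib, sdiff_eq_empty.2 hfr, union_empty, sdiff_sdiff,
      union_eq_self_of_subset_left (subset_closure.trans hUR)]
  have hvol := volume_eq_zero_of_hausdorffMeasure_ne_top hfin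
  have hgrad := ae_gradient_indicator_compl hU hvol P.u
  have hL : (P.K \ U ∪ frontier U) ∩ ball 0 R ⊆ P.K ∩ ball 0 R ∪ frontier U := by
    rintro x ⟨hxK | hxU, hxR⟩
    exacts [Or.inl ⟨hxK.1, hxR⟩, Or.inr hxU]
  have hKfin := (h.hausdorffMeasure_lt_top 0 R).ne
  have hLle := (measure_mono hL).trans (measure_union_le (μ := μH[m]) _ _)
  have hle := h.energy_le ((P.closed.sdiff hU).union isClosed_frontier)
    (locallyLipschitzOn_indicator_compl hU P.closed P.locallyLipschitzOn_u)
    ((MSPair.locallyL2_u h.volume_K).indicator hU.measurableSet.compl)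
    (((MSPair.locallyL2_gradient h.volume_K).indicator hU.measurableSet.compl).congr_ae
      hgrad.symm) hR hLK
    (fun x hx _ => indicator_of_mem (mem_compl fun hxU => hx (hUR (subset_closure hxU))) _)
    (measure_union_null (measure_mono_null sdiff_subset h.volume_K) hvol)
    (ne_top_of_le_ne_top (ENNReal.add_ne_top.2 ⟨hKfin, hfin⟩) hLle)
  have hLle' := ENNReal.toReal_mono (ENNReal.add_ne_top.2 ⟨hKfin, hfin⟩) hLle
  rw [ENNReal.toReal_add hKfin hfin] at hLle'
  have hv := setIntegral_norm_gradient_indicator_compl_sq hU hvol (subset_closure.trans hUR)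
    ((MSPair.locallyL2_gradient h.volume_K).integrableOn_norm_sq 0 R)
  linarith

theorem exists_weightedDirichlet_le (h : FlatMinimizer P ι) :
    ∃ C : ℝ, ∀ y r, 0 < r → weightedDirichlet P y r ≤ C * r ^ m := by
  obtain ⟨C, hC⟩ := exists_forall_ball_subset_hausdorffMeasure_frontier_eq m
  refine ⟨C, fun y r hr => ?_⟩
  obtain ⟨U, hUo, hball, hbdd, hμ⟩ := hC y r hr
  have hle := h.setIntegral_norm_gradient_sq_le hUo hbdd (hμ ▸ ENNReal.ofReal_ne_top)
  rw [hμ, ENNReal.toReal_ofReal (by positivity)] at hle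
  refine le_trans ?_ hle
  have hinteg : IntegrableOn (fun x => ‖gradient P.u x‖ ^ 2) U := by
    obtain ⟨R, hR⟩ := hbdd.subset_ball 0
    exact ((MSPair.locallyL2_gradient h.volume_K).integrableOn_norm_sq 0 R).mono_set hR
  rw [weightedDirichlet, ← integral_indicator hUo.measurableSet]
  refine integral_mono_of_nonneg (ae_of_all _ fun x => mul_nonneg (cutoff_nonneg r _)
    (sq_nonneg _)) (hinteg.integrable_indicator hUo.measurableSet) (ae_of_all _ fun x => ?_)
  by_cases hx : x ∈ U
  · rw [indicator_of_mem hx]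
    exact mul_le_of_le_one_left (sq_nonneg _) (cutoff_le_one r _)
  · rw [indicator_of_notMem hx]
    simp only [cutoff_sub_eq_zero hr fun hxb => hx (hball hxb), zero_mul, le_refl]

end FlatMinimizer

/-! ### Trace values on the hyperplane -/

theorem integrable_tent (N : ℕ) : Integrable (tent : Rn N → ℝ) := by
  simpa using integrable_tent_mul_comp (locallyIntegrable_const (1 : ℝ)) (0 : Rn N) one_pos

theorem integral_tent_pos (N : ℕ) : 0 < ∫ ξ : Rn N, tent ξ := by
  rw [integral_pos_iff_support_of_nonneg tent_nonneg (integrable_tent N)]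
  exact (measure_ball_pos volume 0 one_pos).trans_le
    (measure_mono fun ξ hξ => (tent_pos (mem_ball_zero_iff.1 hξ)).ne')

namespace MSPair
variable {N : ℕ} {P : MSPair N}

theorem tendsto_height_nhdsGT_zero (hK : volume P.K = 0) {y : Rn N} (hy : y ∉ P.K) :
    Tendsto (height P y (P.u y)) (𝓝[>] 0) (𝓝 0) := by
  have hcont : ContinuousAt P.u y :=
    P.locallyLipschitzOn_u.continuousOn.continuousAt (P.closed.isOpen_compl.mem_nhds hy)
  have hlim : ∀ ξ : Rn N, Tendsto (fun s : ℝ => P.u (y + s • ξ) - P.u y) (𝓝[>] 0) (𝓝 0) :=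
      fun ξ => by
    have hray : ContinuousAt (fun s : ℝ => P.u (y + s • ξ) - P.u y) 0 := by
      refine ContinuousAt.sub (ContinuousAt.comp ?_ (by fun_prop)) continuousAt_const
      simpa using hcont
    simpa using hray.tendsto.mono_left nhdsWithin_le_nhds
  obtain ⟨ρ, hρ, hball⟩ := Metric.continuousAt_iff.1 hcont 1 one_pos
  suffices hinteg : Tendsto (fun s : ℝ => ∫ ξ, tent ξ * (P.u (y + s • ξ) - P.u y) ^ 2) (𝓝[>] 0)
      (𝓝 (∫ _ : Rn N, 0)) by
    unfold height
    simpa using hinteg.const_mul 4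
  refine tendsto_integral_filter_of_dominated_convergence tent ?_ ?_ (integrable_tent N)
    (ae_of_all _ fun ξ => ?_)
  · filter_upwards [self_mem_nhdsWithin] with s hs
    have hu := (aestronglyMeasurable_u hK).comp_quasiMeasurePreserving
      (quasiMeasurePreserving_add_smul y (ne_of_gt hs))
    exact continuous_tent.aestronglyMeasurable.mul ((hu.sub aestronglyMeasurable_const).pow 2)
  · filter_upwards [Ioo_mem_nhdsGT hρ] with s hs
    refine ae_of_all _ fun ξ => ?_
    rw [norm_mul, Real.norm_of_nonneg (tent_nonneg ξ), norm_pow]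
    rcases le_or_gt 1 ‖ξ‖ with hξ | hξ
    · rw [tent_eq_zero hξ, zero_mul]
    · refine mul_le_of_le_one_right (tent_nonneg ξ) (pow_le_one₀ (norm_nonneg _) (hball ?_).le)
      rw [dist_self_add_left, norm_smul, Real.norm_of_nonneg hs.1.le]
      nlinarith [hs.1, hs.2]
  · simpa using ((hlim ξ).pow 2).const_mul (tent ξ)

theorem continuous_height (hK : volume P.K = 0) {r : ℝ} (hr : 0 < r) :
    Continuous fun z : Rn N × ℝ => height P z.1 z.2 r := by
  simp only [height_eq_integral_cutoffSlope P _ _ hr]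
  refine continuous_const.mul (continuous_iff_continuousAt.2 fun ⟨y, c⟩ => ?_)
  refine continuousAt_of_dominated (bound := (ball y (r + 1)).indicator
    fun x => 2 / r ^ 2 * (2 * ((P.u x - c) ^ 2 + 1))) ?_ ?_ ?_ ?_
  · refine Eventually.of_forall fun z => AEStronglyMeasurable.mul ?_ ?_
    · exact Continuous.aestronglyMeasurable (by fun_prop)
    · exact ((aestronglyMeasurable_u hK).sub aestronglyMeasurable_const).pow 2
  · filter_upwards [ball_mem_nhds (y, c) one_pos] with z hz
    refine ae_of_all _ fun x => ?_
    obtain ⟨hzy, hzc⟩ : dist z.1 y < 1 ∧ |z.2 - c| < 1 := by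
      simpa [Prod.dist_eq, Real.dist_eq] using hz
    rw [Real.norm_of_nonneg (mul_nonneg (cutoffSlope_nonneg _ _) (sq_nonneg _))]
    by_cases hx : x ∈ ball y (r + 1)
    · rw [indicator_of_mem hx]
      have hsq := sq_lt_one_iff_abs_lt_one (z.2 - c) |>.2 hzc
      gcongr
      · exact mul_le_of_le_one_right (by positivity) (tent_le_one _)
      · nlinarith [sq_nonneg ((P.u x - c) + (z.2 - c))]
    · rw [indicator_of_notMem hx, cutoffSlope_sub_eq_zero hr, zero_mul]
      exact fun hxz => hx (ball_subset_ball' (by linarith) hxz)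
  · refine (integrable_indicator_iff measurableSet_ball).2 ?_
    have hinteg := ((locallyIntegrable_sub_sq hK c).integrableOn_isCompact
      (isCompact_closedBall y (r + 1))).mono_set ball_subset_closedBall
    exact ((hinteg.add (integrableOn_const measure_ball_lt_top.ne)).const_mul _).const_mul _
  · exact ae_of_all _ fun x => by fun_prop

theorem sq_mul_integral_tent_le_height (hK : volume P.K = 0) (y : Rn N) (c : ℝ) {r : ℝ}
    (hr : 0 < r) : 2 * c ^ 2 * ∫ ξ : Rn N, tent ξ ≤ height P y c r + height P y 0 r := by
  have hinteg := fun c => integrable_tent_mul_comp (locallyIntegrable_sub_sq hK c) y hr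
  rw [height, height, ← mul_add, ← integral_add (hinteg c) (hinteg 0), ← integral_const_mul,
    ← integral_const_mul]
  refine integral_mono ((integrable_tent N).const_mul _) (((hinteg c).add (hinteg 0)).const_mul 4)
    fun ξ => ?_
  nlinarith [mul_nonneg (tent_nonneg ξ) (sq_nonneg (2 * P.u (y + r • ξ) - c))]

end MSPair

namespace FlatMinimizer
variable {m : ℕ} {P : MSPair (m + 1)} {ι : Rn m →ᵃⁱ[ℝ] Rn (m + 1)} {C : ℝ}

theorem height_sub_le (h : FlatMinimizer P ι)
    (hC : ∀ y r, 0 < r → weightedDirichlet P y r ≤ C * r ^ m) (b : Rn m) (c : ℝ)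
    {s r : ℝ} (hs : 0 < s) (hsr : s ≤ r) :
    height P (ι b) c r - height P (ι b) c s ≤ 2 * C * (r - s) := by
  have hderiv : ∀ t, 0 < t → HasDerivAt (height P (ι b) c) _ t :=
    fun t => h.hasDerivAt_height b c
  refine (convex_Ioi (0 : ℝ)).image_sub_le_mul_sub_of_deriv_le
    (fun t ht => (hderiv t ht).continuousAt.continuousWithinAt)
    (fun t ht => (hderiv t (interior_subset ht)).differentiableAt.differentiableWithinAt)
    (fun t ht => ?_) s hs r (hs.trans_le hsr) hsr
  have ht : 0 < t := interior_subset ht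
  rw [(hderiv t ht).deriv, div_le_iff₀ (by positivity), mul_assoc]
  linarith [hC (ι b) t ht]

theorem height_le_of_notMem (h : FlatMinimizer P ι)
    (hC : ∀ y r, 0 < r → weightedDirichlet P y r ≤ C * r ^ m) {b : Rn m} (hb : ι b ∉ P.K) {r : ℝ}
    (hr : 0 < r) : height P (ι b) (P.u (ι b)) r ≤ 2 * C * r := by
  have hlim : Tendsto (fun s => 2 * C * (r - s) + height P (ι b) (P.u (ι b)) s) (𝓝[>] 0)
      (𝓝 (2 * C * (r - 0) + 0)) := by
    refine Tendsto.add (Tendsto.mono_left ?_ nhdsWithin_le_nhds)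
      (MSPair.tendsto_height_nhdsGT_zero h.volume_K hb)
    exact Continuous.tendsto (by fun_prop) 0
  rw [sub_zero, add_zero] at hlim
  refine ge_of_tendsto hlim ?_
  filter_upwards [Ioc_mem_nhdsGT hr] with s hs
  linarith [h.height_sub_le hC b (P.u (ι b)) hs.1 hs.2]

theorem exists_forall_height_le (h : FlatMinimizer P ι)
    (hC : ∀ y r, 0 < r → weightedDirichlet P y r ≤ C * r ^ m) {b : Rn m}
    (hb : b ∈ closure (ι ⁻¹' P.K)ᶜ) : ∃ c, ∀ r, 0 < r → height P (ι b) c r ≤ 2 * C * r := by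
  obtain ⟨β, hβ, hlim⟩ := mem_closure_iff_seq_limit.1 hb
  have hιlim : Tendsto (fun n => ι (β n)) atTop (𝓝 (ι b)) := (ι.continuous.tendsto b).comp hlim
  have hκ := integral_tent_pos (m + 1)
  have hheight : Tendsto (fun n => height P (ι (β n)) 0 1) atTop (𝓝 (height P (ι b) 0 1)) := by
    have hcont : Continuous fun y => height P y 0 1 :=
      (MSPair.continuous_height h.volume_K one_pos).comp (Continuous.prodMk_left 0)
    exact (hcont.tendsto (ι b)).comp hιlim
  have hbdd : ∀ᶠ n in atTop, P.u (ι (β n)) ∈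
      {c | c ^ 2 ≤ (2 * C + (height P (ι b) 0 1 + 1)) / (2 * ∫ ξ : Rn (m + 1), tent ξ)} := by
    filter_upwards [hheight.eventually_lt_const (lt_add_one _)] with n hn
    have hle := MSPair.sq_mul_integral_tent_le_height h.volume_K (ι (β n)) (P.u (ι (β n))) one_pos
    have hle' := h.height_le_of_notMem hC (hβ n) one_pos
    rw [le_div_iff₀ (by positivity)]
    linarith
  obtain ⟨c, -, φ, hφ, hc⟩ := tendsto_subseq_of_frequently_bounded
    (isBounded_iff_forall_norm_le.2 ⟨_, fun c hc => Real.abs_le_sqrt hc⟩) hbdd.frequently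
  refine ⟨c, fun r hr => ?_⟩
  refine le_of_tendsto (((MSPair.continuous_height h.volume_K hr).tendsto (ι b, c)).comp
    ((hιlim.comp hφ.tendsto_atTop).prodMk_nhds hc)) (Eventually.of_forall fun n => ?_)
  exact h.height_le_of_notMem hC (hβ (φ n)) hr

theorem weissEnergy_le (h : FlatMinimizer P ι) {b : Rn m} {c a : ℝ}
    (hc : ∀ r, 0 < r → height P (ι b) c r ≤ C * r)
    (hA : ∀ a' > a, ∀ᶠ r in atTop, weightedArea (ι ⁻¹' P.K) b r / r ^ m < a') {r : ℝ}
    (hr : 0 < r) : weissEnergy P ι b c r ≤ a :=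
  le_of_forall_eventually_atTop_lt (fun _ => h.hasDerivAt_height_div b c)
    (h.monotoneOn_weissEnergy b c) (fun s hs => (div_le_iff₀ hs).2 (hc s hs)) hA hr

theorem le_weissEnergy (h : FlatMinimizer P ι) {b : Rn m} {c a : ℝ}
    (hc : ∀ r, 0 < r → height P (ι b) c r ≤ C * r)
    (hA : ∀ a' < a, ∀ᶠ r in 𝓝[>] 0, a' < weightedArea (ι ⁻¹' P.K) b r / r ^ m) {r : ℝ}
    (hr : 0 < r) : a ≤ weissEnergy P ι b c r :=
  le_of_forall_eventually_nhdsGT_lt (fun _ => h.hasDerivAt_height_div b c)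
    (h.monotoneOn_weissEnergy b c) (fun s hs => (div_le_iff₀ hs).2 (hc s hs)) hA hr

end FlatMinimizer

/-! ### Densities of the singular set -/

section Density
variable {m : ℕ}

theorem integrable_cutoff_sub (b : Rn m) {r : ℝ} (hr : 0 < r) :
    Integrable (fun a => cutoff r (a - b)) (μH[m] : Measure (Rn m)) := by
  simpa using integrable_cutoff_mul (locallyIntegrable_const (1 : ℝ)) hr b

theorem weightedArea_mono {s t : Set (Rn m)} (hst : s ⊆ t) (b : Rn m) {r : ℝ} (hr : 0 < r) :
    weightedArea s b r ≤ weightedArea t b r :=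
  setIntegral_mono_set (integrable_cutoff_sub b hr).integrableOn
    (ae_of_all _ fun _ => cutoff_nonneg _ _) (ae_of_all _ hst)

/-- The normalized weighted area `weightedArea univ b r / r ^ m` of a whole hyperplane, which
depends neither on `b` nor on `r`. -/
def fullDensity (m : ℕ) : ℝ := weightedArea (univ : Set (Rn m)) 0 1

theorem fullDensity_pos (m : ℕ) : 0 < fullDensity m := by
  rw [fullDensity, weightedArea, setIntegral_univ, integral_pos_iff_support_of_nonneg
    (fun _ => cutoff_nonneg _ _) (integrable_cutoff_sub 0 one_pos)]
  refine (measure_ball_pos _ 0 one_pos).trans_le (measure_mono fun a ha => ?_)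
  exact (pow_pos (tent_pos (by simpa using ha)) 2).ne'

theorem weightedArea_div_pow {k : Set (Rn m)} (hk : MeasurableSet k) (b : Rn m) {r : ℝ}
    (hr : 0 < r) : weightedArea k b r / r ^ m = weightedArea ((b + r • ·) ⁻¹' k) 0 1 := by
  have hmeas : Measurable fun α : Rn m => b + r • α := by fun_prop
  have hscale := integral_comp_add_smul (μ := μH[m]) (k.indicator fun a => cutoff r (a - b)) b hr
  rw [integral_indicator hk, finrank_euclideanSpace_fin, smul_eq_mul, inv_mul_eq_div] at hscale
  rw [weightedArea, ← hscale, weightedArea, ← integral_indicator (hmeas hk)]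
  refine integral_congr_ae (ae_of_all _ fun α => ?_)
  have hcutoff : (fun a => cutoff r (a - b)) ∘ (b + r • ·) = fun a => cutoff 1 (a - 0) := by
    ext a
    simp [cutoff, inv_smul_smul₀ hr.ne']
  rw [← hcutoff]
  exact (indicator_comp_right (g := fun a => cutoff r (a - b)) (b + r • ·)).symm

theorem tendsto_weightedArea {J : Type*} {l : Filter J} [l.IsCountablyGenerated]
    {s : J → Set (Rn m)} {t : Set (Rn m)} (hs : ∀ i, MeasurableSet (s i)) (ht : MeasurableSet t)
    (hst : ∀ᵐ a ∂μH[m], ∀ᶠ i in l, a ∈ s i ↔ a ∈ t) (b : Rn m) {r : ℝ} (hr : 0 < r) :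
    Tendsto (fun i => weightedArea (s i) b r) l (𝓝 (weightedArea t b r)) := by
  simp only [weightedArea, ← integral_indicator ht, ← integral_indicator (hs _)]
  have hinteg := integrable_cutoff_sub b hr
  refine tendsto_integral_filter_of_dominated_convergence _
    (Eventually.of_forall fun i => hinteg.aestronglyMeasurable.indicator (hs i))
    (Eventually.of_forall fun i => ae_of_all _ fun a => norm_indicator_le_norm_self _ a)
    hinteg.norm ?_
  filter_upwards [hst] with a ha
  refine tendsto_const_nhds.congr' (ha.mono fun i hi => ?_)
  beta_reduce
  by_cases hat : a ∈ t
  · rw [indicator_of_mem hat, indicator_of_mem (hi.2 hat)]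
  · rw [indicator_of_notMem hat, indicator_of_notMem (mt hi.1 hat)]

theorem ae_inner_ne_zero {ν : Rn m} (hν : ν ≠ 0) :
    ∀ᵐ a ∂(μH[m] : Measure (Rn m)), inner ℝ ν a ≠ 0 := by
  have hne : (ℝ ∙ ν)ᗮ ≠ ⊤ := by
    rwa [Ne, Submodule.orthogonal_eq_top_iff, Submodule.span_singleton_eq_bot]
  filter_upwards [measure_eq_zero_iff_ae_notMem.1 (Measure.addHaar_submodule μH[m] _ hne)] with a ha
  rwa [SetLike.mem_coe, Submodule.mem_orthogonal_singleton_iff_inner_right] at ha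

theorem weightedArea_halfSpace {ν : Rn m} (hν : ν ≠ 0) :
    weightedArea {a | 0 < inner ℝ ν a} 0 1 = fullDensity m / 2 := by
  have hmeas : MeasurableSet {a : Rn m | 0 < inner ℝ ν a} :=
    (isOpen_lt continuous_const (by fun_prop)).measurableSet
  have hcompl :
      weightedArea {a | 0 < inner ℝ ν a}ᶜ 0 1 = weightedArea {a | 0 < inner ℝ ν a} 0 1 := by
    simp only [weightedArea, ← integral_indicator hmeas, ← integral_indicator hmeas.compl]
    rw [← integral_neg_eq_self]
    refine integral_congr_ae ((ae_inner_ne_zero hν).mono fun a ha => ?_)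
    rcases ha.lt_or_gt with hlt | hlt
    · simp [indicator, hlt, hlt.not_gt]
    · simp [indicator, cutoff, tent, hlt, hlt.le]
  have hadd := integral_add_compl hmeas (integrable_cutoff_sub (0 : Rn m) one_pos)
  rw [weightedArea, weightedArea] at hcompl
  rw [fullDensity, weightedArea, weightedArea, setIntegral_univ]
  linarith

theorem tendsto_weightedArea_halfSpace_atTop {ν : Rn m} (hν : ν ≠ 0) (b : Rn m) :
    Tendsto (fun r => weightedArea {a | 0 ≤ inner ℝ ν a} b r / r ^ m) atTop
      (𝓝 (fullDensity m / 2)) := by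
  have hmeas : MeasurableSet {a : Rn m | 0 ≤ inner ℝ ν a} :=
    (isClosed_le continuous_const (by fun_prop)).measurableSet
  have hpos : MeasurableSet {a : Rn m | 0 < inner ℝ ν a} :=
    (isOpen_lt continuous_const (by fun_prop)).measurableSet
  have hscale : ∀ᶠ r in atTop, weightedArea ((b + r • ·) ⁻¹' {a | 0 ≤ inner ℝ ν a}) 0 1 =
      weightedArea {a | 0 ≤ inner ℝ ν a} b r / r ^ m :=
    (eventually_gt_atTop 0).mono fun r hr => (weightedArea_div_pow hmeas b hr).symm
  rw [← weightedArea_halfSpace hν]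
  refine Tendsto.congr' hscale (tendsto_weightedArea (fun r => ?_) hpos ?_ 0 one_pos)
  · exact (show Measurable fun α : Rn m => b + r • α by fun_prop) hmeas
  filter_upwards [ae_inner_ne_zero hν] with a ha
  simp only [mem_preimage, mem_ofPred_eq, inner_add_right, inner_smul_right]
  rcases ha.lt_or_gt with hlt | hlt
  · have hlim := tendsto_atBot_add_const_left atTop (inner ℝ ν b)
      (tendsto_id.atTop_mul_const_of_neg hlt)
    filter_upwards [hlim.eventually_lt_atBot 0] with r hr
    exact iff_of_false (not_le.2 hr) hlt.not_gt
  · have hlim := tendsto_atTop_add_const_left atTop (inner ℝ ν b) (tendsto_id.atTop_mul_const hlt)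
    filter_upwards [hlim.eventually_ge_atTop 0] with r hr
    exact iff_of_true hr hlt

theorem add_smul_mem_ball_dist_iff {E : Type*} [NormedAddCommGroup E] [InnerProductSpace ℝ E]
    (a b α : E) {r : ℝ} (hr : 0 < r) :
    b + r • α ∈ ball a (dist a b) ↔ r * ‖α‖ ^ 2 < 2 * inner ℝ (a - b) α := by
  have hsub : b + r • α - a = r • α - (a - b) := by abel
  rw [mem_ball, dist_eq_norm, dist_eq_norm, hsub, ← sq_lt_sq₀ (norm_nonneg _) (norm_nonneg _),
    norm_sub_sq_real, norm_smul, real_inner_smul_left, real_inner_comm, Real.norm_of_nonneg hr.le]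
  have hfactor : (r * ‖α‖) ^ 2 - 2 * (r * inner ℝ (a - b) α) =
      r * (r * ‖α‖ ^ 2 - 2 * inner ℝ (a - b) α) := by ring
  rw [hfactor, add_lt_iff_neg_right]
  exact ⟨fun hlt => sub_neg.1 (neg_of_mul_neg_right hlt hr.le),
    fun hlt => mul_neg_of_pos_of_neg hr (sub_neg.2 hlt)⟩

theorem tendsto_weightedArea_ball_nhdsGT_zero {a b : Rn m} (hab : a ≠ b) :
    Tendsto (fun r => weightedArea (ball a (dist a b)) b r / r ^ m) (𝓝[>] 0)
      (𝓝 (fullDensity m / 2)) := by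
  have hpos : MeasurableSet {α : Rn m | 0 < inner ℝ (a - b) α} :=
    (isOpen_lt continuous_const (by fun_prop)).measurableSet
  have hscale : ∀ᶠ r in 𝓝[>] 0, weightedArea ((b + r • ·) ⁻¹' ball a (dist a b)) 0 1 =
      weightedArea (ball a (dist a b)) b r / r ^ m :=
    eventually_mem_nhdsWithin.mono fun r hr =>
      (weightedArea_div_pow measurableSet_ball b hr).symm
  rw [← weightedArea_halfSpace (sub_ne_zero.2 hab)]
  refine Tendsto.congr' hscale (tendsto_weightedArea (fun r => ?_) hpos
    (ae_of_all _ fun α => ?_) 0 one_pos)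
  · exact (show Measurable fun α : Rn m => b + r • α by fun_prop) measurableSet_ball
  rcases lt_or_ge 0 (inner ℝ (a - b) α) with hα | hα
  · have hlim : Tendsto (fun r : ℝ => r * ‖α‖ ^ 2) (𝓝[>] 0) (𝓝 (0 * ‖α‖ ^ 2)) :=
      (tendsto_id.mul_const _).mono_left nhdsWithin_le_nhds
    rw [zero_mul] at hlim
    filter_upwards [hlim.eventually_lt_const (mul_pos two_pos hα), self_mem_nhdsWithin]
      with r hlt hr
    exact iff_of_true ((add_smul_mem_ball_dist_iff a b α hr).2 hlt) hα
  · filter_upwards [self_mem_nhdsWithin] with r hr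
    refine iff_of_false (fun hmem => ?_) hα.not_gt
    have hlt := (add_smul_mem_ball_dist_iff a b α hr).1 hmem
    nlinarith [mul_nonneg (le_of_lt hr) (sq_nonneg ‖α‖)]

theorem weightedArea_le_measureReal {s : Set (Rn m)} (b : Rn m) {r : ℝ} (hr : 0 < r) :
    weightedArea s b r ≤ μH[m].real (closedBall b r ∩ s) := by
  have hconst : ∫ a in s, (closedBall b r).indicator (fun _ => (1 : ℝ)) a ∂μH[m] =
      μH[m].real (closedBall b r ∩ s) := by
    rw [integral_indicator_const _ measurableSet_closedBall, smul_eq_mul, mul_one,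
      measureReal_restrict_apply measurableSet_closedBall]
  rw [← hconst]
  refine integral_mono (integrable_cutoff_sub b hr).integrableOn ?_ fun a => ?_
  · exact (integrable_indicator_iff measurableSet_closedBall).2 (integrableOn_const
      ((Measure.restrict_apply_le _ _).trans_lt measure_closedBall_lt_top).ne)
  · by_cases ha : a ∈ closedBall b r
    · rw [indicator_of_mem ha]
      exact cutoff_le_one _ _
    · rw [indicator_of_notMem ha, cutoff_sub_eq_zero hr fun hball =>
        ha (ball_subset_closedBall hball)]

theorem le_weightedArea_div_pow {k : Set (Rn m)} (hk : MeasurableSet k) (b : Rn m) {r : ℝ}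
    (hr : 0 < r) : fullDensity m - μH[m].real (ball (0 : Rn m) 1) *
      (1 - μH[m].real (k ∩ closedBall b r) / μH[m].real (closedBall b r)) ≤
        weightedArea k b r / r ^ m := by
  have hadd : weightedArea k b r + weightedArea kᶜ b r = weightedArea univ b r := by
    rw [weightedArea, weightedArea, weightedArea, setIntegral_univ]
    exact integral_add_compl hk (integrable_cutoff_sub b hr)
  have huniv := weightedArea_div_pow MeasurableSet.univ b hr
  rw [preimage_univ, ← fullDensity, div_eq_iff (by positivity)] at huniv
  have hball : μH[m].real (closedBall b r) = r ^ m * μH[m].real (ball (0 : Rn m) 1) := by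
    rw [Measure.addHaar_real_closedBall _ _ hr.le, finrank_euclideanSpace_fin]
  have hV : 0 < μH[m].real (ball (0 : Rn m) 1) :=
    ENNReal.toReal_pos (measure_ball_pos _ _ one_pos).ne' measure_ball_lt_top.ne
  have hsplit := measureReal_inter_add_sdiff (μ := μH[m]) hk
    (measure_closedBall_lt_top (x := b) (r := r)).ne
  have hcompl := weightedArea_le_measureReal (s := kᶜ) b hr
  rw [← Set.sdiff_eq] at hcompl
  rw [inter_comm, hball] at hsplit
  rw [hball, le_div_iff₀ (by positivity)]
  have hratio : (fullDensity m - μH[m].real (ball (0 : Rn m) 1) *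
      (1 - μH[m].real (k ∩ closedBall b r) / (r ^ m * μH[m].real (ball (0 : Rn m) 1)))) * r ^ m =
      fullDensity m * r ^ m - r ^ m * μH[m].real (ball (0 : Rn m) 1) +
        μH[m].real (k ∩ closedBall b r) := by
    field_simp
    ring
  linarith

theorem eventually_lt_weightedArea_div_pow {k : Set (Rn m)} (hk : MeasurableSet k) {b : Rn m}
    (hb : Tendsto (fun r => μH[m] (k ∩ closedBall b r) / μH[m] (closedBall b r)) (𝓝[>] 0) (𝓝 1))
    {a : ℝ} (ha : a < fullDensity m) :
    ∀ᶠ r in 𝓝[>] 0, a < weightedArea k b r / r ^ m := by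
  have hreal : Tendsto (fun r => μH[m].real (k ∩ closedBall b r) / μH[m].real (closedBall b r))
      (𝓝[>] 0) (𝓝 1) := by
    simpa only [ENNReal.toReal_div, ENNReal.toReal_one, measureReal_def, Function.comp_def] using
      (ENNReal.tendsto_toReal ENNReal.one_ne_top).comp hb
  have hlower := ((hreal.const_sub 1).const_mul (μH[m].real (ball (0 : Rn m) 1))).const_sub
    (fullDensity m)
  rw [sub_self, mul_zero, sub_zero] at hlower
  filter_upwards [hlower.eventually_const_lt ha, self_mem_nhdsWithin] with r hlt hr
  exact hlt.trans_le (le_weightedArea_div_pow hk b hr)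

end Density

theorem exists_ball_subset_of_notMem_closure_compl {X : Type*} [MetricSpace X] [ProperSpace X]
    {k : Set X} {a : X} (ha : a ∉ closure kᶜ) (hk : kᶜ.Nonempty) :
    ∃ b ∈ closure kᶜ, a ≠ b ∧ ball a (dist a b) ⊆ k := by
  obtain ⟨b, hb, hdist⟩ := isClosed_closure.exists_infDist_eq_dist hk.closure a
  refine ⟨b, hb, fun hab => ha (hab ▸ hb), fun x hx => by_contra fun hxk => ?_⟩
  have hle := infDist_le_dist_of_mem (x := a) (subset_closure (mem_compl hxk))
  rw [hdist, dist_comm a x] at hle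
  exact (mem_ball.1 hx).not_ge hle

namespace FlatMinimizer
variable {m : ℕ} {P : MSPair (m + 1)} {ι : Rn m →ᵃⁱ[ℝ] Rn (m + 1)} {ν : Rn m}

theorem weissEnergy_eq_zero (h : FlatMinimizer P ι) (hnull : μH[m] (ι ⁻¹' P.K) = 0) {b : Rn m}
    {c C : ℝ} (hc : ∀ r, 0 < r → height P (ι b) c r ≤ C * r) {r : ℝ} (hr : 0 < r) :
    weissEnergy P ι b c r = 0 := by
  have harea : ∀ r, weightedArea (ι ⁻¹' P.K) b r = 0 := fun r => by
    rw [weightedArea, Measure.restrict_eq_zero.2 hnull, integral_zero_measure]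
  refine le_antisymm (h.weissEnergy_le hc (fun a ha => ?_) hr)
    (h.le_weissEnergy hc (fun a ha => ?_) hr)
  all_goals exact Eventually.of_forall fun r => by rwa [harea, zero_div]

theorem eventually_weightedArea_div_pow_lt (hν : ν ≠ 0)
    (hsub : ι ⁻¹' P.K ⊆ {a | 0 ≤ inner ℝ ν a}) (b : Rn m) {a : ℝ}
    (ha : fullDensity m / 2 < a) :
    ∀ᶠ r in atTop, weightedArea (ι ⁻¹' P.K) b r / r ^ m < a := by
  filter_upwards [(tendsto_weightedArea_halfSpace_atTop hν b).eventually_lt_const ha,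
    eventually_gt_atTop 0] with r hlt hr
  exact (div_le_div_of_nonneg_right (weightedArea_mono hsub b hr) (by positivity)).trans_lt hlt

theorem weissEnergy_eq_half (h : FlatMinimizer P ι) (hν : ν ≠ 0)
    (hsub : ι ⁻¹' P.K ⊆ {a | 0 ≤ inner ℝ ν a}) {a b : Rn m} (hab : a ≠ b)
    (hball : ball a (dist a b) ⊆ ι ⁻¹' P.K) {c C : ℝ}
    (hc : ∀ r, 0 < r → height P (ι b) c r ≤ C * r) {r : ℝ} (hr : 0 < r) :
    weissEnergy P ι b c r = fullDensity m / 2 := by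
  refine le_antisymm (h.weissEnergy_le hc
    (fun _ => eventually_weightedArea_div_pow_lt hν hsub b) hr)
    (h.le_weissEnergy hc (fun a' ha' => ?_) hr)
  filter_upwards [(tendsto_weightedArea_ball_nhdsGT_zero hab).eventually_const_lt ha',
    self_mem_nhdsWithin] with r hlt hr
  exact hlt.trans_le
    (div_le_div_of_nonneg_right (weightedArea_mono hball b hr) (pow_nonneg (le_of_lt hr) m))

/-- The density of `K` at a point of density one exceeds the density of `K` at infinity, which
monotonicity forbids at points of the closure of the complement. -/
theorem exists_notMem_closure_compl (h : FlatMinimizer P ι) (hν : ν ≠ 0)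
    (hsub : ι ⁻¹' P.K ⊆ {a | 0 ≤ inner ℝ ν a}) (hpos : μH[m] (ι ⁻¹' P.K) ≠ 0) :
    ∃ a, a ∉ closure (ι ⁻¹' P.K)ᶜ := by
  have hk := (P.closed.preimage ι.continuous).measurableSet
  have hne : NeBot (ae (μH[m].restrict (ι ⁻¹' P.K))) :=
    ae_neBot.2 (mt Measure.restrict_eq_zero.1 hpos)
  obtain ⟨a, hdensity⟩ := (Besicovitch.ae_tendsto_measure_inter_div μH[m] (ι ⁻¹' P.K)).exists
  refine ⟨a, fun hcl => ?_⟩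
  obtain ⟨C, hC⟩ := h.exists_weightedDirichlet_le
  obtain ⟨c, hc⟩ := h.exists_forall_height_le hC hcl
  have hlower := h.le_weissEnergy hc
    (fun _ => eventually_lt_weightedArea_div_pow hk hdensity) one_pos
  have hupper := h.weissEnergy_le hc
    (fun _ => eventually_weightedArea_div_pow_lt hν hsub a) one_pos
  linarith [fullDensity_pos m]

end FlatMinimizer

/-! ### Homogeneity where the Weiss energy is constant -/

theorem eq_sqrt_mul_of_hasDerivAt_div {f : ℝ → ℝ}
    (hac : ∀ r₁ r₂, 0 < r₁ → r₁ ≤ r₂ → AbsolutelyContinuousOnInterval f r₁ r₂)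
    (hderiv : ∀ᵐ s, 0 < s → HasDerivAt f (f s / (2 * s)) s) {t : ℝ} (ht : 0 < t) :
    f t = √t * f 1 := by
  have hpos : ∀ s ∈ uIcc 1 t, 0 < s := fun s hs => (lt_min one_pos ht).trans_le hs.1
  have hsqrt : AbsolutelyContinuousOnInterval (fun s : ℝ => (√s)⁻¹) 1 t :=
    ContDiffOn.absolutelyContinuousOnInterval fun s hs =>
      ((contDiffAt_id.sqrt (hpos s hs).ne').inv
        (Real.sqrt_pos.2 (hpos s hs)).ne').contDiffWithinAt
  have hf : AbsolutelyContinuousOnInterval f 1 t := by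
    rcases le_total 1 t with hle | hle
    · exact hac 1 t one_pos hle
    · exact (hac t 1 ht hle).symm
  obtain ⟨C, hC⟩ := (hf.mul hsqrt).const_of_ae_hasDerivAt_zero <| by
    filter_upwards [hderiv] with s hs hst
    have hs0 := hpos s hst
    have hroot := ((hasDerivAt_id s).sqrt hs0.ne').inv (Real.sqrt_pos.2 hs0).ne'
    refine ((hs hs0).mul hroot).congr_deriv ?_
    have hsq : √s ^ 2 = s := Real.sq_sqrt hs0.le
    have hne : √s ≠ 0 := (Real.sqrt_pos.2 hs0).ne'
    simp only [id, Pi.inv_apply, hsq]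
    field_simp
    ring
  have hone := hC 1 left_mem_uIcc
  have htt := hC t right_mem_uIcc
  simp only [Pi.mul_apply, Real.sqrt_one, inv_one, mul_one] at hone htt
  rw [← hone, ← div_eq_mul_inv, div_eq_iff (Real.sqrt_pos.2 ht).ne'] at htt
  rw [htt, mul_comm]

theorem MSPair.locallyL2_euler {N : ℕ} {P : MSPair N} (hK : volume P.K = 0) (y : Rn N) (c : ℝ) :
    LocallyL2 (fun x => 2 * inner ℝ (x - y) (gradient P.u x) - (P.u x - c)) volume := by
  have hradial : LocallyL2 (fun x => inner ℝ (x - y) (gradient P.u x)) volume :=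
    LocallyL2.inner_continuous (by fun_prop) (MSPair.locallyL2_gradient hK)
  simpa only [smul_eq_mul, neg_one_mul, ← sub_eq_add_neg] using
    (hradial.const_smul 2).add ((MSPair.locallyL2_sub_const hK c).const_smul (-1))

namespace FlatMinimizer
variable {m : ℕ} {P : MSPair (m + 1)} {ι : Rn m →ᵃⁱ[ℝ] Rn (m + 1)} {b : Rn m} {c w : ℝ}

theorem ae_euler_of_mem_ball (h : FlatMinimizer P ι)
    (hw : ∀ r, 0 < r → weissEnergy P ι b c r = w) {r : ℝ} (hr : 0 < r) :
    ∀ᵐ x, x ∈ ball (ι b) r → 2 * inner ℝ (x - ι b) (gradient P.u x) = P.u x - c := by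
  have hconst : HasDerivAt (weissEnergy P ι b c) 0 r :=
    (hasDerivAt_const r w).congr_of_eventuallyEq ((eventually_gt_nhds hr).mono hw)
  have hzero := (mul_eq_zero.1 ((h.hasDerivAt_weissEnergy b c hr).unique hconst)).resolve_left
    (by positivity)
  have hinteg := integrable_cutoffSlope_mul
    (MSPair.locallyL2_euler h.volume_K (ι b) c).locallyIntegrable_norm_sq hr (ι b)
  simp only [Real.norm_eq_abs, sq_abs] at hinteg
  rw [integral_eq_zero_iff_of_nonneg
    (fun x => mul_nonneg (cutoffSlope_nonneg _ _) (sq_nonneg _)) hinteg] at hzero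
  filter_upwards [hzero] with x hx hxball
  exact sub_eq_zero.1 (pow_eq_zero_iff two_ne_zero |>.1
    ((mul_eq_zero.1 hx).resolve_left (cutoffSlope_sub_pos hr hxball).ne'))

theorem ae_euler (h : FlatMinimizer P ι) (hw : ∀ r, 0 < r → weissEnergy P ι b c r = w) :
    ∀ᵐ x, 2 * inner ℝ (x - ι b) (gradient P.u x) = P.u x - c := by
  filter_upwards [ae_all_iff.2 fun n : ℕ =>
    h.ae_euler_of_mem_ball hw (r := n + 1) (by positivity)] with x hx
  obtain ⟨n, hn⟩ := exists_nat_gt (dist x (ι b))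
  exact hx n (mem_ball.2 (hn.trans (lt_add_one _)))

theorem ae_sub_comp_ray_eq_sqrt_mul (h : FlatMinimizer P ι)
    (hw : ∀ r, 0 < r → weissEnergy P ι b c r = w) :
    ∀ᵐ ξ, ∀ t, 0 < t → P.u (ι b + t • ξ) - c = √t * (P.u (ι b + ξ) - c) := by
  filter_upwards [h.ae_ray_notMem b, ae_ray_of_ae ((P.ae_differentiableAt h.volume_K).and
    (h.ae_euler hw)) measurableSet_Ioi (fun s hs => (ne_of_gt hs : s ≠ 0)) (ι b)]
    with ξ hK hray t ht
  have hode := eq_sqrt_mul_of_hasDerivAt_div (f := fun s => P.u (ι b + s • ξ) - c)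
    (fun r₁ r₂ hr₁ hr => ?_) ?_ ht
  · simpa only [one_smul] using hode
  · have hpos : ∀ s ∈ uIcc r₁ r₂, s ≠ 0 := fun s hs =>
      (hr₁.trans_le (uIcc_of_le hr ▸ hs).1).ne'
    exact (absolutelyContinuousOnInterval_comp_ray P.locallyLipschitzOn_u
      fun s hs => hK s (hpos s hs)).sub
      ((LipschitzWith.const c).lipschitzOnWith).absolutelyContinuousOnInterval
  · filter_upwards [hray] with s hs hs0
    obtain ⟨hdiff, heuler⟩ := hs hs0
    refine ((hasDerivAt_comp_ray hdiff).sub_const c).congr_deriv ?_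
    rw [← heuler, add_sub_cancel_left, real_inner_smul_left]
    field_simp

theorem sub_comp_homothety_eq_sqrt_mul (h : FlatMinimizer P ι)
    (hw : ∀ r, 0 < r → weissEnergy P ι b c r = w) {t : ℝ} (ht : 0 < t) {x : Rn (m + 1)}
    (hx : x ∉ P.K) (hxt : ι b + t • (x - ι b) ∉ P.K) :
    P.u (ι b + t • (x - ι b)) - c = √t * (P.u x - c) := by
  have hcont : ∀ z, z ∉ P.K → ContinuousAt P.u z := fun z hz =>
    P.locallyLipschitzOn_u.continuousOn.continuousAt (P.closed.isOpen_compl.mem_nhds hz)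
  have hfreq := mem_closure_iff_frequently.1
    (Measure.dense_of_ae (h.ae_sub_comp_ray_eq_sqrt_mul hw) (x - ι b))
  have hleft : ContinuousAt (fun ξ => P.u (ι b + t • ξ) - c) (x - ι b) :=
    ((hcont _ hxt).comp (f := fun ξ => ι b + t • ξ) (by fun_prop)).sub continuousAt_const
  have hright : ContinuousAt (fun ξ => √t * (P.u (ι b + ξ) - c)) (x - ι b) := by
    rw [← add_sub_cancel (ι b) x] at hx
    exact (((hcont _ hx).comp (f := fun ξ => ι b + ξ) (by fun_prop)).sub
      continuousAt_const).const_mul _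
  have heq := tendsto_nhds_unique_of_frequently_eq hleft.tendsto hright.tendsto
    (hfreq.mono fun ξ hξ => hξ t ht)
  rwa [add_sub_cancel (ι b) x] at heq

end FlatMinimizer

/-! ### Removable singularities -/

theorem locallyLipschitzOn_congr {X Y : Type*} [PseudoEMetricSpace X] [PseudoEMetricSpace Y]
    {s : Set X} {f g : X → Y} (hf : LocallyLipschitzOn s f) (hfg : EqOn f g s) :
    LocallyLipschitzOn s g := by
  rw [locallyLipschitzOn_iff_restrict] at hf ⊢
  rwa [← domRestrict_eq_domRestrict_iff.2 hfg]

theorem locallyLipschitzOn_union {X Y : Type*} [PseudoEMetricSpace X] [PseudoEMetricSpace Y]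
    {s t : Set X} {f : X → Y} (hs : IsOpen s) (ht : IsOpen t) (hfs : LocallyLipschitzOn s f)
    (hft : LocallyLipschitzOn t f) : LocallyLipschitzOn (s ∪ t) f := by
  rintro x (hx | hx)
  · obtain ⟨C, v, hv, hC⟩ := hfs hx
    exact ⟨C, v, mem_nhdsWithin_of_mem_nhds (hs.nhdsWithin_eq hx ▸ hv), hC⟩
  · obtain ⟨C, v, hv, hC⟩ := hft hx
    exact ⟨C, v, mem_nhdsWithin_of_mem_nhds (ht.nhdsWithin_eq hx ▸ hv), hC⟩

theorem locallyLipschitzOn_comp_preimage {X Y Z : Type*} [PseudoEMetricSpace X]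
    [PseudoEMetricSpace Y] [PseudoEMetricSpace Z] {s : Set Y} {g : Y → Z} {f : X → Y}
    (hg : LocallyLipschitzOn s g) (hf : LocallyLipschitz f) :
    LocallyLipschitzOn (f ⁻¹' s) (g ∘ f) := fun x hx => by
  obtain ⟨C, v, hv, hC⟩ := hg hx
  obtain ⟨D, v', hv', hD⟩ := hf x
  refine ⟨C * D, f ⁻¹' v ∩ v', inter_mem
    (hf.continuous.continuousWithinAt.preimage_mem_nhdsWithin'' hv rfl)
    (mem_nhdsWithin_of_mem_nhds hv'), ?_⟩
  exact hC.comp (hD.mono inter_subset_right) fun z hz => hz.1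

theorem MSPair.K_subset_of_locallyLipschitzOn {N : ℕ} {P : MSPair N} (hred : MSIsReduced N P)
    (hconn : IsPreconnected P.Kᶜ) (hK : volume P.K = 0) {L : Set (Rn N)} (hL : IsClosed L)
    {v : Rn N → ℝ} (hv : LocallyLipschitzOn Lᶜ v) (hvu : EqOn P.u v P.Kᶜ) : P.K ⊆ L := by
  intro x hx
  have hvP : LocallyLipschitzOn P.Kᶜ v := locallyLipschitzOn_congr P.locallyLipschitzOn_u hvu
  have hvu_ae : P.u =ᵐ[volume] v := (measure_eq_zero_iff_ae_notMem.1 hK).mono hvu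
  have hgrad_ae : gradient P.u =ᵐ[volume] gradient v := by
    filter_upwards [measure_eq_zero_iff_ae_notMem.1 hK] with z hz
    exact EventuallyEq.gradient_eq (mem_of_superset (P.closed.isOpen_compl.mem_nhds hz) hvu)
  let Q := MSPair.ofLocallyL2 (L := P.K ∩ (L ∪ (ball x 1)ᶜ)) (v := v)
    (P.closed.inter (hL.union isOpen_ball.isClosed_compl))
    ((locallyLipschitzOn_union P.closed.isOpen_compl hL.isOpen_compl hvP hv).mono fun z hz =>
      or_iff_not_imp_left.2 fun hzK hzL => hz ⟨not_not.1 hzK, Or.inl hzL⟩)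
    ((MSPair.locallyL2_u hK).congr_ae hvu_ae) ((MSPair.locallyL2_gradient hK).congr_ae hgrad_ae)
  have hcomp : Competitor N P Q (ball x 1) := by
    refine competitor_of_isPreconnected_compl hconn ?_ fun z hz =>
      (hvu fun hzK => hz (Or.inl (Or.inr hzK))).symm
    exact Subset.antisymm (fun z hz => ⟨hz.1.1, hz.2⟩) fun z hz => ⟨⟨hz.1, Or.inr hz.2⟩, hz.2⟩
  have hQ : Q.K = P.K := hred x 1 one_pos Q hcomp inter_subset_left fun z hz => (hvu hz).symm
  exact ((hQ ▸ hx : x ∈ Q.K).2).resolve_right fun hxball => hxball (mem_ball_self one_pos)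

namespace FlatMinimizer
variable {m : ℕ} {P : MSPair (m + 1)} {ι : Rn m →ᵃⁱ[ℝ] Rn (m + 1)} {b : Rn m} {c w : ℝ}

/-- Homogeneity extends `u` across every point of `K` that a homothety moves off `K`. -/
theorem homothety_mem_K (h : FlatMinimizer P ι) (hred : MSIsReduced (m + 1) P)
    (hw : ∀ r, 0 < r → weissEnergy P ι b c r = w) {t : ℝ} (ht : 0 < t) {x : Rn (m + 1)}
    (hx : x ∈ P.K) : ι b + t • (x - ι b) ∈ P.K := by
  classical
  let φ : Rn (m + 1) → Rn (m + 1) := fun z => ι b + t • (z - ι b)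
  let v : Rn (m + 1) → ℝ := fun z => c + (√t)⁻¹ * (P.u (φ z) - c)
  have hφ : LocallyLipschitz φ := ContDiff.locallyLipschitz (𝕂 := ℝ) (by fun_prop)
  have hv : LocallyLipschitzOn (φ ⁻¹' P.K)ᶜ v :=
    locallyLipschitzOn_comp_preimage (g := fun z => c + (√t)⁻¹ * (P.u z - c))
      (locallyLipschitzOn_comp_prodMk (g := fun z : ℝ × ℝ => c + (√t)⁻¹ * (z.1 - c))
        (ContDiff.locallyLipschitz (𝕂 := ℝ) (by fun_prop)) P.locallyLipschitzOn_u
        P.locallyLipschitzOn_u) hφ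
  refine P.K_subset_of_locallyLipschitzOn hred h.isPreconnected_compl h.volume_K
    (P.closed.preimage hφ.continuous) (v := P.K.piecewise v P.u)
    (locallyLipschitzOn_congr hv fun z hz => ?_)
    (fun z hz => (piecewise_eq_of_notMem _ _ _ hz).symm) hx
  by_cases hzK : z ∈ P.K
  · rw [piecewise_eq_of_mem _ _ _ hzK]
  · rw [piecewise_eq_of_notMem _ _ _ hzK]
    change c + (√t)⁻¹ * (P.u (ι b + t • (z - ι b)) - c) = P.u z
    rw [h.sub_comp_homothety_eq_sqrt_mul hw ht hzK hz,
      inv_mul_cancel_left₀ (Real.sqrt_pos.2 ht).ne', add_sub_cancel]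

theorem homothety_mem_preimage_K (h : FlatMinimizer P ι) (hred : MSIsReduced (m + 1) P)
    (hw : ∀ r, 0 < r → weissEnergy P ι b c r = w) {t : ℝ} (ht : 0 < t) {a : Rn m}
    (ha : a ∈ ι ⁻¹' P.K) : b + t • (a - b) ∈ ι ⁻¹' P.K := by
  have hsub : ι.linearIsometry (a - b) = ι a - ι b := ι.map_vsub a b
  have hι : ι (b + t • (a - b)) = ι b + t • (ι a - ι b) := by
    simpa only [vadd_eq_add, add_comm, map_smul, hsub] using ι.map_vadd b (t • (a - b))
  rw [mem_preimage, hι]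
  exact h.homothety_mem_K hred hw ht ha

end FlatMinimizer

/-! ### Cones containing a half-space -/

section Cone

variable {E : Type*} [NormedAddCommGroup E] [InnerProductSpace ℝ E] {k : Set E} {ν b e : E}

theorem mem_of_forall_homothety_mem (hk : IsClosed k)
    (hcone : ∀ t : ℝ, 0 < t → b + t • (e - b) ∈ k) : b ∈ k := by
  have hlim : Tendsto (fun t : ℝ => b + t • (e - b)) (𝓝[>] 0) (𝓝 b) :=
    tendsto_nhdsWithin_of_tendsto_nhds (Continuous.tendsto' (by fun_prop) _ _ (by simp))
  exact hk.mem_of_tendsto hlim (eventually_mem_nhdsWithin.mono hcone)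

theorem setOf_inner_nonneg_subset_of_setOf_inner_pos_subset (hk : IsClosed k) (hν : ν ≠ 0)
    (hpos : {a | 0 < inner ℝ ν a} ⊆ k) : {a | 0 ≤ inner ℝ ν a} ⊆ k := fun a ha => by
  refine mem_of_forall_homothety_mem (e := a + ν) hk fun t ht => hpos ?_
  rw [mem_ofPred_eq, add_sub_cancel_left, inner_add_right, real_inner_smul_right]
  exact add_pos_of_nonneg_of_pos ha (mul_pos ht (real_inner_self_pos.2 hν))

theorem inner_nonneg_of_forall_add_smul (hsub : k ⊆ {a | 0 ≤ inner ℝ ν a}) {α : E}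
    (hα : ∀ t : ℝ, 0 < t → b + t • α ∈ k) : 0 ≤ inner ℝ ν α := by
  by_contra! hneg
  obtain ⟨t, ht, hlt⟩ : ∃ t : ℝ, 0 < t ∧ inner ℝ ν b + t * inner ℝ ν α < 0 := by
    refine ⟨(|inner ℝ ν b| + 1) / -inner ℝ ν α, by have := neg_pos.2 hneg; positivity, ?_⟩
    rw [div_neg, neg_mul, div_mul_cancel₀ _ hneg.ne]
    linarith [le_abs_self (inner ℝ ν b)]
  have hmem : 0 ≤ inner ℝ ν (b + t • α) := hsub (hα t ht)
  rw [inner_add_right, real_inner_smul_right] at hmem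
  exact hmem.not_gt hlt

theorem inner_nonpos_of_homothety_mem (hsub : k ⊆ {a | 0 ≤ inner ℝ ν a})
    (hcone : ∀ t : ℝ, 0 < t → ∀ a ∈ k, b + t • (a - b) ∈ k) (he : e ∈ k)
    (hedge : inner ℝ ν e = 0) : inner ℝ ν b ≤ 0 := by
  have hmem : 0 ≤ inner ℝ ν (b + (2 : ℝ) • (e - b)) := hsub (hcone 2 two_pos e he)
  rw [inner_add_right, real_inner_smul_right, inner_sub_right, hedge] at hmem
  linarith

theorem inner_pos_of_inner_pos_imp_inner_nonneg {n : E} (hn : n ≠ 0)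
    (himp : ∀ α : E, 0 < inner ℝ n α → 0 ≤ inner ℝ ν α) {α : E} (hα : 0 < inner ℝ ν α) :
    0 < inner ℝ n α := by
  by_contra! hle
  have hnn : 0 < inner ℝ n n := real_inner_self_pos.2 hn
  obtain ⟨s, hs, hlt⟩ : ∃ s : ℝ, 0 ≤ s ∧ inner ℝ ν n - s * inner ℝ ν α < 0 := by
    refine ⟨(|inner ℝ ν n| + 1) / inner ℝ ν α, by positivity, ?_⟩
    rw [div_mul_cancel₀ _ hα.ne']
    linarith [le_abs_self (inner ℝ ν n)]
  have hnonneg := himp (n - s • α) <| by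
    rw [inner_sub_right, real_inner_smul_right]
    linarith [mul_nonpos_of_nonneg_of_nonpos hs hle]
  rw [inner_sub_right, real_inner_smul_right] at hnonneg
  exact hnonneg.not_gt hlt

theorem add_mem_of_ball_subset {a α : E} (hcone : ∀ t : ℝ, 0 < t → ∀ a ∈ k, b + t • (a - b) ∈ k)
    (hball : ball a (dist a b) ⊆ k) (hα : 0 < inner ℝ (a - b) α) : b + α ∈ k := by
  have hα0 : 0 < ‖α‖ := norm_pos_iff.2 fun h => hα.ne' (by rw [h, inner_zero_right])
  have hr : 0 < inner ℝ (a - b) α / ‖α‖ ^ 2 := by positivity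
  have hmem := hball ((add_smul_mem_ball_dist_iff a b α hr).2 <| by
    rw [div_mul_cancel₀ _ (by positivity)]
    linarith)
  simpa only [add_sub_cancel_left, inv_smul_smul₀ hr.ne'] using hcone _ (inv_pos.2 hr) _ hmem

theorem setOf_inner_nonneg_subset_of_homothety_mem (hk : IsClosed k) (hν : ν ≠ 0)
    (hsub : k ⊆ {a | 0 ≤ inner ℝ ν a})
    (hcone : ∀ t : ℝ, 0 < t → ∀ a ∈ k, b + t • (a - b) ∈ k) {a : E} (hab : a ≠ b)
    (hball : ball a (dist a b) ⊆ k) (he : e ∈ k) (hedge : inner ℝ ν e = 0) :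
    {a | 0 ≤ inner ℝ ν a} ⊆ k := by
  have hhalf : ∀ α, 0 < inner ℝ (a - b) α → b + α ∈ k := fun α =>
    add_mem_of_ball_subset hcone hball
  have himp : ∀ α, 0 < inner ℝ (a - b) α → 0 ≤ inner ℝ ν α := fun α hα =>
    inner_nonneg_of_forall_add_smul hsub fun t ht => hhalf (t • α) <| by
      rw [real_inner_smul_right]
      exact mul_pos ht hα
  refine setOf_inner_nonneg_subset_of_setOf_inner_pos_subset hk hν fun x hx => ?_
  have hb := inner_nonpos_of_homothety_mem hsub hcone he hedge
  rw [← add_sub_cancel b x]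
  refine hhalf _ (inner_pos_of_inner_pos_imp_inner_nonneg (sub_ne_zero.2 hab) himp ?_)
  rw [inner_sub_right]
  exact sub_pos.2 (hb.trans_lt hx)

end Cone

/-! ### Minimizers in a half-hyperplane -/

section Halfspace

variable {m : ℕ} {P : MSPair (m + 1)} {ι : Rn m →ᵃⁱ[ℝ] Rn (m + 1)} {ν : Rn m}

theorem inner_neg_self_neg {E : Type*} [NormedAddCommGroup E] [InnerProductSpace ℝ E] {ν : E}
    (hν : ν ≠ 0) : inner ℝ ν (-ν) < 0 := by
  rw [inner_neg_right]
  exact neg_neg_of_pos (real_inner_self_pos.2 hν)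

theorem starConvex_compl_image {E F : Type*} [AddCommGroup E] [Module ℝ E] [AddCommGroup F]
    [Module ℝ F] {f : E →ᵃ[ℝ] F} (hf : Function.Injective f) {s : Set E} {y : E} (hy : y ∉ s)
    (hs : StarConvex ℝ y sᶜ) : StarConvex ℝ (f y) (f '' s)ᶜ := by
  rw [starConvex_iff_segment_subset]
  rintro x hx _ hz ⟨a, ha, rfl⟩
  rw [segment_eq_image_lineMap] at hz
  obtain ⟨t, ht, hta⟩ := hz
  rcases ht.1.eq_or_lt with rfl | ht0
  · rw [AffineMap.lineMap_apply_zero] at hta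
    exact hy (hf hta ▸ ha)
  have hx_eq : x = f (AffineMap.lineMap y a t⁻¹) := by
    rw [f.apply_lineMap, ← hta, AffineMap.lineMap_lineMap_right, inv_mul_cancel₀ ht0.ne',
      AffineMap.lineMap_apply_one]
  have hnotMem : AffineMap.lineMap y a t⁻¹ ∈ sᶜ := fun hmem => hx (hx_eq ▸ mem_image_of_mem f hmem)
  refine starConvex_iff_segment_subset.1 hs hnotMem ?_ ha
  rw [segment_eq_image_lineMap]
  exact ⟨t, ht, by rw [AffineMap.lineMap_lineMap_right, mul_inv_cancel₀ ht0.ne',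
    AffineMap.lineMap_apply_one]⟩

theorem isPreconnected_compl_of_subset_image (hν : ν ≠ 0)
    (hsub : P.K ⊆ ι '' {a | 0 ≤ inner ℝ ν a}) : IsPreconnected P.Kᶜ := by
  have hneg : -ν ∈ {a | 0 ≤ inner ℝ ν a}ᶜ := (inner_neg_self_neg hν).not_ge
  have hconvex : Convex ℝ {a | 0 ≤ inner ℝ ν a}ᶜ := by
    simp only [compl_ofPred, not_le]
    exact convex_halfSpace_lt (innerₗ (Rn m) ν).isLinear 0
  have hstar : StarConvex ℝ (ι (-ν)) (ι '' {a | 0 ≤ inner ℝ ν a})ᶜ :=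
    starConvex_compl_image (f := ι.toAffineMap) ι.injective hneg (hconvex.starConvex hneg)
  have hconn : IsPreconnected (ι '' {a | 0 ≤ inner ℝ ν a})ᶜ :=
    (hstar.isPathConnected fun hmem => hneg
      ((ι.injective.mem_set_image).1 hmem)).isConnected.isPreconnected
  have hnull : volume (ι '' {a | 0 ≤ inner ℝ ν a}) = 0 :=
    measure_mono_null (image_subset_range _ _) (volume_range_affineIsometry ι)
  refine hconn.subset_closure (compl_subset_compl.2 hsub) ?_
  rw [closure_compl, Measure.interior_eq_empty_of_null hnull, compl_empty]
  exact subset_univ _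

namespace FlatMinimizer

theorem hausdorffMeasure_preimage_K_ne_zero (h : FlatMinimizer P ι)
    (hred : MSIsReduced (m + 1) P) (hne : (ι ⁻¹' P.K).Nonempty) (hcompl : (ι ⁻¹' P.K)ᶜ.Nonempty) :
    μH[m] (ι ⁻¹' P.K) ≠ 0 := fun hnull => by
  obtain ⟨b, hb⟩ := hcompl
  obtain ⟨e, he⟩ := hne
  obtain ⟨C, hC⟩ := h.exists_weightedDirichlet_le
  obtain ⟨c, hc⟩ := h.exists_forall_height_le hC (subset_closure hb)
  have hw : ∀ r, 0 < r → weissEnergy P ι b c r = 0 := fun r hr =>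
    h.weissEnergy_eq_zero hnull hc hr
  exact hb (mem_of_forall_homothety_mem (P.closed.preimage ι.continuous) fun t ht =>
    h.homothety_mem_preimage_K hred hw ht he)

theorem setOf_inner_nonneg_subset (h : FlatMinimizer P ι) (hred : MSIsReduced (m + 1) P)
    (hν : ν ≠ 0) (hsub : ι ⁻¹' P.K ⊆ {a | 0 ≤ inner ℝ ν a}) {e : Rn m} (he : e ∈ ι ⁻¹' P.K)
    (hedge : inner ℝ ν e = 0) : {a | 0 ≤ inner ℝ ν a} ⊆ ι ⁻¹' P.K := by
  have hcompl : (ι ⁻¹' P.K)ᶜ.Nonempty :=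
    ⟨-ν, fun hmem => (inner_neg_self_neg hν).not_ge (hsub hmem)⟩
  have hpos := h.hausdorffMeasure_preimage_K_ne_zero hred ⟨e, he⟩ hcompl
  obtain ⟨a, ha⟩ := h.exists_notMem_closure_compl hν hsub hpos
  obtain ⟨b, hb, hab, hball⟩ := exists_ball_subset_of_notMem_closure_compl ha hcompl
  obtain ⟨C, hC⟩ := h.exists_weightedDirichlet_le
  obtain ⟨c, hc⟩ := h.exists_forall_height_le hC hb
  have hw : ∀ r, 0 < r → weissEnergy P ι b c r = fullDensity m / 2 := fun r hr =>
    h.weissEnergy_eq_half hν hsub hab hball hc hr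
  exact setOf_inner_nonneg_subset_of_homothety_mem (P.closed.preimage ι.continuous) hν hsub
    (fun t ht x hx => h.homothety_mem_preimage_K hred hw ht hx) hab hball he hedge

end FlatMinimizer

end Halfspace

/-! ### The half-plane in space -/

/-- The isometric embedding `(x, y) ↦ (x, y, 0)` of the plane in space. -/
def planeInclusion : Rn 2 →ₗᵢ[ℝ] Rn 3 where
  toFun a := !₂[a 0, a 1, 0]
  map_add' a b := by ext i; fin_cases i <;> simp
  map_smul' t a := by ext i; fin_cases i <;> simp
  norm_map' a := by simp [EuclideanSpace.norm_eq, Fin.sum_univ_three, Fin.sum_univ_two]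

theorem planeInclusion_of_apply_two_eq_zero {w : Rn 3} (hw : w 2 = 0) :
    planeInclusion !₂[w 0, w 1] = w := by
  ext i
  fin_cases i <;> simp [planeInclusion, hw]

theorem inner_zero_one (a : Rn 2) : inner ℝ !₂[0, 1] a = a 1 := by
  simp [PiLp.inner_apply, Fin.sum_univ_two]

theorem modelHalfPlane_eq_image :
    modelHalfPlane = planeInclusion '' {a | 0 ≤ inner ℝ !₂[0, 1] a} := by
  simp only [inner_zero_one]
  refine Subset.antisymm
    (fun w hw => ⟨!₂[w 0, w 1], hw.2, planeInclusion_of_apply_two_eq_zero hw.1⟩) ?_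
  rintro _ ⟨a, ha, rfl⟩
  exact ⟨rfl, ha⟩

theorem modelEdge_eq_image : modelEdge = planeInclusion '' {a | inner ℝ !₂[0, 1] a = 0} := by
  simp only [inner_zero_one]
  refine Subset.antisymm
    (fun w hw => ⟨!₂[w 0, w 1], hw.2, planeInclusion_of_apply_two_eq_zero hw.1⟩) ?_
  rintro _ ⟨a, ha, rfl⟩
  exact ⟨rfl, ha⟩

/-- The isometric parametrization `(x, y) ↦ p + R (x, y, 0)` of the plane carrying a half-plane. -/
def planeEmbedding (R : Rn 3 ≃ₗᵢ[ℝ] Rn 3) (p : Rn 3) : Rn 2 →ᵃⁱ[ℝ] Rn 3 :=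
  (AffineIsometryEquiv.constVAdd ℝ (Rn 3) p).toAffineIsometry.comp
    (R.toLinearIsometry.comp planeInclusion).toAffineIsometry

theorem image_modelHalfPlane (R : Rn 3 ≃ₗᵢ[ℝ] Rn 3) (p : Rn 3) :
    (fun w => p + R w) '' modelHalfPlane =
      planeEmbedding R p '' {a | 0 ≤ inner ℝ !₂[0, 1] a} := by
  rw [modelHalfPlane_eq_image]
  exact image_image _ _ _

theorem image_modelEdge (R : Rn 3 ≃ₗᵢ[ℝ] Rn 3) (p : Rn 3) :
    (fun w => p + R w) '' modelEdge = planeEmbedding R p '' {a | inner ℝ !₂[0, 1] a = 0} := by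
  rw [modelEdge_eq_image]
  exact image_image _ _ _

theorem statement0_general {m : ℕ} (P : MSPair (m + 1)) (hmin : IsGlobalMin (m + 1) P)
    (hred : MSIsReduced (m + 1) P) (ι : Rn m →ᵃⁱ[ℝ] Rn (m + 1)) {ν : Rn m} (hν : ν ≠ 0)
    (hsub : P.K ⊆ ι '' {a | 0 ≤ inner ℝ ν a})
    (hedge : ∃ x ∈ P.K, x ∈ ι '' {a | inner ℝ ν a = 0}) :
    P.K = ι '' {a | 0 ≤ inner ℝ ν a} := by
  have h : FlatMinimizer P ι :=
    { isGlobalMin := hmin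
      subset_range := hsub.trans (image_subset_range _ _)
      isPreconnected_compl := isPreconnected_compl_of_subset_image hν hsub }
  obtain ⟨_, he, e, he_edge, rfl⟩ := hedge
  have hpreimage : ι ⁻¹' P.K ⊆ {a | 0 ≤ inner ℝ ν a} := fun a ha =>
    ι.injective.mem_set_image.1 (hsub ha)
  exact hsub.antisymm
    (image_subset_iff.2 (h.setOf_inner_nonneg_subset hred hν hpreimage he he_edge))

/-- Let `(u, K)` be a reduced global Mumford–Shah minimizer in `ℝ³`.
If `K` is contained in a closed half-plane `H` (the image of the model half-plane by a
rotation `R ∈ SO(3)` followed by a translation by `p`) and `K` contains a point of the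
edge of `H`, then `K = H`. -/
theorem statement0 (P : MSPair 3) (hmin : IsGlobalMin 3 P) (hred : MSIsReduced 3 P)
    (R : Rn 3 ≃ₗᵢ[ℝ] Rn 3)
    (hdet : LinearMap.det (R.toLinearEquiv : Rn 3 →ₗ[ℝ] Rn 3) = 1)
    (p : Rn 3)
    (hsub : P.K ⊆ (fun w => p + R w) '' modelHalfPlane)
    (hedge : ∃ x ∈ P.K, x ∈ (fun w => p + R w) '' modelEdge) :
    P.K = (fun w => p + R w) '' modelHalfPlane := by
  have hν : (!₂[0, 1] : Rn 2) ≠ 0 := fun h => one_ne_zero (congrArg (· 1) h)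
  simp only [image_modelHalfPlane, image_modelEdge] at hsub hedge ⊢
  exact statement0_general P hmin hred _ hν hsub hedge
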